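/- arXiv:2401.12670 — 3 statements merged into one kernel-verified Lean document; each statement's English description precedes it below -/
import Mathlib

section
/- For every positive integer d, every (d²+3d+5)-connected finite simple graph G contains a spanning tree T such that the graph obtained from G by deleting the edges of T is d-connected. -/
/-- A simple graph `G` is `k`-connected if it has at least `k+1` vertices and removing any
set of fewer than `k` vertices leaves a connected induced subgraph. -/
def KConnected {W : Type*} (G : SimpleGraph W) (k : ℕ) : Prop :=
  k + 1 ≤ Nat.card W ∧
    ∀ S : Set W, S.Finite → S.ncard < k → (G.induce (Sᶜ : Set W)).Connected

/-!
A pair `e` of vertices is assigned the vector `(sₑ • Rₑ, tₑ • Iₑ)`, where `Rₑ` is its row in the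
`d`-dimensional rigidity matrix of a framework, `Iₑ` its row in the incidence matrix, and the
positions and the coefficients `s`, `t` are generic. These vectors represent the union of the
rigidity matroid and the graphic matroid.

If the rows of a graph span all rows, then splitting the spanning set into a part that spans the
rigidity rows and a disjoint part that spans the graphic rows proves the theorem. The second part
is connected, so it contains a spanning tree, and the first part is `d`-connected, because one side
of a separation by fewer than `d` vertices could be rotated about the separating points.

To see that the rows of a `(d² + 3d + 5)`-connected graph span, replace the graph by its closure
`H` in the matroid and add the vertices in random order. A new vertex raises the rank by the number
of its neighbours already present, up to `d + 1`, and by `d + 2` if these are numerous and not a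
clique of `H`, since `H` is closed. If no neighbourhood were a clique, then the expected gain of
each vertex would exceed `d + 1`, contradicting the bound `(d + 1) |V|` on the rank. A vertex whose
neighbourhood is a clique can be deleted without loss of connectivity, and by induction `H` is
complete.
-/

namespace SpanningTreeRemoval

open Finset Module

section OrderAverage

open scoped Nat

/-- The Beta integral `∫₀¹ xᵃ (1 - x)ᵇ dx`. In a uniformly random ordering of `a + b + 1` elements
it is the probability that the elements preceding a given one are exactly a given set of `a`
elements. -/
noncomputable def betaWeight (a b : ℕ) : ℝ := a ! * b ! / (a + b + 1)!

lemma betaWeight_nonneg (a b : ℕ) : 0 ≤ betaWeight a b := by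
  unfold betaWeight
  positivity

lemma betaWeight_succ_left_add_succ_right (a b : ℕ) :
    betaWeight (a + 1) b + betaWeight a (b + 1) = betaWeight a b := by
  have hfact : ((a + b + 1)! : ℝ) ≠ 0 := by positivity
  simp only [betaWeight, show a + 1 + b + 1 = a + b + 1 + 1 by ring, ← add_assoc,
    Nat.factorial_succ (a + b + 1), Nat.factorial_succ a, Nat.factorial_succ b]
  push_cast
  field_simp
  ring

lemma mul_betaWeight_succ_right (a b : ℕ) :
    (a + b + 2) * betaWeight a (b + 1) = (b + 1) * betaWeight a b := by
  have hfact : ((a + b + 1)! : ℝ) ≠ 0 := by positivity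
  simp only [betaWeight, ← add_assoc, Nat.factorial_succ (a + b + 1), Nat.factorial_succ b]
  push_cast
  field_simp
  ring

lemma mul_betaWeight_zero_right (a : ℕ) : (a + 1) * betaWeight a 0 = 1 := by
  have hfact : (a ! : ℝ) ≠ 0 := by positivity
  simp only [betaWeight, add_zero, Nat.factorial_succ, Nat.factorial_zero]
  push_cast
  field_simp

lemma choose_mul_betaWeight (a b : ℕ) :
    ((a + b).choose a : ℝ) * betaWeight a b = 1 / (a + b + 1) := by
  have hchoose : ((a + b).choose a : ℝ) * a ! * b ! = (a + b)! := by
    rw [Nat.choose_symm_add]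
    exact_mod_cast Nat.add_choose_mul_factorial_mul_factorial a b
  have hfact : ((a + b)! : ℝ) ≠ 0 := by positivity
  rw [betaWeight, ← mul_div_assoc, ← mul_assoc, hchoose, Nat.factorial_succ]
  push_cast
  field_simp

variable {V : Type*} [DecidableEq V]

/-- The expected value of `g X`, where `X` is the set of elements preceding a new element `v ∉ Y` in
a uniformly random ordering of `Y ∪ {v}`. -/
noncomputable def orderAverage (Y : Finset V) (g : Finset V → ℝ) : ℝ :=
  ∑ X ∈ Y.powerset, betaWeight #X #(Y \ X) * g X

lemma orderAverage_add (Y : Finset V) (g h : Finset V → ℝ) :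
    orderAverage Y (fun X => g X + h X) = orderAverage Y g + orderAverage Y h := by
  simp only [orderAverage, mul_add, sum_add_distrib]

lemma orderAverage_eq_sum_powersetCard (Y : Finset V) (g : Finset V → ℝ) :
    orderAverage Y g =
      ∑ i ∈ range (#Y + 1), betaWeight i (#Y - i) * ∑ X ∈ Y.powersetCard i, g X := by
  rw [orderAverage, sum_powerset]
  refine sum_congr rfl fun i _ => ?_
  rw [mul_sum]
  refine sum_congr rfl fun X hX => ?_
  obtain ⟨hXY, rfl⟩ := mem_powersetCard.mp hX
  rw [card_sdiff_of_subset hXY]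

lemma orderAverage_comp_card (Y : Finset V) (f : ℕ → ℝ) :
    orderAverage Y (fun X => f #X) = (∑ i ∈ range (#Y + 1), f i) / (#Y + 1) := by
  rw [orderAverage_eq_sum_powersetCard, sum_div]
  refine sum_congr rfl fun i hi => ?_
  obtain ⟨j, hj⟩ := Nat.exists_eq_add_of_le (mem_range_succ_iff.mp hi)
  have hlevel : ∑ X ∈ Y.powersetCard i, f #X = (i + j).choose i * f i := by
    rw [sum_congr rfl fun X hX => by rw [(mem_powersetCard.mp hX).2], sum_const,
      card_powersetCard, nsmul_eq_mul, hj]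
  rw [hlevel, hj, Nat.add_sub_cancel_left, ← mul_assoc, mul_comm (betaWeight _ _),
    choose_mul_betaWeight]
  push_cast
  ring

/-- A random ordering of `insert u Y` restricts to a random ordering of `Y`. -/
lemma orderAverage_insert_erase {Y : Finset V} {u : V} (hu : u ∉ Y) (g : Finset V → ℝ) :
    orderAverage (insert u Y) (fun X => g (X.erase u)) = orderAverage Y g := by
  simp only [orderAverage]
  rw [sum_powerset_insert hu, ← sum_add_distrib]
  refine sum_congr rfl fun X hX => ?_
  have huX : u ∉ X := fun huX => hu (mem_powerset.mp hX huX)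
  rw [insert_sdiff_of_notMem _ huX, insert_sdiff_insert, sdiff_insert_of_notMem hu,
    card_insert_of_notMem huX, card_insert_of_notMem fun hu' => hu (mem_sdiff.mp hu').1,
    erase_insert huX, erase_eq_of_notMem huX, ← betaWeight_succ_left_add_succ_right #X #(Y \ X)]
  ring

lemma orderAverage_comp_inter {N Y : Finset V} (hNY : N ⊆ Y) (g : Finset V → ℝ) :
    orderAverage Y (fun X => g (X ∩ N)) = orderAverage N g := by
  obtain ⟨Z, hNZ, rfl⟩ : ∃ Z, Disjoint N Z ∧ Y = N ∪ Z :=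
    ⟨Y \ N, disjoint_sdiff, (union_sdiff_of_subset hNY).symm⟩
  clear hNY
  induction Z using Finset.induction with
  | empty =>
    rw [union_empty]
    refine sum_congr rfl fun X hX => ?_
    simp only [inter_eq_left.mpr (mem_powerset.mp hX)]
  | insert u Z huZ ih =>
    rw [disjoint_insert_right] at hNZ
    rw [← ih hNZ.2, union_insert,
      ← orderAverage_insert_erase (u := u) (Y := N ∪ Z) (by simp [hNZ.1, huZ])]
    refine sum_congr rfl fun X _ => ?_
    simp only [erase_inter, erase_eq_of_notMem fun hu => hNZ.1 (mem_inter.mp hu).2]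

/-- Condition on the last element of a random ordering of `Y ∪ {v}`: it is either some `y ∈ Y` or
`v` itself, each with probability `1 / (#Y + 1)`. -/
lemma mul_orderAverage_eq_sum_erase_add (Y : Finset V) (g : Finset V → ℝ) :
    (#Y + 1) * orderAverage Y g = ∑ y ∈ Y, orderAverage (Y.erase y) g + g Y := by
  have hswap : ∑ y ∈ Y, orderAverage (Y.erase y) g =
      ∑ X ∈ Y.powerset, ∑ _ ∈ Y \ X, betaWeight #X (#(Y \ X) - 1) * g X := by
    simp only [orderAverage]
    rw [sum_comm' (t' := Y.powerset) (s' := fun X => Y \ X)]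
    · refine sum_congr rfl fun X _ => sum_congr rfl fun y hy => ?_
      rw [erase_sdiff_comm, card_erase_of_mem hy]
    · intro y X
      simp only [mem_powerset, mem_sdiff, subset_erase]
      tauto
  have htop : g Y = ∑ X ∈ Y.powerset, if X = Y then g X else 0 := by simp
  rw [hswap, htop, ← sum_add_distrib, orderAverage, mul_sum]
  refine sum_congr rfl fun X hX => ?_
  have hXY := mem_powerset.mp hX
  have hcard : (#Y : ℝ) = #X + #(Y \ X) := by
    rw [add_comm]
    exact_mod_cast (card_sdiff_add_card_eq_card hXY).symm
  rw [sum_const, nsmul_eq_mul, ← mul_assoc, hcard]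
  rcases eq_or_ne X Y with rfl | hne
  · simp [mul_betaWeight_zero_right]
  · obtain ⟨b, hb⟩ := Nat.exists_eq_succ_of_ne_zero
      (card_ne_zero.mpr (sdiff_nonempty.mpr fun hYX => hne (hXY.antisymm hYX)))
    rw [if_neg hne, hb, Nat.succ_sub_one, ← mul_assoc, add_zero]
    have := mul_betaWeight_succ_right #X b
    push_cast
    linear_combination g X * this

/-- Building up `U` in a random order, the expected total of the gains is a lower bound for
`r U`. -/
lemma sum_orderAverage_le {r : Finset V → ℝ} {g : V → Finset V → ℝ} (hr : 0 ≤ r ∅) (U : Finset V)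
    (hgain : ∀ X ⊆ U, ∀ v ∈ U, v ∉ X → r X + g v X ≤ r (insert v X)) :
    ∑ v ∈ U, orderAverage (U.erase v) (g v) ≤ r U := by
  induction hn : #U generalizing U with
  | zero =>
    obtain rfl := card_eq_zero.mp hn
    simpa using hr
  | succ n ih =>
    have hlast : ∀ u ∈ U, (#U : ℝ) * orderAverage (U.erase u) (g u) =
        ∑ v ∈ U.erase u, orderAverage ((U.erase u).erase v) (g u) + g u (U.erase u) := by
      intro u hu
      rw [← mul_orderAverage_eq_sum_erase_add, ← card_erase_add_one hu]
      push_cast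
      rfl
    have hswap : ∑ u ∈ U, ∑ v ∈ U.erase u, orderAverage ((U.erase u).erase v) (g u) =
        ∑ v ∈ U, ∑ u ∈ U.erase v, orderAverage ((U.erase v).erase u) (g u) := by
      rw [sum_comm' (t' := U) (s' := fun v => U.erase v)]
      · simp only [erase_right_comm]
      · grind
    have hstep : ∀ v ∈ U, ∑ u ∈ U.erase v, orderAverage ((U.erase v).erase u) (g u) +
        g v (U.erase v) ≤ r U := by
      intro v hv
      have hih := ih (U.erase v) (fun X hX w hw => hgain X (hX.trans (erase_subset _ _)) w
        (mem_of_mem_erase hw)) (by rw [card_erase_of_mem hv, hn, Nat.add_sub_cancel])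
      have hv_gain := hgain (U.erase v) (erase_subset _ _) v hv (notMem_erase _ _)
      rw [insert_erase hv] at hv_gain
      linarith
    have hscaled : (#U : ℝ) * ∑ v ∈ U, orderAverage (U.erase v) (g v) ≤ #U * r U := by
      rw [mul_sum, sum_congr rfl hlast, sum_add_distrib, hswap, ← sum_add_distrib]
      exact (sum_le_sum hstep).trans_eq (by rw [sum_const, nsmul_eq_mul])
    exact le_of_mul_le_mul_left hscaled (by rw [hn]; positivity)

lemma choose_le_card_filter_not_of_erase {C : Finset V → Prop} [DecidablePred C] {q : ℕ}
    (hglue : ∀ X Y x, Y ⊆ X → #Y = q → C X → C (insert x Y) → C (insert x X))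
    {N : Finset V} {x : V} (hxN : x ∈ N) (hx : C (N.erase x)) (hN : ¬ C N) :
    (#N - 1).choose q ≤ #{X ∈ N.powersetCard (q + 1) | ¬ C X} := by
  have hext : ((N.erase x).powersetCard q).image (insert x) ⊆
      {X ∈ N.powersetCard (q + 1) | ¬ C X} := by
    intro X hX
    obtain ⟨Y, hY, rfl⟩ := mem_image.mp hX
    obtain ⟨hYN, hYq⟩ := mem_powersetCard.mp hY
    refine mem_filter.mpr ⟨mem_powersetCard.mpr ⟨?_, ?_⟩, fun hCY => hN ?_⟩
    · exact insert_subset hxN (hYN.trans (erase_subset _ _))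
    · rw [card_insert_of_notMem fun hxY => notMem_erase x N (hYN hxY), hYq]
    · rw [← insert_erase hxN]
      exact hglue _ Y x hYN hYq hx hCY
  have hinj : Set.InjOn (insert x) ((N.erase x).powersetCard q : Set (Finset V)) := by
    intro Y hY Z hZ hYZ
    rw [mem_coe, mem_powersetCard] at hY hZ
    rw [← erase_insert fun hxY => notMem_erase x N (hY.1 hxY), hYZ,
      erase_insert fun hxZ => notMem_erase x N (hZ.1 hxZ)]
  calc (#N - 1).choose q = #(((N.erase x).powersetCard q).image (insert x)) := by
        rw [card_image_of_injOn hinj, card_powersetCard, card_erase_of_mem hxN]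
    _ ≤ _ := card_le_card hext

lemma sum_card_filter_powersetCard_erase (P : Finset V → Prop) [DecidablePred P] (N : Finset V)
    (i : ℕ) :
    ∑ x ∈ N, #{X ∈ (N.erase x).powersetCard i | P X} =
      (#N - i) * #{X ∈ N.powersetCard i | P X} := by
  simp only [card_eq_sum_ones {X ∈ (N.erase _).powersetCard i | P X}]
  rw [sum_comm' (t' := {X ∈ N.powersetCard i | P X}) (s' := fun X => N \ X)]
  · rw [mul_comm, ← smul_eq_mul, ← sum_const]
    refine sum_congr rfl fun X hX => ?_
    obtain ⟨hXN, rfl⟩ := mem_powersetCard.mp (mem_filter.mp hX).1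
    rw [← card_eq_sum_ones, card_sdiff_of_subset hXN]
  · intro x X
    simp only [mem_filter, mem_powersetCard, mem_sdiff, subset_erase]
    tauto

lemma choose_le_card_filter_not {C : Finset V → Prop} [DecidablePred C] {q : ℕ}
    (hglue : ∀ X Y x, Y ⊆ X → #Y = q → C X → C (insert x Y) → C (insert x X))
    {m : ℕ} {N : Finset V} (hcard : #N = m + q + 1) (hN : ¬ C N) :
    (m + q).choose q ≤ #{X ∈ N.powersetCard (q + 1) | ¬ C X} := by
  induction m generalizing N with
  | zero =>
    have hmem : N ∈ {X ∈ N.powersetCard (q + 1) | ¬ C X} := by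
      simp [hN, hcard]
    simpa using card_pos.mpr ⟨N, hmem⟩
  | succ m ih =>
    by_cases hclique : ∃ x ∈ N, C (N.erase x)
    · obtain ⟨x, hxN, hx⟩ := hclique
      simpa [hcard] using choose_le_card_filter_not_of_erase hglue hxN hx hN
    · push Not at hclique
      have herase : ∀ x ∈ N,
          (m + q).choose q ≤ #{X ∈ (N.erase x).powersetCard (q + 1) | ¬ C X} := fun x hx =>
        ih (by rw [card_erase_of_mem hx, hcard]; omega) (hclique x hx)
      refine Nat.le_of_mul_le_mul_left (c := m + 1) ?_ m.succ_pos
      calc (m + 1) * (m + 1 + q).choose q = (m + q + 1) * (m + q).choose q := by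
            rw [mul_comm (m + q + 1), Nat.choose_mul_succ_eq, mul_comm, add_right_comm,
              show m + q + 1 - q = m + 1 by omega]
        _ ≤ ∑ _ ∈ N, (m + q).choose q := by
            rw [sum_const, hcard, smul_eq_mul]
            gcongr
            omega
        _ ≤ _ := sum_le_sum herase
        _ = (m + 1) * #{X ∈ N.powersetCard (q + 1) | ¬ C X} := by
            rw [sum_card_filter_powersetCard_erase, hcard,
              show m + 1 + q + 1 - (q + 1) = m + 1 by omega]

lemma orderAverage_le_of_levels {N : Finset V} {g h : Finset V → ℝ}
    (hgh : ∀ i ≤ #N, ∑ X ∈ N.powersetCard i, g X ≤ ∑ X ∈ N.powersetCard i, h X) :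
    orderAverage N g ≤ orderAverage N h := by
  rw [orderAverage_eq_sum_powersetCard, orderAverage_eq_sum_powersetCard]
  exact sum_le_sum fun i hi => mul_le_mul_of_nonneg_left (hgh i (mem_range_succ_iff.mp hi))
    (betaWeight_nonneg _ _)

lemma orderAverage_ite_card_div_le {C : Finset V → Prop} [DecidablePred C] {t : ℕ}
    (hglue : ∀ X Y x, Y ⊆ X → t ≤ #Y → C X → C (insert x Y) → C (insert x X))
    {N : Finset V} (hN : ¬ C N) :
    orderAverage N (fun X => if t < #X then #X / #N else 0) ≤
      orderAverage N (fun X => if t < #X ∧ ¬ C X then 1 else 0) := by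
  refine orderAverage_le_of_levels fun i hi => ?_
  rcases le_or_gt i t with hit | hti
  · refine sum_le_sum fun X hX => ?_
    simp [(mem_powersetCard.mp hX).2, hit.not_gt]
  obtain ⟨q, rfl⟩ := Nat.exists_eq_add_one_of_ne_zero hti.ne_bot
  obtain ⟨m, hm⟩ := Nat.exists_eq_add_of_le' hi
  have hcount := choose_le_card_filter_not
    (fun X Y x hYX hY => hglue X Y x hYX (by omega)) (q := q) (m := m) (by omega) hN
  have hchoose : ((q + 1 : ℕ) : ℝ) * (#N).choose (q + 1) = #N * (m + q).choose q := by
    rw [hm, mul_comm ((q + 1 : ℕ) : ℝ)]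
    exact_mod_cast (Nat.add_one_mul_choose_eq (m + q) q).symm
  have hpos : (#N : ℝ) ≠ 0 := by
    rw [hm]
    positivity
  calc ∑ X ∈ N.powersetCard (q + 1), (if t < #X then (#X / #N : ℝ) else 0)
      = ∑ _ ∈ N.powersetCard (q + 1), ((q + 1 : ℕ) / #N : ℝ) :=
        sum_congr rfl fun X hX => by rw [(mem_powersetCard.mp hX).2, if_pos hti]
    _ = (m + q).choose q := by
        rw [sum_const, card_powersetCard, nsmul_eq_mul, mul_div_assoc', div_eq_iff hpos,
          mul_comm, hchoose, mul_comm]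
    _ ≤ #{X ∈ N.powersetCard (q + 1) | ¬ C X} := by exact_mod_cast hcount
    _ = ∑ X ∈ N.powersetCard (q + 1), (if ¬ C X then (1 : ℝ) else 0) := by rw [sum_boole]
    _ = _ := sum_congr rfl fun X hX => by simp [(mem_powersetCard.mp hX).2, hti]

lemma sum_range_min {k n : ℕ} (hkn : k ≤ n) :
    ∑ i ∈ range n, (min k i : ℝ) = k * n - k * (k + 1) / 2 := by
  induction n, hkn using Nat.le_induction with
  | base =>
    have hmin : ∀ i ∈ range k, (min k i : ℝ) = (i : ℝ) := fun i hi =>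
      min_eq_right (by exact_mod_cast (mem_range.mp hi).le)
    rw [sum_congr rfl hmin, ← Nat.cast_sum, sum_range_id, ← Nat.choose_two_right,
      Nat.cast_choose_two]
    ring
  | succ n hkn ih =>
    rw [sum_range_succ, ih, min_eq_left (by exact_mod_cast hkn)]
    push_cast
    ring

lemma sum_range_ite_lt {t n : ℕ} (htn : t ≤ n) :
    ∑ i ∈ range (n + 1), (if t < i then (i : ℝ) else 0) = (n * (n + 1) - t * (t + 1)) / 2 := by
  induction n, htn using Nat.le_induction with
  | base =>
    rw [sub_self, zero_div]
    exact sum_eq_zero fun i hi => if_neg (mem_range_succ_iff.mp hi).not_gt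
  | succ n htn ih =>
    rw [sum_range_succ, ih, if_pos (Nat.lt_succ_of_le htn)]
    push_cast
    ring

lemma lt_orderAverage_min_card_add_ite {C : Finset V → Prop} [DecidablePred C] {k : ℕ}
    (hglue : ∀ X Y x, Y ⊆ X → 2 * k ≤ #Y → C X → C (insert x Y) → C (insert x X))
    {N : Finset V} (hcard : k * (k + 1) + 3 ≤ #N) (hN : ¬ C N) :
    (k : ℝ) < orderAverage N
      (fun X => (min k #X : ℝ) + if 2 * k < #X ∧ ¬ C X then 1 else 0) := by
  have hkN : 2 * k ≤ #N := by nlinarith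
  have hpos : (0 : ℝ) < #N := by exact_mod_cast (by omega : 0 < #N)
  have hmin : orderAverage N (fun X => (min k #X : ℝ)) =
      (k * (#N + 1) - k * (k + 1) / 2) / (#N + 1) := by
    rw [orderAverage_comp_card N fun i => (min k i : ℝ), sum_range_min (by omega)]
    push_cast
    rfl
  have hcount : orderAverage N (fun X => if 2 * k < #X then (#X / #N : ℝ) else 0) =
      (#N * (#N + 1) - 2 * k * (2 * k + 1)) / 2 / #N / (#N + 1) := by
    rw [orderAverage_comp_card N fun i => if 2 * k < i then (i / #N : ℝ) else 0]
    have hsum := sum_range_ite_lt hkN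
    push_cast at hsum
    rw [← hsum, sum_div _ _ (#N : ℝ)]
    simp only [ite_div, zero_div]
  rw [orderAverage_add, hmin]
  refine lt_of_lt_of_le ?_ (add_le_add_right (orderAverage_ite_card_div_le hglue hN) _)
  rw [hcount, ← add_div, lt_div_iff₀ (by positivity)]
  have hcard' : (k : ℝ) * (k + 1) + 3 ≤ #N := by exact_mod_cast hcard
  have hgain : (k : ℝ) * (k + 1) / 2 < (#N * (#N + 1) - 2 * k * (2 * k + 1)) / 2 / #N := by
    rw [lt_div_iff₀ hpos]
    nlinarith
  linarith

end OrderAverage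

section Generic

variable {K ι E M W : Type*} [Field K] [AddCommGroup M] [Module K M] [AddCommGroup W] [Module K W]

/-- `P` holds for generic parameters: it holds off the zero locus of some nonzero polynomial. -/
def Generically (P : (ι → K) → Prop) : Prop :=
  ∃ Q : MvPolynomial ι K, Q ≠ 0 ∧ ∀ θ, MvPolynomial.eval θ Q ≠ 0 → P θ

lemma Generically.of_forall {P : (ι → K) → Prop} (hP : ∀ θ, P θ) : Generically P :=
  ⟨1, one_ne_zero, fun θ _ => hP θ⟩

lemma Generically.and {P P' : (ι → K) → Prop} (hP : Generically P) (hP' : Generically P') :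
    Generically fun θ => P θ ∧ P' θ := by
  obtain ⟨Q, hQ, hQP⟩ := hP
  obtain ⟨Q', hQ', hQP'⟩ := hP'
  refine ⟨Q * Q', mul_ne_zero hQ hQ', fun θ hθ => ?_⟩
  rw [map_mul] at hθ
  exact ⟨hQP θ (left_ne_zero_of_mul hθ), hQP' θ (right_ne_zero_of_mul hθ)⟩

lemma Generically.forall_of_finite {α : Type*} [Finite α] {P : α → (ι → K) → Prop}
    (hP : ∀ a, Generically (P a)) : Generically fun θ => ∀ a, P a θ := by
  have := Fintype.ofFinite α
  choose Q hQ hQP using hP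
  refine ⟨∏ a, Q a, prod_ne_zero_iff.mpr fun a _ => hQ a, fun θ hθ a => hQP a θ ?_⟩
  rw [map_prod] at hθ
  exact prod_ne_zero_iff.mp hθ a (mem_univ a)

lemma Generically.exists [Infinite K] {P : (ι → K) → Prop} (hP : Generically P) : ∃ θ, P θ := by
  obtain ⟨Q, hQ, hQP⟩ := hP
  by_contra! hnot
  exact hQ (MvPolynomial.funext fun θ => by
    rw [map_zero]
    exact not_not.mp fun hθ => hnot θ (hQP θ hθ))

/-- `f` is given by polynomials in the parameters, in the coordinate-free sense that each linear
functional of `f` is. -/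
def IsPolynomialMap (f : (ι → K) → M) : Prop :=
  ∀ φ : Dual K M, ∃ P : MvPolynomial ι K, ∀ θ, φ (f θ) = MvPolynomial.eval θ P

namespace IsPolynomialMap

variable {f g : (ι → K) → M}

lemma const (m : M) : IsPolynomialMap fun _ : ι → K => m :=
  fun φ => ⟨.C (φ m), by simp⟩

lemma add (hf : IsPolynomialMap f) (hg : IsPolynomialMap g) :
    IsPolynomialMap fun θ => f θ + g θ := fun φ => by
  obtain ⟨P, hP⟩ := hf φ
  obtain ⟨Q, hQ⟩ := hg φ
  exact ⟨P + Q, by simp [hP, hQ]⟩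

lemma sub (hf : IsPolynomialMap f) (hg : IsPolynomialMap g) :
    IsPolynomialMap fun θ => f θ - g θ := fun φ => by
  obtain ⟨P, hP⟩ := hf φ
  obtain ⟨Q, hQ⟩ := hg φ
  exact ⟨P - Q, by simp [hP, hQ]⟩

lemma coord_smul (i : ι) (hf : IsPolynomialMap f) : IsPolynomialMap fun θ => θ i • f θ :=
  fun φ => by
  obtain ⟨P, hP⟩ := hf φ
  exact ⟨.X i * P, by simp [hP]⟩

lemma coord_pi {κ : Type*} [Finite κ] (c : κ → ι) :
    IsPolynomialMap fun (θ : ι → K) (j : κ) => θ (c j) := fun φ => by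
  classical
  have := Fintype.ofFinite κ
  refine ⟨∑ j, .X (c j) * .C (φ fun k => if j = k then 1 else 0), fun θ => ?_⟩
  simp [LinearMap.pi_apply_eq_sum_univ φ fun j => θ (c j)]

lemma map (L : M →ₗ[K] W) (hf : IsPolynomialMap f) : IsPolynomialMap fun θ => L (f θ) :=
  fun φ => hf (φ ∘ₗ L)

lemma prodMk {h : (ι → K) → W} (hf : IsPolynomialMap f) (hh : IsPolynomialMap h) :
    IsPolynomialMap fun θ => (f θ, h θ) := by
  simpa using (hf.map (.inl K M W)).add (hh.map (.inr K M W))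

end IsPolynomialMap

lemma exists_linearMap_apply_eq_single {κ : Type*} [Finite κ] [DecidableEq κ] {v : κ → M}
    (hv : LinearIndependent K v) : ∃ g : M →ₗ[K] (κ → K), ∀ i, g (v i) = Pi.single i 1 := by
  have := Fintype.ofFinite κ
  obtain ⟨g, hg⟩ := LinearMap.exists_leftInverse_of_injective (Fintype.linearCombination K v)
    (LinearMap.ker_eq_bot.mpr hv.fintypeLinearCombination_injective)
  refine ⟨g, fun i => ?_⟩
  simpa using LinearMap.congr_fun hg (Pi.single i 1)

lemma generically_linearIndependent {κ : Type*} [Finite κ] {f : κ → (ι → K) → M}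
    (hf : ∀ i, IsPolynomialMap (f i)) {θ₀ : ι → K} (hθ₀ : LinearIndependent K fun i => f i θ₀) :
    Generically fun θ => LinearIndependent K fun i => f i θ := by
  classical
  have := Fintype.ofFinite κ
  obtain ⟨g, hg⟩ := exists_linearMap_apply_eq_single hθ₀
  choose P hP using fun i j => hf i (LinearMap.proj j ∘ₗ g)
  have heval : ∀ θ, MvPolynomial.eval θ (Matrix.of P).det =
      (Matrix.of fun i j => g (f i θ) j).det := fun θ => by
    rw [RingHom.map_det]
    congr 1
    ext i j
    exact (hP i j θ).symm
  refine ⟨(Matrix.of P).det, fun hzero => ?_, fun θ hθ => ?_⟩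
  · have hone : (Matrix.of fun i j => g (f i θ₀) j) = 1 := by
      ext i j
      simp [hg, Matrix.one_eq_pi_single]
    simpa [hzero, hone] using heval θ₀
  · rw [heval] at hθ
    exact .of_comp g (Matrix.linearIndependent_rows_of_det_ne_zero hθ)

lemma generically_linearIndepOn [Finite E] {f : E → (ι → K) → M}
    (hf : ∀ e, IsPolynomialMap (f e)) :
    Generically fun θ => ∀ (F : Set E) (θ' : ι → K),
      LinearIndepOn K (f · θ') F → LinearIndepOn K (f · θ) F := by
  refine Generically.forall_of_finite fun F => ?_
  by_cases hF : ∃ θ', LinearIndepOn K (f · θ') F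
  · obtain ⟨θ', hθ'⟩ := hF
    obtain ⟨Q, hQ, hQF⟩ := generically_linearIndependent (fun e : F => hf e) hθ'
    exact ⟨Q, hQ, fun θ hθ _ _ => hQF θ hθ⟩
  · exact .of_forall fun θ θ' hθ' => (hF ⟨θ', hθ'⟩).elim

lemma finrank_span_image_le_of_linearIndepOn [Finite E] [FiniteDimensional K W] {f : E → M}
    {g : E → W} {F : Set E} (hfg : ∀ I ⊆ F, LinearIndepOn K f I → LinearIndepOn K g I) :
    finrank K (Submodule.span K (f '' F)) ≤ finrank K (Submodule.span K (g '' F)) := by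
  obtain ⟨I, hIF, -, hspan, hI⟩ :=
    exists_linearIndepOn_extension (linearIndepOn_empty K f) F.empty_subset
  have := Fintype.ofFinite I
  have hfI : Submodule.span K (f '' F) = Submodule.span K (f '' I) :=
    (Submodule.span_le.mpr hspan).antisymm (Submodule.span_mono (Set.image_mono hIF))
  have hcard : finrank K (Submodule.span K (f '' I)) = finrank K (Submodule.span K (g '' I)) := by
    rw [Set.image_eq_range, Set.image_eq_range, finrank_span_eq_card hI,
      finrank_span_eq_card (hfg I hIF hI)]
  rw [hfI, hcard]
  exact Submodule.finrank_mono (Submodule.span_mono (Set.image_mono hIF))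

end Generic

section LinearAlgebra

open Submodule

variable {K E M N : Type*} [Field K] [AddCommGroup M] [Module K M] [AddCommGroup N] [Module K N]

lemma span_image_smul_le (c : E → K) (u : E → M) (F : Set E) :
    span K ((fun e => c e • u e) '' F) ≤ span K (u '' F) :=
  span_le.mpr <| Set.image_subset_iff.mpr fun e he =>
    smul_mem _ (c e) (subset_span (Set.mem_image_of_mem u he))

variable [FiniteDimensional K M]

lemma finrank_add_finrank_map_le {S T : Submodule K M} (hST : S ≤ T) {g : M →ₗ[K] N}
    (hS : S ≤ LinearMap.ker g) : finrank K S + finrank K (T.map g) ≤ finrank K T := by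
  have hker : finrank K S ≤ finrank K (LinearMap.ker (g.domRestrict T)) := by
    rw [← finrank_map_subtype_eq T]
    refine finrank_mono fun x hx => ⟨⟨x, hST hx⟩, ?_, rfl⟩
    simpa using hS hx
  rw [← LinearMap.range_domRestrict, ← (g.domRestrict T).finrank_range_add_finrank_ker, add_comm]
  gcongr

lemma finrank_add_one_add_finrank_map_le {S T : Submodule K M} (hST : S ≤ T) {g : M →ₗ[K] N}
    (hS : S ≤ LinearMap.ker g) {u : M} (huT : u ∈ T) (hug : g u = 0) (huS : u ∉ S) :
    finrank K S + 1 + finrank K (T.map g) ≤ finrank K T := by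
  rw [← finrank_sup_span_singleton huS]
  exact finrank_add_finrank_map_le (sup_le hST ((span_singleton_le_iff_mem u T).mpr huT))
    (sup_le hS ((span_singleton_le_iff_mem u _).mpr hug))

lemma finrank_sup_span_singleton_le (Z : Submodule K M) (v : M) :
    finrank K ↥(Z ⊔ span K {v}) ≤ finrank K Z + 1 :=
  (finrank_add_le_finrank_add_finrank Z _).trans
    (Nat.add_le_add_left ((finrank_span_le_card _).trans (by simp)) _)

lemma finrank_sup_span_add_le_or (Z : Submodule K M) (v w : M) :
    finrank K ↥(Z ⊔ span K {v + w}) ≤ finrank K ↥(Z ⊔ span K {v}) ∨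
      finrank K ↥(Z ⊔ span K {v + w}) ≤ finrank K ↥(Z ⊔ span K {w}) := by
  by_cases hv : v ∈ Z
  · by_cases hw : w ∈ Z
    · rw [sup_eq_left.mpr ((span_singleton_le_iff_mem _ _).mpr (add_mem hv hw))]
      exact .inl (finrank_mono le_sup_left)
    · exact .inr ((finrank_sup_span_singleton_le Z _).trans_eq (finrank_sup_span_singleton hw).symm)
  · exact .inl ((finrank_sup_span_singleton_le Z _).trans_eq (finrank_sup_span_singleton hv).symm)

/-- Splitting one vector `a e + b e` at a time into `a e` or `b e` need not decrease the rank. -/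
lemma exists_disjoint_finrank_sup_span_add_le (a b : E → M) {J : Set E} (hJ : J.Finite)
    (X : Submodule K M) :
    ∃ F₁ ⊆ J, ∃ F₂ ⊆ J, Disjoint F₁ F₂ ∧
      finrank K ↥(X ⊔ span K ((fun e => a e + b e) '' J)) ≤
        finrank K ↥(X ⊔ (span K (a '' F₁) ⊔ span K (b '' F₂))) := by
  induction J, hJ using Set.Finite.induction_on generalizing X with
  | empty => exact ⟨∅, subset_rfl, ∅, subset_rfl, Set.disjoint_empty _,
      finrank_mono (by simp)⟩
  | @insert e J heJ _ ih =>
    obtain ⟨F₁, hF₁, F₂, hF₂, hdisj, hle⟩ := ih (X ⊔ span K {a e + b e})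
    have he₁ : e ∉ F₁ := fun he => heJ (hF₁ he)
    have he₂ : e ∉ F₂ := fun he => heJ (hF₂ he)
    have hJe := Set.subset_insert e J
    rw [Set.image_insert_eq, span_insert, ← sup_assoc]
    rw [sup_right_comm X (span K {a e + b e}) (_ ⊔ _)] at hle
    rcases finrank_sup_span_add_le_or (X ⊔ (span K (a '' F₁) ⊔ span K (b '' F₂))) (a e) (b e)
      with ha | hb
    · refine ⟨insert e F₁, Set.insert_subset_insert hF₁, F₂, hF₂.trans hJe,
        Set.disjoint_insert_left.mpr ⟨he₂, hdisj⟩,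
        (hle.trans ha).trans (finrank_mono (le_of_eq ?_))⟩
      rw [Set.image_insert_eq, span_insert]
      ac_rfl
    · refine ⟨F₁, hF₁.trans hJe, insert e F₂, Set.insert_subset_insert hF₂,
        Set.disjoint_insert_right.mpr ⟨he₁, hdisj⟩,
        (hle.trans hb).trans (finrank_mono (le_of_eq ?_))⟩
      rw [Set.image_insert_eq, span_insert]
      ac_rfl

lemma exists_disjoint_span_eq [FiniteDimensional K N] {u : E → M} {w : E → N} {J : Set E}
    (hJ : J.Finite) {R : Submodule K M} {S : Submodule K N}
    (hspan : span K ((fun e => (u e, w e)) '' J) = R.prod S) :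
    ∃ F₁ ⊆ J, ∃ F₂ ⊆ J, Disjoint F₁ F₂ ∧ span K (u '' F₁) = R ∧ span K (w '' F₂) = S := by
  obtain ⟨F₁, hF₁, F₂, hF₂, hdisj, hle⟩ := exists_disjoint_finrank_sup_span_add_le (K := K)
    (fun e => LinearMap.inl K M N (u e)) (fun e => LinearMap.inr K M N (w e)) hJ ⊥
  have hmem : ∀ e ∈ J, u e ∈ R ∧ w e ∈ S := fun e he =>
    hspan.le (subset_span ⟨e, he, rfl⟩)
  have hprod : (span K (u '' F₁)).prod (span K (w '' F₂)) = R.prod S := by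
    refine eq_of_le_of_finrank_le (prod_mono ?_ ?_) ?_
    · exact span_le.mpr (Set.image_subset_iff.mpr fun e he => (hmem e (hF₁ he)).1)
    · exact span_le.mpr (Set.image_subset_iff.mpr fun e he => (hmem e (hF₂ he)).2)
    · rw [← hspan, ← LinearMap.span_inl_union_inr, span_union, Set.image_image, Set.image_image]
      have hadd : (fun e => LinearMap.inl K M N (u e) + LinearMap.inr K M N (w e)) =
          fun e => (u e, w e) := by simp
      rwa [hadd, bot_sup_eq, bot_sup_eq] at hle
  exact ⟨F₁, hF₁, F₂, hF₂, hdisj, by simpa using congrArg (map (.fst K M N)) hprod,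
    by simpa using congrArg (map (.snd K M N)) hprod⟩

end LinearAlgebra

section Rows

variable {V M : Type*} [DecidableEq V] [AddCommGroup M] [Module ℝ M] {d : ℕ}

/-- The vector field on `V` with value `m` at `x`, `-m` at `y` and `0` elsewhere, as a linear
function of `m`; all rows of the matrices below have this form. -/
def dipole (x y : V) : M →ₗ[ℝ] V → M :=
  LinearMap.single ℝ (fun _ => M) x - LinearMap.single ℝ (fun _ => M) y

lemma dipole_eq_sub (x y : V) (m : M) : dipole x y m = Pi.single x m - Pi.single y m := rfl

@[simp]
lemma dipole_self (x : V) : (dipole x x : M →ₗ[ℝ] V → M) = 0 := sub_self _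

lemma dipole_swap (x y : V) (m : M) : dipole y x m = -dipole x y m := by
  simp [dipole_eq_sub]

lemma dipole_sub_dipole (v x y : V) (m : M) : dipole v y m - dipole v x m = dipole x y m := by
  simp [dipole_eq_sub]

lemma dipole_apply_left {x y : V} (hxy : x ≠ y) (m : M) : dipole x y m x = m := by
  simp [dipole_eq_sub, hxy]

lemma dipole_apply_of_ne {v x y : V} (hx : v ≠ x) (hy : v ≠ y) (m : M) : dipole x y m v = 0 := by
  simp [dipole_eq_sub, hx, hy]

/-- The row of the rigidity matrix of the bar-and-joint framework `p` belonging to a pair. -/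
def rigidityRow (p : V → Fin d → ℝ) : Sym2 V → V → Fin d → ℝ :=
  Sym2.lift ⟨fun x y => dipole x y (p x - p y), fun x y => by
    beta_reduce
    rw [dipole_swap y x, ← map_neg, neg_sub]⟩

lemma rigidityRow_mk (p : V → Fin d → ℝ) (x y : V) :
    rigidityRow p s(x, y) = dipole x y (p x - p y) := rfl

@[simp]
lemma rigidityRow_diag (p : V → Fin d → ℝ) (x : V) : rigidityRow p s(x, x) = 0 := by
  simp [rigidityRow_mk]

lemma rigidityRow_apply_of_notMem (p : V → Fin d → ℝ) {e : Sym2 V} {v : V} (hv : v ∉ e) :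
    rigidityRow p e v = 0 := by
  induction e using Sym2.ind with
  | _ x y => exact dipole_apply_of_ne (by grind) (by grind) _

lemma rigidityRow_update_of_notMem (p : V → Fin d → ℝ) {e : Sym2 V} {v : V} (hv : v ∉ e)
    (q : Fin d → ℝ) : rigidityRow (Function.update p v q) e = rigidityRow p e := by
  induction e using Sym2.ind with
  | _ x y =>
    have hx : x ≠ v := by grind
    have hy : y ≠ v := by grind
    simp [rigidityRow_mk, hx, hy]

/-- The row of the incidence matrix of the complete graph belonging to a pair, for an arbitrary
orientation of the pairs. -/
noncomputable def graphicRow (e : Sym2 V) : V → ℝ :=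
  dipole e.out.1 e.out.2 1

lemma graphicRow_mk_eq_or (x y : V) :
    graphicRow s(x, y) = dipole x y (1 : ℝ) ∨ graphicRow s(x, y) = -dipole x y (1 : ℝ) := by
  have hout : s(s(x, y).out.1, s(x, y).out.2) = s(x, y) := Quot.out_eq _
  rcases Sym2.eq_iff.mp hout with ⟨h₁, h₂⟩ | ⟨h₁, h₂⟩
  · exact .inl (by rw [graphicRow, h₁, h₂])
  · exact .inr (by rw [graphicRow, h₁, h₂, dipole_swap])

lemma graphicRow_mk_mem_iff {S : Submodule ℝ (V → ℝ)} {x y : V} :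
    graphicRow s(x, y) ∈ S ↔ dipole x y (1 : ℝ) ∈ S := by
  rcases graphicRow_mk_eq_or x y with h | h <;> simp [h]

lemma graphicRow_diag_mem (S : Submodule ℝ (V → ℝ)) (x : V) : graphicRow s(x, x) ∈ S := by
  simp [graphicRow_mk_mem_iff]

lemma graphicRow_mem_of_mem_of_mem {S : Submodule ℝ (V → ℝ)} {v x y : V}
    (hx : graphicRow s(v, x) ∈ S) (hy : graphicRow s(v, y) ∈ S) : graphicRow s(x, y) ∈ S := by
  rw [graphicRow_mk_mem_iff] at *
  rw [← dipole_sub_dipole v]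
  exact S.sub_mem hy hx

lemma graphicRow_apply_of_notMem {e : Sym2 V} {v : V} (hv : v ∉ e) : graphicRow e v = 0 :=
  dipole_apply_of_ne (ne_of_mem_of_not_mem e.out_fst_mem hv).symm
    (ne_of_mem_of_not_mem e.out_snd_mem hv).symm _

end Rows

section GeneralPosition

variable {V : Type*} {d : ℕ}

/-- No `k ≤ d + 1` of the points `p v` lie on a common `(k - 2)`-dimensional affine subspace,
expressed through homogeneous coordinates. -/
def GeneralPosition (p : V → Fin d → ℝ) : Prop :=
  ∀ A : Finset V, #A ≤ d + 1 → LinearIndepOn ℝ (fun a => (p a, (1 : ℝ))) (A : Set V)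

lemma linearIndependent_simplex (d : ℕ) : LinearIndependent ℝ fun o : Option (Fin d) =>
    ((o.elim 0 fun i => Pi.single i 1, 1) : (Fin d → ℝ) × ℝ) := by
  rw [Fintype.linearIndependent_iff]
  intro g hg
  rw [Fintype.sum_option] at hg
  have hsome (i : Fin d) : g (some i) = 0 := by
    simpa [Prod.fst_sum, Pi.single_apply] using congrFun (congrArg Prod.fst hg) i
  rintro (_ | i)
  · simpa [Prod.snd_sum, hsome] using congrArg Prod.snd hg
  · exact hsome i

lemma exists_linearIndepOn_homogeneous {A : Finset V} (hA : #A ≤ d + 1) :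
    ∃ p : V → Fin d → ℝ, LinearIndepOn ℝ (fun a => (p a, (1 : ℝ))) (A : Set V) := by
  obtain ⟨c⟩ : Nonempty (A ↪ Option (Fin d)) :=
    Function.Embedding.nonempty_of_card_le (by simpa using hA)
  refine ⟨fun v => (Function.extend Subtype.val c (fun _ => none) v).elim 0 fun i => Pi.single i 1,
    ?_⟩
  have hext (a : A) : Function.extend Subtype.val c (fun _ => none) a = c a :=
    Subtype.val_injective.extend_apply c _ a
  simp only [LinearIndepOn, SetLike.coe_sort_coe, hext]
  exact (linearIndependent_simplex d).comp c c.injective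

namespace GeneralPosition

variable {p : V → Fin d → ℝ}

lemma exists_affine_dependency (hp : GeneralPosition p) {C : Finset V} (hC : #C = d + 2) :
    ∃ l : V → ℝ, (∀ i ∈ C, l i ≠ 0) ∧ ∑ i ∈ C, l i • (p i, (1 : ℝ)) = 0 := by
  classical
  have hdep : ¬ LinearIndepOn ℝ (fun a => (p a, (1 : ℝ))) (C : Set V) := fun h => by
    have hcard := LinearIndependent.fintype_card_le_finrank (R := ℝ) h
    simp [hC] at hcard
  rw [linearIndepOn_finset_iff] at hdep
  push Not at hdep
  obtain ⟨l, hl, z, hz, hlz⟩ := hdep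
  refine ⟨l, fun u hu hlu => hlz ?_, hl⟩
  have hindep := linearIndepOn_finset_iff.mp (hp (C.erase u) (by grind))
  rw [← add_sum_erase C _ hu, hlu, zero_smul, zero_add] at hl
  exact hindep l hl z (mem_erase.mpr ⟨by grind, hz⟩)

lemma exists_stress [DecidableEq V] (hp : GeneralPosition p) {C : Finset V} (hC : #C = d + 2) :
    ∃ l : V → ℝ, (∀ i ∈ C, l i ≠ 0) ∧
      ∑ i ∈ C, ∑ j ∈ C, (l i * l j) • rigidityRow p s(i, j) = 0 := by
  obtain ⟨l, hl, hsum⟩ := hp.exists_affine_dependency hC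
  have hone : ∑ j ∈ C, l j = 0 := by simpa [Prod.snd_sum] using congrArg Prod.snd hsum
  have hpos : ∑ j ∈ C, l j • p j = 0 := by simpa [Prod.fst_sum] using congrArg Prod.fst hsum
  have hequilibrium (i : V) : ∑ j ∈ C, l j • (p i - p j) = 0 := by
    simp [smul_sub, sum_sub_distrib, ← sum_smul, hone, hpos]
  have hsingle (i : V) :
      ∑ j ∈ C, (l i * l j) • LinearMap.single ℝ (fun _ => Fin d → ℝ) i (p i - p j) = 0 := by
    simp_rw [mul_smul, ← smul_sum, ← map_smul, ← map_sum, hequilibrium, map_zero, smul_zero]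
  refine ⟨l, hl, ?_⟩
  have hsplit (i j : V) : (l i * l j) • rigidityRow p s(i, j) =
      (l i * l j) • LinearMap.single ℝ (fun _ => Fin d → ℝ) i (p i - p j) +
        (l j * l i) • LinearMap.single ℝ (fun _ => Fin d → ℝ) j (p j - p i) := by
    rw [rigidityRow_mk, dipole, LinearMap.sub_apply, ← neg_sub (p i) (p j), map_neg, mul_comm (l j),
      smul_sub, smul_neg, sub_eq_add_neg]
  simp_rw [hsplit, sum_add_distrib]
  rw [sum_comm (f := fun i j => (l j * l i) • _)]
  simp only [hsingle, sum_const_zero, add_zero]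

/-- Shearing `p v` to the origin turns the homogeneous coordinates of `v` and of `Y` into vectors
of `T`. -/
lemma card_add_one_le_finrank (hp : GeneralPosition p) {Y : Finset V} {v : V} (hv : v ∉ Y)
    (hY : #Y ≤ d) {T : Submodule ℝ ((Fin d → ℝ) × ℝ)} (hT : ∀ y ∈ Y, (p v - p y, 0) ∈ T)
    (hone : (0, 1) ∈ T) : #Y + 1 ≤ finrank ℝ T := by
  classical
  let shear : (Fin d → ℝ) × ℝ →ₗ[ℝ] (Fin d → ℝ) × ℝ :=
    (LinearMap.fst ℝ _ _ - (LinearMap.toSpanSingleton ℝ _ (p v)).comp (LinearMap.snd ℝ _ _)).prod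
      (LinearMap.snd ℝ _ _)
  have hshear (u : Fin d → ℝ) (r : ℝ) : shear (u, r) = (u - r • p v, r) := rfl
  have hker : LinearMap.ker shear = ⊥ := by
    rw [LinearMap.ker_eq_bot']
    rintro ⟨u, r⟩ hur
    rw [hshear, Prod.mk_eq_zero] at hur
    obtain ⟨hu, rfl⟩ := hur
    simpa using hu
  have hindep := (hp (insert v Y) (by grind)).map' shear hker
  have hmem (y : ((insert v Y : Finset V) : Set V)) : shear (p y, 1) ∈ T := by
    rw [hshear, one_smul]
    obtain hyv | hyY := mem_insert.mp y.2
    · simpa [hyv] using hone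
    · simpa using T.sub_mem hone (hT y hyY)
  have hindepT : LinearIndependent ℝ fun y : ((insert v Y : Finset V) : Set V) =>
      (⟨shear (p y, 1), hmem y⟩ : T) :=
    .of_comp T.subtype hindep
  simpa [hv] using hindepT.fintype_card_le_finrank

variable [DecidableEq V] {T : Submodule ℝ (V → Fin d → ℝ)}

lemma rigidityRow_mem_of_forall_ne (hp : GeneralPosition p) {C : Finset V} (hC : #C = d + 2)
    {x y : V} (hx : x ∈ C) (hy : y ∈ C)
    (hT : ∀ i ∈ C, ∀ j ∈ C, s(i, j) ≠ s(x, y) → rigidityRow p s(i, j) ∈ T) :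
    rigidityRow p s(x, y) ∈ T := by
  obtain ⟨l, hl, hstress⟩ := hp.exists_stress hC
  obtain rfl | hxy := eq_or_ne x y
  · simp
  have hpair : ({(x, y), (y, x)} : Finset (V × V)) ⊆ C ×ˢ C := by grind
  rw [← sum_product', ← sum_sdiff hpair, sum_pair (by simp [hxy]), Sym2.eq_swap (a := y),
    ← add_smul] at hstress
  have hrest : ∑ q ∈ (C ×ˢ C) \ {(x, y), (y, x)},
      (l q.1 * l q.2) • rigidityRow p s(q.1, q.2) ∈ T := by
    refine T.sum_mem fun q hq => T.smul_mem _ (hT _ ?_ _ ?_ ?_) <;> grind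
  have hcoeff : l x * l y + l y * l x ≠ 0 := by
    rw [mul_comm (l y), ← two_mul]
    exact mul_ne_zero two_ne_zero (mul_ne_zero (hl x hx) (hl y hy))
  rw [← T.smul_mem_iff hcoeff, ← neg_eq_of_add_eq_zero_right hstress]
  exact T.neg_mem hrest

lemma rigidityRow_mem_of_cone (hp : GeneralPosition p) {A B : Finset V} {v : V} (hBA : B ⊆ A)
    (hB : #B = d) (hA : ∀ e ∈ A.sym2, rigidityRow p e ∈ T)
    (hvB : ∀ b ∈ B, rigidityRow p s(v, b) ∈ T) {x : V} (hx : x ∈ A) :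
    rigidityRow p s(v, x) ∈ T := by
  by_cases hvA : v ∈ A
  · exact hA _ (mk_mem_sym2_iff.mpr ⟨hvA, hx⟩)
  by_cases hxB : x ∈ B
  · exact hvB x hxB
  refine hp.rigidityRow_mem_of_forall_ne (C := insert v (insert x B)) (by grind) (by simp)
    (by simp) fun i hi j hj hij => ?_
  by_cases hiA : i ∈ A <;> by_cases hjA : j ∈ A
  · exact hA _ (mk_mem_sym2_iff.mpr ⟨hiA, hjA⟩)
  · obtain rfl : j = v := by grind
    rw [Sym2.eq_swap]
    exact hvB i (by grind)
  · obtain rfl : i = v := by grind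
    exact hvB j (by grind)
  · obtain rfl : i = v := by grind
    obtain rfl : j = i := by grind
    simp

end GeneralPosition

end GeneralPosition

section Framework

variable {V : Type*} {d : ℕ}

/-- The parameters of a linear representation of the union of the `d`-dimensional rigidity matroid
and the graphic matroid on the pairs of `V`: the positions of the vertices, and for each pair the
coefficients of its two rows. -/
structure Framework (V : Type*) (d : ℕ) where
  pos : V → Fin d → ℝ
  rigidCoeff : Sym2 V → ℝ
  treeCoeff : Sym2 V → ℝ

namespace Framework

/-- The framework whose parameters are the given coordinates. -/
def ofParams (c : (V × Fin d) ⊕ (Sym2 V ⊕ Sym2 V) → ℝ) : Framework V d where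
  pos v i := c (.inl (v, i))
  rigidCoeff e := c (.inr (.inl e))
  treeCoeff e := c (.inr (.inr e))

lemma ofParams_surjective : Function.Surjective (ofParams (V := V) (d := d)) := fun θ =>
  ⟨Sum.elim (fun x => θ.pos x.1 x.2) (Sum.elim θ.rigidCoeff θ.treeCoeff), rfl⟩

lemma isPolynomialMap_pos_ofParams (v : V) :
    IsPolynomialMap fun c => (ofParams (V := V) (d := d) c).pos v :=
  .coord_pi fun i => Sum.inl (v, i)

end Framework

/-- The pairs joining `v` to `X`. -/
def starEdges (v : V) (X : Finset V) : Set (Sym2 V) :=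
  (s(v, ·)) '' (X : Set V)

lemma mk_mem_starEdges {v x : V} {X : Finset V} : s(v, x) ∈ starEdges v X ↔ x ∈ X := by
  simp only [starEdges, Set.mem_image, mem_coe]
  grind

lemma disjoint_starEdges_of_forall_notMem {v : V} {F : Set (Sym2 V)} (hF : ∀ e ∈ F, v ∉ e)
    (X : Finset V) : Disjoint F (starEdges v X) := by
  rw [Set.disjoint_right]
  rintro _ ⟨x, -, rfl⟩ hvF
  exact hF _ hvF (Sym2.mem_mk_left v x)

lemma disjoint_starEdges {v : V} {X Y : Finset V} (hXY : Disjoint X Y) :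
    Disjoint (starEdges v X) (starEdges v Y) := by
  rw [Set.disjoint_right]
  rintro _ ⟨y, hy, rfl⟩ hyX
  exact Finset.disjoint_right.mp hXY hy (mk_mem_starEdges.mp hyX)

lemma forall_mem_sym2_insert [DecidableEq V] {P : Sym2 V → Prop} {v : V} {A : Finset V}
    (hv : P s(v, v)) (hstar : ∀ x ∈ A, P s(v, x)) (hA : ∀ e ∈ A.sym2, P e) :
    ∀ e ∈ (insert v A).sym2, P e := by
  intro e he
  rw [sym2_insert, mem_union, mem_image] at he
  rcases he with ⟨x, hx, rfl⟩ | he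
  · rcases mem_insert.mp hx with rfl | hx
    exacts [hv, hstar x hx]
  · exact hA e he

variable [DecidableEq V]

/-- The span of the rigidity rows of `S₁` and the graphic rows of `S₂`. -/
def splitSpan (p : V → Fin d → ℝ) (S₁ S₂ : Set (Sym2 V)) :
    Submodule ℝ ((V → Fin d → ℝ) × (V → ℝ)) :=
  (Submodule.span ℝ (rigidityRow p '' S₁)).prod (Submodule.span ℝ (graphicRow '' S₂))

lemma splitSpan_le {p : V → Fin d → ℝ} {S₁ S₂ : Set (Sym2 V)}
    {T : Submodule ℝ ((V → Fin d → ℝ) × (V → ℝ))} :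
    splitSpan p S₁ S₂ ≤ T ↔
      (∀ e ∈ S₁, (rigidityRow p e, 0) ∈ T) ∧ ∀ e ∈ S₂, (0, graphicRow e) ∈ T := by
  rw [splitSpan, ← LinearMap.span_inl_union_inr, Submodule.span_le]
  simp [Set.subset_def, or_imp, forall_and]

namespace Framework

variable (θ : Framework V d)

/-- The vector representing a pair in the matroid union. -/
noncomputable def row (e : Sym2 V) : (V → Fin d → ℝ) × (V → ℝ) :=
  (θ.rigidCoeff e • rigidityRow θ.pos e, θ.treeCoeff e • graphicRow e)

/-- The span of the rows of the pairs in `F`. -/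
noncomputable def rowSpan (F : Set (Sym2 V)) : Submodule ℝ ((V → Fin d → ℝ) × (V → ℝ)) :=
  Submodule.span ℝ (θ.row '' F)

/-- The rank of `F` in the represented matroid. -/
noncomputable def rank (F : Set (Sym2 V)) : ℕ :=
  finrank ℝ (θ.rowSpan F)

/-- The rows of `θ` are generic: all ranks are as large as possible, and the vertices are in
general position. -/
structure IsGeneric : Prop where
  rank_max : ∀ (θ' : Framework V d) (F : Set (Sym2 V)), θ'.rank F ≤ θ.rank F
  generalPosition : GeneralPosition θ.pos

variable {θ} {F F' : Set (Sym2 V)}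

lemma row_mem_rowSpan {e : Sym2 V} (he : e ∈ F) : θ.row e ∈ θ.rowSpan F :=
  Submodule.subset_span ⟨e, he, rfl⟩

lemma rowSpan_le {T : Submodule ℝ ((V → Fin d → ℝ) × (V → ℝ))} :
    θ.rowSpan F ≤ T ↔ ∀ e ∈ F, θ.row e ∈ T := by
  rw [rowSpan, Submodule.span_le]
  simp [Set.subset_def]

lemma rowSpan_mono (hF : F ⊆ F') : θ.rowSpan F ≤ θ.rowSpan F' :=
  Submodule.span_mono (Set.image_mono hF)

lemma row_diag (x : V) : θ.row s(x, x) = 0 := by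
  have hgraphic : graphicRow s(x, x) = 0 :=
    (Submodule.mem_bot ℝ).mp (graphicRow_diag_mem ⊥ x)
  simp [row, hgraphic]

lemma row_mem_of_mem_of_mem {T : Submodule ℝ ((V → Fin d → ℝ) × (V → ℝ))} {e : Sym2 V}
    (hrigid : (rigidityRow θ.pos e, 0) ∈ T) (htree : (0, graphicRow e) ∈ T) : θ.row e ∈ T := by
  simpa [row] using
    T.add_mem (T.smul_mem (θ.rigidCoeff e) hrigid) (T.smul_mem (θ.treeCoeff e) htree)

lemma rowSpan_le_splitSpan : θ.rowSpan F ≤ splitSpan θ.pos F F :=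
  rowSpan_le.mpr fun e he => row_mem_of_mem_of_mem
    ((splitSpan_le.mp le_rfl).1 e he) ((splitSpan_le.mp le_rfl).2 e he)

lemma isPolynomialMap_row_ofParams (e : Sym2 V) :
    IsPolynomialMap fun c => (ofParams (d := d) c).row e := by
  induction e using Sym2.ind with
  | _ x y =>
    have hdiff := (isPolynomialMap_pos_ofParams (d := d) x).sub (isPolynomialMap_pos_ofParams y)
    exact ((hdiff.map (dipole x y)).coord_smul _).prodMk
      ((IsPolynomialMap.const (graphicRow s(x, y))).coord_smul _)

variable (V d) in
lemma exists_isGeneric [Finite V] : ∃ θ : Framework V d, θ.IsGeneric := by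
  have hrows := generically_linearIndepOn (isPolynomialMap_row_ofParams (V := V) (d := d))
  have hpoints := generically_linearIndepOn fun v : V =>
    (isPolynomialMap_pos_ofParams (d := d) v).prodMk (.const (1 : ℝ))
  obtain ⟨c, hc, hcpos⟩ := (hrows.and hpoints).exists
  refine ⟨ofParams c, fun θ' F => ?_, fun A hA => ?_⟩
  · obtain ⟨c', rfl⟩ := ofParams_surjective θ'
    exact finrank_span_image_le_of_linearIndepOn fun I _ => hc I c'
  · obtain ⟨p, hp⟩ := exists_linearIndepOn_homogeneous (V := V) (d := d) hA
    exact hcpos A (Sum.elim (fun x => p x.1 x.2) 0) hp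

namespace IsGeneric

variable [Finite V]

/-- Specialising the coefficients of the pairs in `S₁` to `(1, 0)` and of those in `S₂` to `(0, 1)`
cannot increase the rank. -/
lemma finrank_rowSpan_sup_splitSpan_le (hθ : θ.IsGeneric) {S₁ S₂ : Set (Sym2 V)}
    (hF₁ : Disjoint F S₁) (hF₂ : Disjoint F S₂) (hS : Disjoint S₁ S₂) {p : V → Fin d → ℝ}
    (hp : ∀ e ∈ F, rigidityRow p e = rigidityRow θ.pos e) :
    finrank ℝ ↥(θ.rowSpan F ⊔ splitSpan p S₁ S₂) ≤ θ.rank (F ∪ (S₁ ∪ S₂)) := by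
  classical
  let θ' : Framework V d := ⟨p, fun e => if e ∈ S₁ then 1 else if e ∈ S₂ then 0 else θ.rigidCoeff e,
    fun e => if e ∈ S₁ then 0 else if e ∈ S₂ then 1 else θ.treeCoeff e⟩
  have hrow : ∀ e ∈ F, θ'.row e = θ.row e := fun e he => by
    simp [row, θ', hp e he, hF₁.notMem_of_mem_left he, hF₂.notMem_of_mem_left he]
  have hrow₁ : ∀ e ∈ S₁, θ'.row e = (rigidityRow p e, 0) := fun e he => by simp [row, θ', he]
  have hrow₂ : ∀ e ∈ S₂, θ'.row e = (0, graphicRow e) := fun e he => by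
    simp [row, θ', he, hS.notMem_of_mem_right he]
  suffices θ.rowSpan F ⊔ splitSpan p S₁ S₂ ≤ θ'.rowSpan (F ∪ (S₁ ∪ S₂)) from
    (Submodule.finrank_mono this).trans (hθ.rank_max θ' _)
  refine sup_le ?_ (splitSpan_le.mpr ⟨fun e he => ?_, fun e he => ?_⟩)
  · exact rowSpan_le.mpr fun e he => hrow e he ▸ row_mem_rowSpan (.inl he)
  · exact hrow₁ e he ▸ row_mem_rowSpan (.inr (.inl he))
  · exact hrow₂ e he ▸ row_mem_rowSpan (.inr (.inr he))

lemma finrank_rowSpan_sup_splitSpan_starEdges_le (hθ : θ.IsGeneric) {v : V}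
    (hF : ∀ e ∈ F, v ∉ e) {X Y : Finset V} (hXY : Disjoint X Y) (q : Fin d → ℝ) :
    finrank ℝ ↥(θ.rowSpan F ⊔
        splitSpan (Function.update θ.pos v q) (starEdges v X) (starEdges v Y)) ≤
      θ.rank (F ∪ starEdges v (X ∪ Y)) := by
  have hstar : starEdges v (X ∪ Y) = starEdges v X ∪ starEdges v Y := by
    simp [starEdges, Set.image_union]
  rw [hstar]
  exact hθ.finrank_rowSpan_sup_splitSpan_le (disjoint_starEdges_of_forall_notMem hF X)
    (disjoint_starEdges_of_forall_notMem hF Y) (disjoint_starEdges hXY)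
    fun e he => rigidityRow_update_of_notMem _ (hF e he) q

end IsGeneric
end Framework
end Framework

section Extension

variable {V : Type*} [DecidableEq V] {d : ℕ}

lemma rigidityRow_eq_of_midpoint (p : V → Fin d → ℝ) {v x y : V} (hx : x ≠ v) (hy : y ≠ v) :
    rigidityRow p s(x, y) =
      (2 : ℝ) • (rigidityRow (Function.update p v (midpoint ℝ (p x) (p y))) s(v, x) +
        rigidityRow (Function.update p v (midpoint ℝ (p x) (p y))) s(v, y)) := by
  have hleft : midpoint ℝ (p x) (p y) - p x = -(midpoint ℝ (p x) (p y) - p y) := by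
    simp [midpoint_sub_left, midpoint_sub_right, ← smul_neg]
  have htwice : p x - p y = (2 : ℝ) • (midpoint ℝ (p x) (p y) - p y) := by
    simp [midpoint_sub_right]
  rw [rigidityRow_mk, rigidityRow_mk, rigidityRow_mk, Function.update_self,
    Function.update_of_ne hx, Function.update_of_ne hy, hleft, map_neg, neg_add_eq_sub,
    dipole_sub_dipole, ← map_smul, htwice]

/-- Evaluation of both components of a row at the vertex `v`. -/
def evalAt (v : V) : (V → Fin d → ℝ) × (V → ℝ) →ₗ[ℝ] (Fin d → ℝ) × ℝ :=
  (LinearMap.proj v).prodMap (LinearMap.proj v)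

lemma evalAt_rigidityRow_mem {T : Submodule ℝ ((V → Fin d → ℝ) × (V → ℝ))} {p : V → Fin d → ℝ}
    {v x : V} (hvx : v ≠ x) (hT : (rigidityRow p s(v, x), 0) ∈ T) :
    (p v - p x, 0) ∈ T.map (evalAt v) :=
  ⟨_, hT, Prod.ext (dipole_apply_left hvx _) rfl⟩

lemma evalAt_graphicRow_mem {T : Submodule ℝ ((V → Fin d → ℝ) × (V → ℝ))} {v x : V}
    (hvx : v ≠ x) (hT : (0, graphicRow s(v, x)) ∈ T) : (0, 1) ∈ T.map (evalAt v) := by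
  have hdipole : (0, dipole v x (1 : ℝ)) ∈ T :=
    (graphicRow_mk_mem_iff (S := T.comap (LinearMap.inr ℝ _ _))).mp hT
  exact ⟨_, hdipole, Prod.ext rfl (dipole_apply_left hvx _)⟩

namespace Framework

variable {θ : Framework V d} {F : Set (Sym2 V)} {v : V}

lemma rowSpan_le_ker_evalAt (hF : ∀ e ∈ F, v ∉ e) : θ.rowSpan F ≤ LinearMap.ker (evalAt v) :=
  rowSpan_le.mpr fun e he => by
    simp [evalAt, row, rigidityRow_apply_of_notMem _ (hF e he),
      graphicRow_apply_of_notMem (hF e he)]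

namespace IsGeneric

variable [Finite V]

lemma rank_add_card_le (hθ : θ.IsGeneric) (hF : ∀ e ∈ F, v ∉ e) {X : Finset V} (hv : v ∉ X)
    (hX : #X ≤ d + 1) : θ.rank F + #X ≤ θ.rank (F ∪ starEdges v X) := by
  obtain rfl | ⟨x₀, hx₀⟩ := X.eq_empty_or_nonempty
  · exact Submodule.finrank_mono (rowSpan_mono Set.subset_union_left)
  have hspec := hθ.finrank_rowSpan_sup_splitSpan_starEdges_le hF
    (X := X.erase x₀) (Y := {x₀}) (by simp) (θ.pos v)
  rw [Function.update_eq_self, union_comm, ← insert_eq, insert_erase hx₀] at hspec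
  refine le_trans ?_ hspec
  set T := θ.rowSpan F ⊔ splitSpan θ.pos (starEdges v (X.erase x₀)) (starEdges v {x₀})
  obtain ⟨hrigid, htree⟩ := splitSpan_le.mp (le_sup_right : _ ≤ T)
  refine le_trans ?_ (finrank_add_finrank_map_le le_sup_left (rowSpan_le_ker_evalAt hF))
  rw [← card_erase_add_one hx₀]
  refine Nat.add_le_add_left (hθ.generalPosition.card_add_one_le_finrank (v := v) (by grind)
    (by grind) (fun y hy => ?_) ?_) _
  · exact evalAt_rigidityRow_mem (by grind) (hrigid _ (mk_mem_starEdges.mpr hy))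
  · exact evalAt_graphicRow_mem (by grind) (htree s(v, x₀) (mk_mem_starEdges.mpr (by simp)))

variable {X : Finset V} {x y : V}

/-- One-extension of the rigidity part: `v` is placed at the midpoint of `x` and `y`. -/
lemma rank_add_le_of_rigidityRow_notMem (hd : 0 < d) (hθ : θ.IsGeneric) (hF : ∀ e ∈ F, v ∉ e)
    (hv : v ∉ X) (hX : #X = d + 2) (hx : x ∈ X) (hy : y ∈ X) (hne : x ≠ y)
    (hxy : (rigidityRow θ.pos s(x, y), 0) ∉ θ.rowSpan F) :
    θ.rank F + 1 + (d + 1) ≤ θ.rank (F ∪ starEdges v X) := by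
  obtain ⟨x₀, hx₀⟩ : ((X.erase x).erase y).Nonempty := card_pos.mp (by grind)
  have hcard : #((X.erase x).erase x₀) = d := by grind
  have hvX : ∀ z ∈ X, z ≠ v := fun z hz hzv => hv (hzv ▸ hz)
  have hspec := hθ.finrank_rowSpan_sup_splitSpan_starEdges_le hF
    (X := X.erase x₀) (Y := {x₀}) (by simp) (midpoint ℝ (θ.pos x) (θ.pos y))
  rw [union_comm, ← insert_eq, insert_erase (by grind)] at hspec
  refine le_trans ?_ hspec
  set p := Function.update θ.pos v (midpoint ℝ (θ.pos x) (θ.pos y)) with hp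
  set T := θ.rowSpan F ⊔ splitSpan p (starEdges v (X.erase x₀)) (starEdges v {x₀})
  obtain ⟨hrigid, htree⟩ := splitSpan_le.mp (le_sup_right : _ ≤ T)
  replace hrigid : ∀ z ∈ X.erase x₀, (rigidityRow p s(v, z), 0) ∈ T := fun z hz =>
    hrigid _ (mk_mem_starEdges.mpr hz)
  have heval : ∀ z ∈ X.erase x₀, (p v - θ.pos z, 0) ∈ T.map (evalAt v) := fun z hz => by
    have hzv := hvX z (mem_of_mem_erase hz)
    simpa [hp, hzv] using evalAt_rigidityRow_mem hzv.symm (hrigid z hz)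
  have hmem : (rigidityRow θ.pos s(x, y), 0) ∈ T := by
    rw [rigidityRow_eq_of_midpoint _ (hvX x hx) (hvX y hy)]
    simpa using T.smul_mem 2 (T.add_mem (hrigid x (by grind)) (hrigid y (by grind)))
  have hrank : #((X.erase x).erase x₀) + 1 ≤ finrank ℝ (T.map (evalAt v)) := by
    refine hθ.generalPosition.card_add_one_le_finrank (v := x) (by simp) hcard.le
      (fun z hz => ?_) ?_
    · simpa using Submodule.sub_mem _ (heval z (by grind)) (heval x (by grind))
    · exact evalAt_graphicRow_mem (hvX x₀ (by grind)).symm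
        (htree s(v, x₀) (mk_mem_starEdges.mpr (by simp)))
  refine (Nat.add_le_add_left (hcard.ge.trans_lt hrank) _).trans
    (finrank_add_one_add_finrank_map_le le_sup_left (rowSpan_le_ker_evalAt hF) hmem ?_ hxy)
  have hvxy : v ∉ s(x, y) := by grind
  simp [evalAt, rigidityRow_apply_of_notMem _ hvxy]

lemma rank_add_le_of_graphicRow_notMem (hθ : θ.IsGeneric) (hF : ∀ e ∈ F, v ∉ e) (hv : v ∉ X)
    (hX : #X = d + 2) (hx : x ∈ X) (hy : y ∈ X) (hne : x ≠ y)
    (hxy : (0, graphicRow s(x, y)) ∉ θ.rowSpan F) :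
    θ.rank F + 1 + (d + 1) ≤ θ.rank (F ∪ starEdges v X) := by
  have hcard : #(X \ {x, y}) = d := by grind
  have hspec := hθ.finrank_rowSpan_sup_splitSpan_starEdges_le hF
    (X := X \ {x, y}) (Y := {x, y}) sdiff_disjoint (θ.pos v)
  rw [Function.update_eq_self, sdiff_union_of_subset (by grind)] at hspec
  refine le_trans ?_ hspec
  set T := θ.rowSpan F ⊔ splitSpan θ.pos (starEdges v (X \ {x, y})) (starEdges v {x, y})
  obtain ⟨hrigid, htree⟩ := splitSpan_le.mp (le_sup_right : _ ≤ T)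
  have htreex := htree s(v, x) (mk_mem_starEdges.mpr (by simp))
  have htreey := htree s(v, y) (mk_mem_starEdges.mpr (by simp))
  have hmem : (0, graphicRow s(x, y)) ∈ T :=
    graphicRow_mem_of_mem_of_mem (S := T.comap (LinearMap.inr ℝ _ _)) htreex htreey
  have hrank : #(X \ {x, y}) + 1 ≤ finrank ℝ (T.map (evalAt v)) := by
    refine hθ.generalPosition.card_add_one_le_finrank (v := v) (by grind) hcard.le
      (fun z hz => ?_) (evalAt_graphicRow_mem (by grind) htreex)
    exact evalAt_rigidityRow_mem (by grind) (hrigid _ (mk_mem_starEdges.mpr hz))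
  refine (Nat.add_le_add_left (hcard.ge.trans_lt hrank) _).trans
    (finrank_add_one_add_finrank_map_le le_sup_left (rowSpan_le_ker_evalAt hF) hmem ?_ hxy)
  have hvxy : v ∉ s(x, y) := by grind
  simp [evalAt, graphicRow_apply_of_notMem hvxy]

lemma rank_add_le_of_row_notMem (hd : 0 < d) (hθ : θ.IsGeneric) (hF : ∀ e ∈ F, v ∉ e)
    (hv : v ∉ X) (hX : #X = d + 2) (hx : x ∈ X) (hy : y ∈ X) (hne : x ≠ y)
    (hxy : θ.row s(x, y) ∉ θ.rowSpan F) :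
    θ.rank F + 1 + (d + 1) ≤ θ.rank (F ∪ starEdges v X) := by
  by_cases hrigid : (rigidityRow θ.pos s(x, y), 0) ∈ θ.rowSpan F
  · exact hθ.rank_add_le_of_graphicRow_notMem hF hv hX hx hy hne
      fun htree => hxy (row_mem_of_mem_of_mem hrigid htree)
  · exact hθ.rank_add_le_of_rigidityRow_notMem hd hF hv hX hx hy hne hrigid

end IsGeneric
end Framework
end Extension

section CompleteGraph

variable {V : Type*} [DecidableEq V] {d : ℕ} {p : V → Fin d → ℝ} {A : Finset V}

lemma graphicRow_mem_of_star {S : Submodule ℝ (V → ℝ)} {v : V}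
    (hv : ∀ x ∈ A, graphicRow s(v, x) ∈ S) : ∀ e ∈ A.sym2, graphicRow e ∈ S := by
  intro e he
  induction e using Sym2.ind with
  | _ x y =>
    rw [mk_mem_sym2_iff] at he
    exact graphicRow_mem_of_mem_of_mem (hv x he.1) (hv y he.2)

/-- The union of two stars whose complement in a complete graph on `2 * d + 2` vertices is still
rigid, while the stars form a spanning tree. -/
def doubleStar (a b : V) (B₁ B₂ : Finset V) : Set (Sym2 V) :=
  starEdges a (insert b B₁) ∪ starEdges b B₂

variable {a b : V} {B₁ B₂ : Finset V}

lemma graphicRow_mem_of_doubleStar {S : Submodule ℝ (V → ℝ)}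
    (hS : ∀ e ∈ doubleStar a b B₁ B₂, graphicRow e ∈ S) :
    ∀ e ∈ (insert a (insert b (B₁ ∪ B₂))).sym2, graphicRow e ∈ S := by
  have ha : ∀ x ∈ insert b B₁, graphicRow s(a, x) ∈ S := fun x hx =>
    hS _ (.inl (mk_mem_starEdges.mpr hx))
  have hb : ∀ x ∈ B₂, graphicRow s(b, x) ∈ S := fun x hx => hS _ (.inr (mk_mem_starEdges.mpr hx))
  have hba : graphicRow s(b, a) ∈ S := Sym2.eq_swap (a := a) ▸ ha b (mem_insert_self b B₁)
  refine graphicRow_mem_of_star (v := a) fun x hx => ?_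
  simp only [mem_insert, mem_union] at hx ha
  rcases hx with rfl | rfl | hx | hx
  · exact graphicRow_diag_mem S x
  · exact ha x (.inl rfl)
  · exact ha x (.inr hx)
  · exact graphicRow_mem_of_mem_of_mem hba (hb x hx)

lemma GeneralPosition.rigidityRow_mem_of_doubleStar (hp : GeneralPosition p)
    {T : Submodule ℝ (V → Fin d → ℝ)} (hB₁ : #B₁ = d) (hB₂ : #B₂ = d)
    (hT : ∀ e ∈ A.sym2, rigidityRow p e ∈ T) (hB₁A : B₁ ⊆ A) (hB₂A : B₂ ⊆ A)
    (ha : ∀ x ∈ B₂, rigidityRow p s(a, x) ∈ T) (hb : ∀ x ∈ B₁, rigidityRow p s(b, x) ∈ T) :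
    ∀ e ∈ (insert a (insert b A)).sym2, rigidityRow p e ∈ T := by
  have hbA : ∀ e ∈ (insert b A).sym2, rigidityRow p e ∈ T :=
    forall_mem_sym2_insert (by simp) (fun x => hp.rigidityRow_mem_of_cone hB₁A hB₁ hT hb) hT
  exact forall_mem_sym2_insert (by simp)
    (fun x => hp.rigidityRow_mem_of_cone (hB₂A.trans (subset_insert b A)) hB₂ hbA ha) hbA

lemma exists_eq_insert_insert_union (hA : 2 * d + 2 ≤ #A) :
    ∃ a b, ∃ B₁ B₂ : Finset V, A = insert a (insert b (B₁ ∪ B₂)) ∧ a ∉ insert b (B₁ ∪ B₂) ∧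
      b ∉ B₁ ∪ B₂ ∧ Disjoint B₁ B₂ ∧ #B₁ = d ∧ d ≤ #B₂ := by
  obtain ⟨a, ha⟩ : A.Nonempty := card_pos.mp (by omega)
  obtain ⟨b, hb⟩ : (A.erase a).Nonempty := card_pos.mp (by grind)
  obtain ⟨B₁, hB₁, hcard⟩ :=
    exists_subset_card_eq (s := (A.erase a).erase b) (n := d) (by grind)
  refine ⟨a, b, B₁, (A.erase a).erase b \ B₁, ?_, ?_, ?_, disjoint_sdiff, hcard, ?_⟩
  · rw [union_sdiff_of_subset hB₁, insert_erase hb, insert_erase ha]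
  · grind
  · grind
  · rw [card_sdiff_of_subset hB₁]
    grind

lemma GeneralPosition.exists_splitSpan_sym2_le (hp : GeneralPosition p) (hA : 2 * d + 2 ≤ #A) :
    ∃ D ⊆ (A.sym2 : Set (Sym2 V)),
      splitSpan p A.sym2 A.sym2 ≤ splitSpan p (A.sym2 \ D) D := by
  obtain ⟨a, b, B₁, B₂, rfl, ha, hb, hdisj, hB₁, hB₂⟩ := exists_eq_insert_insert_union hA
  obtain ⟨B₃, hB₃, hcard⟩ := exists_subset_card_eq hB₂
  have hmem : ∀ x y, s(x, y) ∈ doubleStar a b B₁ B₂ ↔ (a = x ∧ y ∈ insert b B₁) ∨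
      (a = y ∧ x ∈ insert b B₁) ∨ (b = x ∧ y ∈ B₂) ∨ (b = y ∧ x ∈ B₂) := by
    simp only [doubleStar, starEdges, Set.mem_union, Set.mem_image, mem_coe]
    grind
  refine ⟨doubleStar a b B₁ B₂, fun e he => ?_, splitSpan_le.mpr ⟨?_, ?_⟩⟩
  · induction e using Sym2.ind with
    | _ x y => grind
  all_goals
    set T := splitSpan p _ (doubleStar a b B₁ B₂)
    obtain ⟨hrigid, htree⟩ := splitSpan_le.mp (le_refl T)
  · refine hp.rigidityRow_mem_of_doubleStar (T := T.comap (LinearMap.inl ℝ _ _)) hB₁ hcard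
      (fun e he => hrigid e ⟨?_, ?_⟩) subset_union_left (hB₃.trans subset_union_right)
      (fun x hx => hrigid _ ⟨?_, ?_⟩) (fun x hx => hrigid _ ⟨?_, ?_⟩)
    · exact sym2_mono (by grind) he
    · induction e using Sym2.ind with
      | _ x y => grind
    all_goals grind [Finset.disjoint_left]
  · exact graphicRow_mem_of_doubleStar (S := T.comap (LinearMap.inr ℝ _ _)) htree

lemma GeneralPosition.finrank_splitSpan_sym2_insert_le [Finite V] (hp : GeneralPosition p)
    (hA : d < #A) (v : V) :
    finrank ℝ (splitSpan p (insert v A).sym2 (insert v A).sym2) ≤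
      finrank ℝ (splitSpan p A.sym2 A.sym2) + (d + 1) := by
  classical
  obtain ⟨B, hB, hcard⟩ := exists_subset_card_eq hA.le
  obtain ⟨x₀, hx₀⟩ := card_pos.mp (Nat.zero_le d |>.trans_lt hA)
  let gens : Finset ((V → Fin d → ℝ) × (V → ℝ)) :=
    insert (0, graphicRow s(v, x₀)) (B.image fun b => (rigidityRow p s(v, b), 0))
  have hgens : #gens ≤ d + 1 :=
    (card_insert_le _ _).trans (Nat.add_le_add_right (card_image_le.trans hcard.le) 1)
  set T := splitSpan p A.sym2 A.sym2 ⊔ Submodule.span ℝ (gens : Set _)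
  have hgensT : ∀ u ∈ gens, u ∈ T := fun u hu => le_sup_right (a := splitSpan p _ _)
    (Submodule.subset_span hu)
  obtain ⟨hrigid, htree⟩ := splitSpan_le.mp (le_sup_left : _ ≤ T)
  have hle : splitSpan p (insert v A).sym2 (insert v A).sym2 ≤ T := by
    refine splitSpan_le.mpr ⟨?_, ?_⟩
    · refine forall_mem_sym2_insert (P := fun e => (rigidityRow p e, 0) ∈ T) ?_ (fun x hx => ?_)
        hrigid
      · rw [rigidityRow_diag]
        exact zero_mem T
      · exact hp.rigidityRow_mem_of_cone (T := T.comap (LinearMap.inl ℝ _ _)) hB hcard hrigid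
          (fun b hb => hgensT _ (mem_insert_of_mem (mem_image_of_mem _ hb))) hx
    · refine graphicRow_mem_of_star (S := T.comap (LinearMap.inr ℝ _ _)) (v := x₀) fun x hx => ?_
      rcases mem_insert.mp hx with rfl | hx
      · exact Sym2.eq_swap (a := x) ▸ hgensT _ (mem_insert_self _ _)
      · exact htree _ (mk_mem_sym2_iff.mpr ⟨hx₀, hx⟩)
  calc finrank ℝ (splitSpan p (insert v A).sym2 (insert v A).sym2)
      ≤ finrank ℝ T := Submodule.finrank_mono hle
    _ ≤ _ := Submodule.finrank_add_le_finrank_add_finrank _ _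
    _ ≤ _ := Nat.add_le_add_left ((finrank_span_finset_le_card gens).trans hgens) _

namespace Framework.IsGeneric

variable [Finite V] {θ : Framework V d}

lemma rowSpan_sym2 (hθ : θ.IsGeneric) (hA : 2 * d + 2 ≤ #A) :
    θ.rowSpan A.sym2 = splitSpan θ.pos A.sym2 A.sym2 := by
  obtain ⟨D, hDA, hD⟩ := hθ.generalPosition.exists_splitSpan_sym2_le hA
  have hspec := hθ.finrank_rowSpan_sup_splitSpan_le (Set.empty_disjoint _) (Set.empty_disjoint D)
    (S₁ := A.sym2 \ D) Set.disjoint_sdiff_left (p := θ.pos) (by simp)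
  rw [Set.empty_union, Set.sdiff_union_of_subset hDA] at hspec
  exact Submodule.eq_of_le_of_finrank_le rowSpan_le_splitSpan
    ((Submodule.finrank_mono (hD.trans le_sup_right)).trans hspec)

lemma rowSpan_sym2_union_starEdges (hθ : θ.IsGeneric) (hA : 2 * d + 2 ≤ #A) {v : V} (hv : v ∉ A)
    {X : Finset V} (hXA : X ⊆ A) (hX : #X = d + 1) :
    θ.rowSpan (A.sym2 ∪ starEdges v X) = θ.rowSpan (insert v A).sym2 := by
  refine Submodule.eq_of_le_of_finrank_le (rowSpan_mono (Set.union_subset ?_ ?_)) ?_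
  · exact coe_subset.mpr (sym2_mono (subset_insert v A))
  · rintro _ ⟨x, hx, rfl⟩
    simp [hXA hx]
  calc finrank ℝ (θ.rowSpan (insert v A).sym2)
      = finrank ℝ (splitSpan θ.pos (insert v A).sym2 (insert v A).sym2) := by
        rw [hθ.rowSpan_sym2 (hA.trans (card_le_card (subset_insert v A)))]
    _ ≤ finrank ℝ (splitSpan θ.pos A.sym2 A.sym2) + (d + 1) :=
        hθ.generalPosition.finrank_splitSpan_sym2_insert_le (by omega) v
    _ = θ.rank A.sym2 + #X := by rw [← hθ.rowSpan_sym2 hA, hX, rank]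
    _ ≤ θ.rank (A.sym2 ∪ starEdges v X) :=
        hθ.rank_add_card_le (fun e he hve => hv (mem_sym2_iff.mp he v hve)) (by grind) hX.le

end Framework.IsGeneric
end CompleteGraph

section Separation

variable {V : Type*}

lemma mem_of_reachable_of_forall_adj {W : Type*} {G : SimpleGraph W} {P : W → Prop}
    (hP : ∀ x y, G.Adj x y → P x → P y) {x y : W} (hxy : G.Reachable x y) (hx : P x) : P y := by
  obtain ⟨w⟩ := hxy
  induction w with
  | nil => exact hx
  | cons hadj _ ih => exact ih (hP _ _ hadj hx)

/-- `c`-connectivity of the subgraph induced on `U`, expressed by separations: any two disjoint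
nonempty sets of vertices without edges between them leave at least `c` vertices outside. -/
structure KConnectedOn (H : SimpleGraph V) (c : ℕ) (U : Finset V) : Prop where
  lt_card : c < #U
  card_add_card_le : ∀ A ⊆ U, ∀ B ⊆ U, A.Nonempty → B.Nonempty → Disjoint A B →
    (∀ a ∈ A, ∀ b ∈ B, ¬ H.Adj a b) → c + #A + #B ≤ #U

lemma kConnectedOn_univ [Fintype V] {G : SimpleGraph V} {c : ℕ} (hG : KConnected G c) :
    KConnectedOn G c univ := by
  classical
  refine ⟨by simpa [Nat.card_eq_fintype_card] using hG.1, ?_⟩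
  rintro A - B - ⟨a, ha⟩ ⟨b, hb⟩ hAB hnadj
  by_contra! hlt
  have hcard : #A + #B + #(A ∪ B)ᶜ = #(univ : Finset V) := by
    rw [← card_union_of_disjoint hAB, card_add_card_compl, card_univ]
  have hconn := hG.2 ((A ∪ B)ᶜ : Finset V) (finite_toSet _)
    (by rw [Set.ncard_coe_finset]; omega)
  have hcover : ∀ x : ↥(((A ∪ B)ᶜ : Finset V) : Set V)ᶜ, x.1 ∈ A ∨ x.1 ∈ B := fun x => by
    simpa [or_iff_not_imp_left] using x.2
  have hbA : b ∈ A := mem_of_reachable_of_forall_adj (P := fun x => x.1 ∈ A)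
    (fun x y hxy hx => (hcover y).resolve_right fun hy => hnadj _ hx _ hy hxy)
    (hconn.preconnected ⟨a, by simp [ha]⟩ ⟨b, by simp [hb]⟩) ha
  exact disjoint_left.mp hAB hbA hb

namespace KConnectedOn

variable {H H' : SimpleGraph V} {c : ℕ} {U : Finset V} {v : V}

lemma mono (hH : KConnectedOn H c U) (hle : H ≤ H') : KConnectedOn H' c U :=
  ⟨hH.lt_card, fun A hA B hB hAne hBne hAB hnadj => hH.card_add_card_le A hA B hB hAne hBne hAB
    fun a ha b hb hab => hnadj a ha b hb (hle hab)⟩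

lemma isClique_of_card_le (hH : KConnectedOn H c U) (hU : #U ≤ c + 1) :
    H.IsClique (U : Set V) := by
  intro x hx y hy hxy
  by_contra hnadj
  have hsep := hH.card_add_card_le {x} (by simpa using hx) {y} (by simpa using hy) (by simp)
    (by simp) (by simpa using hxy) (by simpa using hnadj)
  simp only [card_singleton] at hsep
  omega

variable [DecidableRel H.Adj]

lemma le_card_neighbors (hH : KConnectedOn H c U) (hv : v ∈ U) : c ≤ #{x ∈ U | H.Adj v x} := by
  classical
  let N : Finset V := {x ∈ U | H.Adj v x}
  change c ≤ #N
  have hvN : v ∉ N := by simp [N]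
  have hNU : insert v N ⊆ U := insert_subset hv (filter_subset _ _)
  have hcard := card_sdiff_add_card_eq_card hNU
  rw [card_insert_of_notMem hvN] at hcard
  have hlt := hH.lt_card
  rcases (U \ insert v N).eq_empty_or_nonempty with hempty | hne
  · rw [hempty, card_empty] at hcard
    omega
  · have hsep := hH.card_add_card_le {v} (by simpa using hv) _ sdiff_subset (by simp) hne
      (by simp) (by grind)
    rw [card_singleton] at hsep
    omega

variable [DecidableEq V]

lemma erase_of_isClique_neighbors (hH : KConnectedOn H c U) (hv : v ∈ U)
    (hclique : H.IsClique ({x ∈ U | H.Adj v x} : Finset V)) (hU : c + 1 < #U) :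
    KConnectedOn H c (U.erase v) := by
  have hcard := card_erase_add_one hv
  refine ⟨by omega, fun A hA B hB hAne hBne hAB hnadj => ?_⟩
  have hAU := hA.trans (erase_subset v U)
  have hBU := hB.trans (erase_subset v U)
  have hvA : v ∉ A := fun h => notMem_erase v U (hA h)
  have hvB : v ∉ B := fun h => notMem_erase v U (hB h)
  by_cases hvB' : ∀ b ∈ B, ¬ H.Adj v b
  · have hsep := hH.card_add_card_le (insert v A) (insert_subset hv hAU) B hBU (by simp) hBne
      (disjoint_insert_left.mpr ⟨hvB, hAB⟩) (by grind)
    rw [card_insert_of_notMem hvA] at hsep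
    omega
  · push Not at hvB'
    obtain ⟨b, hb, hvb⟩ := hvB'
    have hvA' : ∀ a ∈ A, ¬ H.Adj a v := fun a ha hav => hnadj a ha b hb <|
      hclique (by simpa using ⟨hAU ha, hav.symm⟩) (by simpa using ⟨hBU hb, hvb⟩)
        fun hab => disjoint_left.mp hAB ha (hab ▸ hb)
    have hsep := hH.card_add_card_le A hAU (insert v B) (insert_subset hv hBU) hAne (by simp)
      (disjoint_insert_right.mpr ⟨hvA, hAB⟩) (by grind)
    rw [card_insert_of_notMem hvB] at hsep
    omega

end KConnectedOn
end Separation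

namespace Framework

section Flat

variable {V : Type*} [DecidableEq V] {d : ℕ} {θ : Framework V d} {H : SimpleGraph V}

/-- The edge set of `H` is a flat of the represented matroid. -/
def IsFlat (θ : Framework V d) (H : SimpleGraph V) : Prop :=
  ∀ x y, x ≠ y → θ.row s(x, y) ∈ θ.rowSpan H.edgeSet → H.Adj x y

/-- The closure of the edge set of `G` in the represented matroid. -/
def closure (θ : Framework V d) (G : SimpleGraph V) : SimpleGraph V :=
  .fromEdgeSet {e | θ.row e ∈ θ.rowSpan G.edgeSet}

lemma le_closure (G : SimpleGraph V) : G ≤ θ.closure G := fun _ _ hxy =>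
  (SimpleGraph.fromEdgeSet_adj _).mpr ⟨row_mem_rowSpan hxy, hxy.ne⟩

lemma rowSpan_closure_le (G : SimpleGraph V) :
    θ.rowSpan (θ.closure G).edgeSet ≤ θ.rowSpan G.edgeSet :=
  rowSpan_le.mpr fun e he => by
    rw [closure, SimpleGraph.edgeSet_fromEdgeSet] at he
    exact he.1

lemma isFlat_closure (G : SimpleGraph V) : θ.IsFlat (θ.closure G) := fun _ _ hxy hmem =>
  (SimpleGraph.fromEdgeSet_adj _).mpr ⟨rowSpan_closure_le G hmem, hxy⟩

lemma rowSpan_sym2_le_of_isClique {A : Finset V} (hA : H.IsClique (A : Set V)) :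
    θ.rowSpan A.sym2 ≤ θ.rowSpan H.edgeSet := by
  refine rowSpan_le.mpr fun e he => ?_
  induction e using Sym2.ind with
  | _ x y =>
    rw [mem_coe, mk_mem_sym2_iff] at he
    by_cases hxy : x = y
    · rw [hxy, row_diag]
      exact zero_mem _
    · exact row_mem_rowSpan (hA he.1 he.2 hxy)

lemma IsFlat.isClique_insert [Finite V] (hH : θ.IsFlat H) (hθ : θ.IsGeneric) {X Y : Finset V}
    {v : V} (hYX : Y ⊆ X) (hY : 2 * (d + 1) ≤ #Y) (hX : H.IsClique (X : Set V))
    (hvY : H.IsClique (insert v Y : Finset V)) : H.IsClique (insert v X : Finset V) := by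
  by_cases hv : v ∈ X
  · rwa [insert_eq_of_mem hv]
  obtain ⟨Z, hZY, hZ⟩ := exists_subset_card_eq (show d + 1 ≤ #Y by omega)
  have hspan := hθ.rowSpan_sym2_union_starEdges (hY.trans (card_le_card hYX)) hv (hZY.trans hYX) hZ
  have hle : θ.rowSpan (insert v X).sym2 ≤ θ.rowSpan H.edgeSet := by
    rw [← hspan]
    refine rowSpan_le.mpr fun e he => ?_
    rcases he with he | ⟨z, hz, rfl⟩
    · exact rowSpan_sym2_le_of_isClique hX (row_mem_rowSpan he)
    · exact row_mem_rowSpan (hvY (by simp) (by simp [hZY hz]) (by grind))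
  exact fun x hx y hy hxy => hH x y hxy (hle (row_mem_rowSpan (mk_mem_sym2_iff.mpr ⟨hx, hy⟩)))

lemma rank_le_of_subset_sym2 [Finite V] {F : Set (Sym2 V)} {U : Finset V} (hF : F ⊆ U.sym2) :
    θ.rank F ≤ (d + 1) * #U := by
  let restrict : (V → Fin d → ℝ) × (V → ℝ) →ₗ[ℝ] (U → Fin d → ℝ) × (U → ℝ) :=
    (LinearMap.funLeft ℝ _ Subtype.val).prodMap (LinearMap.funLeft ℝ _ Subtype.val)
  have hzero : ∀ u ∈ θ.rowSpan F, ∀ v ∉ U, evalAt v u = 0 := fun u hu v hv =>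
    rowSpan_le_ker_evalAt (fun e he hve => hv (mem_sym2_iff.mp (hF he) v hve)) hu
  have hinj : Function.Injective (restrict.domRestrict (θ.rowSpan F)) := by
    rw [← LinearMap.ker_eq_bot, LinearMap.ker_eq_bot']
    rintro ⟨u, hu⟩ hu0
    have hev : ∀ v, evalAt v u = 0 := fun v => by
      by_cases hv : v ∈ U
      · exact Prod.ext (congrFun (congrArg Prod.fst hu0) ⟨v, hv⟩)
          (congrFun (congrArg Prod.snd hu0) ⟨v, hv⟩)
      · exact hzero u hu v hv
    exact Subtype.ext (Prod.ext (funext fun v => congrArg Prod.fst (hev v))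
      (funext fun v => congrArg Prod.snd (hev v)))
  refine (LinearMap.finrank_le_finrank_of_injective hinj).trans_eq ?_
  simp [Module.finrank_pi_fintype]
  ring

end Flat

section Gain

variable {V : Type*} [DecidableEq V] [Finite V] {d : ℕ} {θ : Framework V d} {H : SimpleGraph V}
  {X M : Finset V} {v : V}

lemma rank_union_starEdges_le (hMX : M ⊆ X) (hadj : ∀ x ∈ M, H.Adj v x) :
    θ.rank (H.edgeSet ∩ X.sym2 ∪ starEdges v M) ≤ θ.rank (H.edgeSet ∩ (insert v X).sym2) := by
  refine Submodule.finrank_mono (rowSpan_mono (Set.union_subset ?_ ?_))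
  · exact Set.inter_subset_inter_right _ (coe_subset.mpr (sym2_mono (subset_insert v X)))
  · rintro _ ⟨x, hx, rfl⟩
    exact ⟨hadj x hx, by simp [hMX hx]⟩

lemma IsGeneric.rank_add_min_le (hθ : θ.IsGeneric) (hv : v ∉ X) (hMX : M ⊆ X)
    (hadj : ∀ x ∈ M, H.Adj v x) :
    θ.rank (H.edgeSet ∩ X.sym2) + min (d + 1) #M ≤ θ.rank (H.edgeSet ∩ (insert v X).sym2) := by
  obtain ⟨Z, hZM, hZ⟩ := exists_subset_card_eq (min_le_right (d + 1) #M)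
  have hZX := hZM.trans hMX
  rw [← hZ]
  exact (hθ.rank_add_card_le (fun e he hve => hv (mem_sym2_iff.mp he.2 v hve)) (by grind)
    (by omega)).trans (rank_union_starEdges_le hZX fun x hx => hadj x (hZM hx))

lemma IsFlat.rank_add_le_of_not_isClique (hH : θ.IsFlat H) (hd : 0 < d) (hθ : θ.IsGeneric)
    (hv : v ∉ X) (hMX : M ⊆ X) (hadj : ∀ x ∈ M, H.Adj v x) (hM : d + 2 ≤ #M)
    (hclique : ¬ H.IsClique (M : Set V)) :
    θ.rank (H.edgeSet ∩ X.sym2) + 1 + (d + 1) ≤ θ.rank (H.edgeSet ∩ (insert v X).sym2) := by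
  obtain ⟨x, hx, y, hy, hxy, hnadj⟩ : ∃ x ∈ M, ∃ y ∈ M, x ≠ y ∧ ¬ H.Adj x y := by
    simpa [SimpleGraph.isClique_iff, Set.Pairwise] using hclique
  obtain ⟨Z, hxyZ, hZM, hZ⟩ := exists_subsuperset_card_eq (s := {x, y}) (t := M) (n := d + 2)
    (by grind) (by rw [card_pair hxy]; omega) hM
  have hnot : θ.row s(x, y) ∉ θ.rowSpan (H.edgeSet ∩ X.sym2) := fun hmem =>
    hnadj (hH x y hxy (rowSpan_mono Set.inter_subset_left hmem))
  exact (hθ.rank_add_le_of_row_notMem hd (fun e he hve => hv (mem_sym2_iff.mp he.2 v hve))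
    (by grind) hZ (by grind) (by grind) hxy hnot).trans
    (rank_union_starEdges_le (hZM.trans hMX) fun x hx => hadj x (hZM hx))

lemma IsFlat.rank_add_min_add_ite_le [Decidable (H.IsClique (M : Set V))] (hH : θ.IsFlat H)
    (hd : 0 < d) (hθ : θ.IsGeneric) (hv : v ∉ X) (hMX : M ⊆ X) (hadj : ∀ x ∈ M, H.Adj v x) :
    (θ.rank (H.edgeSet ∩ X.sym2) : ℝ) + (min ((d + 1 : ℕ) : ℝ) #M +
      if 2 * (d + 1) < #M ∧ ¬ H.IsClique (M : Set V) then 1 else 0) ≤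
        θ.rank (H.edgeSet ∩ (insert v X).sym2) := by
  split_ifs with hcase
  · have hrank : (_ : ℝ) ≤ _ := Nat.cast_le.mpr <|
      hH.rank_add_le_of_not_isClique hd hθ hv hMX hadj (by omega) hcase.2
    have hmin := min_le_left ((d + 1 : ℕ) : ℝ) #M
    push_cast at hrank hmin ⊢
    linarith
  · rw [add_zero]
    exact_mod_cast hθ.rank_add_min_le hv hMX hadj

end Gain

section Simplicial

variable {V : Type*} [DecidableEq V] [Finite V] {d : ℕ} {θ : Framework V d} {H : SimpleGraph V}
  {U : Finset V}

/-- Otherwise every vertex would contribute more than `d + 1` to the rank on average, when the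
vertices are added in random order. -/
lemma IsFlat.exists_isClique_neighbors [DecidableRel H.Adj] (hH : θ.IsFlat H) (hd : 0 < d)
    (hθ : θ.IsGeneric) (hU : KConnectedOn H ((d + 1) * (d + 2) + 3) U) :
    ∃ v ∈ U, H.IsClique ({x ∈ U | H.Adj v x} : Finset V) := by
  classical
  by_contra! hnot
  let gain : Finset V → ℝ := fun X => min ((d + 1 : ℕ) : ℝ) #X +
    if 2 * (d + 1) < #X ∧ ¬ H.IsClique (X : Set V) then 1 else 0
  have hgain : ∀ X ⊆ U, ∀ v ∈ U, v ∉ X →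
      (θ.rank (H.edgeSet ∩ X.sym2) : ℝ) + gain (X ∩ {x ∈ U | H.Adj v x}) ≤
        θ.rank (H.edgeSet ∩ (insert v X).sym2) := fun X _ v _ hvX =>
    hH.rank_add_min_add_ite_le hd hθ hvX inter_subset_left (by simp +contextual)
  have hlt : ∀ v ∈ U, ((d + 1 : ℕ) : ℝ) <
      orderAverage (U.erase v) fun X => gain (X ∩ {x ∈ U | H.Adj v x}) := fun v hv => by
    rw [orderAverage_comp_inter (fun x hx => by grind [H.ne_of_adj]) gain]
    exact lt_orderAverage_min_card_add_ite (fun X Y x hYX hY => hH.isClique_insert hθ hYX hY)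
      (hU.le_card_neighbors hv) (hnot v hv)
  have hne : U.Nonempty := card_pos.mp (Nat.zero_lt_of_lt hU.lt_card)
  have hrank : (θ.rank (H.edgeSet ∩ U.sym2) : ℝ) ≤ ((d + 1) * #U : ℕ) :=
    Nat.cast_le.mpr (rank_le_of_subset_sym2 Set.inter_subset_right)
  have hsum := (sum_lt_sum_of_nonempty hne hlt).trans_le
    ((sum_orderAverage_le (Nat.cast_nonneg _) U hgain).trans hrank)
  rw [sum_const, nsmul_eq_mul, ← Nat.cast_mul, mul_comm] at hsum
  exact hsum.false

theorem IsFlat.isClique_of_kConnectedOn (hH : θ.IsFlat H) (hd : 0 < d) (hθ : θ.IsGeneric)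
    (hU : KConnectedOn H ((d + 1) * (d + 2) + 3) U) : H.IsClique (U : Set V) := by
  classical
  induction hn : #U generalizing U with
  | zero => exact absurd hU.lt_card (by omega)
  | succ n ih =>
    obtain ⟨v, hv, hclique⟩ := hH.exists_isClique_neighbors hd hθ hU
    rcases le_or_gt #U ((d + 1) * (d + 2) + 3 + 1) with hcard | hcard
    · exact hU.isClique_of_card_le hcard
    have herase := ih (hU.erase_of_isClique_neighbors hv hclique hcard) (by grind)
    have hdeg := hU.le_card_neighbors hv
    rw [← insert_erase hv]
    refine hH.isClique_insert hθ (Y := {x ∈ U | H.Adj v x}) (fun x hx => by grind [H.ne_of_adj])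
      (by nlinarith) herase ?_
    rw [coe_insert, SimpleGraph.isClique_insert]
    exact ⟨hclique, fun x hx _ => (mem_filter.mp hx).2⟩

end Simplicial

theorem IsGeneric.rowSpan_edgeSet {V : Type*} [Finite V] [DecidableEq V] {d : ℕ}
    {θ : Framework V d} (hθ : θ.IsGeneric) (hd : 0 < d) {G : SimpleGraph V}
    (hG : KConnected G (d ^ 2 + 3 * d + 5)) :
    θ.rowSpan G.edgeSet = splitSpan θ.pos .univ .univ := by
  cases nonempty_fintype V
  have hcard : d ^ 2 + 3 * d + 5 = (d + 1) * (d + 2) + 3 := by ring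
  have hU := kConnectedOn_univ (hcard ▸ hG)
  have hclique : (θ.closure G).IsClique (univ : Finset V) :=
    (isFlat_closure G).isClique_of_kConnectedOn hd hθ (hU.mono (le_closure G))
  have hfull := hθ.rowSpan_sym2 (A := univ) (by nlinarith [hU.lt_card])
  rw [sym2_univ, coe_univ] at hfull
  refine le_antisymm (hfull ▸ rowSpan_mono (Set.subset_univ _)) ?_
  rw [← hfull, ← coe_univ, ← sym2_univ]
  exact (rowSpan_sym2_le_of_isClique hclique).trans (rowSpan_closure_le G)

end Framework

section InfinitesimalRotation

variable {V : Type*} {d : ℕ} {p : V → Fin d → ℝ}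

namespace GeneralPosition

lemma exists_dual_ne_zero (hp : GeneralPosition p) {B : Finset V} (hB : #B ≤ d + 1) {a : V}
    (ha : a ∈ B) :
    ∃ α : Dual ℝ ((Fin d → ℝ) × ℝ), α (p a, 1) ≠ 0 ∧ ∀ b ∈ B, b ≠ a → α (p b, 1) = 0 := by
  obtain ⟨α, hαa, hα⟩ := Submodule.exists_dual_map_eq_bot_of_notMem
    (linearIndepOn_iff_notMem_span.mp (hp B hB) a ha) inferInstance
  rw [← le_bot_iff, Submodule.map_le_iff_le_comap] at hα
  exact ⟨α, hαa, fun b hb hba => hα (Submodule.subset_span ⟨b, ⟨hb, hba⟩, rfl⟩)⟩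

/-- Two functionals vanishing on `S` cut out the codimension-two axis of the rotation. -/
lemma exists_infinitesimal_rotation (hp : GeneralPosition p) {S : Finset V} (hS : #S < d)
    {a b : V} (ha : a ∉ S) (hb : b ∉ S) (hab : a ≠ b) :
    ∃ m : V → Dual ℝ (Fin d → ℝ), (∀ x y, m x (p x - p y) = m y (p x - p y)) ∧
      (∀ x, ∀ s ∈ S, m x (p x - p s) = 0) ∧ m a (p a - p b) ≠ 0 := by
  classical
  have hB : #(insert a (insert b S)) ≤ d + 1 := by grind
  obtain ⟨α, hαa, hα⟩ := hp.exists_dual_ne_zero hB (mem_insert_self a _)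
  obtain ⟨β, hβb, hβ⟩ := hp.exists_dual_ne_zero hB (mem_insert_of_mem (mem_insert_self b _))
  let m : V → Dual ℝ (Fin d → ℝ) := fun x =>
    (α (p x, 1) • β - β (p x, 1) • α) ∘ₗ LinearMap.inl ℝ _ ℝ
  have hm (x y z : V) : m x (p y - p z) = α (p x, 1) * (β (p y, 1) - β (p z, 1)) -
      β (p x, 1) * (α (p y, 1) - α (p z, 1)) := by
    simp [m, ← map_sub]
  refine ⟨m, fun x y => by rw [hm, hm]; ring, fun x s hs => ?_, ?_⟩
  · rw [hm, hα s (by grind) (by grind), hβ s (by grind) (by grind)]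
    ring
  · rw [hm, hα b (by grind) hab.symm, hβ a (by grind) hab]
    simp [hαa, hβb]

end GeneralPosition
end InfinitesimalRotation

section Connectivity

variable {V : Type*} [DecidableEq V] {d : ℕ} {G : SimpleGraph V} {p : V → Fin d → ℝ}

lemma lsum_dipole [Fintype V] {M : Type*} [AddCommGroup M] [Module ℝ M] (L : V → Dual ℝ M)
    (x y : V) (m : M) : LinearMap.lsum ℝ (fun _ => M) ℝ L (dipole x y m) = L x m - L y m := by
  rw [dipole_eq_sub, map_sub, LinearMap.lsum_piSingle, LinearMap.lsum_piSingle]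

lemma connected_of_forall_graphicRow_mem [Finite V] [Nonempty V]
    (hG : ∀ e, graphicRow e ∈ Submodule.span ℝ (graphicRow '' G.edgeSet)) : G.Connected := by
  classical
  cases nonempty_fintype V
  refine ⟨fun a b => ?_⟩
  by_contra hab
  let indicator := LinearMap.lsum ℝ (fun _ => ℝ) ℝ
    fun v => if G.Reachable a v then LinearMap.id else 0
  have hker : Submodule.span ℝ (graphicRow '' G.edgeSet) ≤ LinearMap.ker indicator := by
    rw [Submodule.span_le, Set.image_subset_iff]
    intro e he
    induction e using Sym2.ind with
    | _ x y =>
      have hxy : G.Reachable a x ↔ G.Reachable a y :=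
        ⟨(·.trans (SimpleGraph.Adj.reachable he)), (·.trans (SimpleGraph.Adj.reachable he).symm)⟩
      rw [Set.mem_preimage, SetLike.mem_coe, graphicRow_mk_mem_iff, LinearMap.mem_ker, lsum_dipole]
      simp only [hxy, sub_self]
  have hmem := hker (hG s(a, b))
  rw [graphicRow_mk_mem_iff, LinearMap.mem_ker, lsum_dipole] at hmem
  simp [hab] at hmem

namespace GeneralPosition

/-- The side `A` of the separation can be rotated about `S` while the other side is fixed. -/
lemma rigidityRow_notMem_span_of_separation [Finite V] (hp : GeneralPosition p) {S : Finset V}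
    (hS : #S < d) {A : Set V} (hA : ∀ x y, G.Adj x y → x ∈ A → y ∉ A → y ∈ S) {a b : V}
    (ha : a ∈ A) (hb : b ∉ A) (haS : a ∉ S) (hbS : b ∉ S) :
    rigidityRow p s(a, b) ∉ Submodule.span ℝ (rigidityRow p '' G.edgeSet) := by
  classical
  cases nonempty_fintype V
  obtain ⟨m, hsymm, hfix, hne⟩ :=
    hp.exists_infinitesimal_rotation hS haS hbS (ne_of_mem_of_not_mem ha hb)
  let motion := LinearMap.lsum ℝ (fun _ => Fin d → ℝ) ℝ fun v => if v ∈ A then m v else 0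
  have hmotion (x y : V) : motion (rigidityRow p s(x, y)) =
      (if x ∈ A then m x (p x - p y) else 0) - if y ∈ A then m y (p x - p y) else 0 := by
    rw [rigidityRow_mk, lsum_dipole]
    split_ifs <;> rfl
  have hker : Submodule.span ℝ (rigidityRow p '' G.edgeSet) ≤ LinearMap.ker motion := by
    rw [Submodule.span_le, Set.image_subset_iff]
    intro e he
    induction e using Sym2.ind with
    | _ x y =>
      rw [Set.mem_preimage, SetLike.mem_coe, LinearMap.mem_ker, hmotion]
      by_cases hx : x ∈ A <;> by_cases hy : y ∈ A
      · simp [hx, hy, hsymm x y]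
      · simp [hx, hy, hfix x y (hA x y he hx hy)]
      · rw [if_neg hx, if_pos hy, ← neg_sub (p y), map_neg,
          hfix y x (hA y x (SimpleGraph.Adj.symm he) hy hx), neg_zero, sub_zero]
      · simp [hx, hy]
  intro hmem
  apply hne
  simpa [hmotion, ha, hb] using hker hmem

theorem kConnected_of_forall_rigidityRow_mem [Finite V] (hp : GeneralPosition p)
    (hcard : d < Nat.card V)
    (hG : ∀ e, rigidityRow p e ∈ Submodule.span ℝ (rigidityRow p '' G.edgeSet)) :
    KConnected G d := by
  refine ⟨hcard, fun S hS hSd => ?_⟩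
  have : Nonempty ↥Sᶜ := Set.nonempty_coe_sort.mpr <| Set.nonempty_compl.mpr fun hSuniv => by
    rw [hSuniv, Set.ncard_univ] at hSd
    omega
  refine ⟨fun a b => ?_⟩
  by_contra hab
  let A : Set V := {v | ∃ hv : v ∈ Sᶜ, (G.induce Sᶜ).Reachable a ⟨v, hv⟩}
  have hsep : ∀ x y, G.Adj x y → x ∈ A → y ∉ A → y ∈ hS.toFinset := by
    rintro x y hxy ⟨hx, hax⟩ hyA
    by_contra hy
    rw [hS.mem_toFinset] at hy
    exact hyA ⟨hy, hax.trans (SimpleGraph.Adj.reachable (by simpa using hxy))⟩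
  exact hp.rigidityRow_notMem_span_of_separation
    (by rwa [← Set.ncard_eq_toFinset_card S hS]) hsep (a := a) (b := b) ⟨a.2, .refl _⟩
    (fun ⟨_, h⟩ => hab h) (hS.mem_toFinset.not.mpr a.2)
    (hS.mem_toFinset.not.mpr b.2) (hG _)

end GeneralPosition

lemma Framework.exists_disjoint_of_rowSpan_eq [Finite V] {θ : Framework V d} {J : Set (Sym2 V)}
    (hJ : θ.rowSpan J = splitSpan θ.pos .univ .univ) :
    ∃ F₁ ⊆ J, ∃ F₂ ⊆ J, Disjoint F₁ F₂ ∧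
      (∀ e, rigidityRow θ.pos e ∈ Submodule.span ℝ (rigidityRow θ.pos '' F₁)) ∧
      ∀ e, graphicRow e ∈ Submodule.span ℝ (graphicRow '' F₂) := by
  obtain ⟨F₁, hF₁, F₂, hF₂, hdisj, hspan₁, hspan₂⟩ := exists_disjoint_span_eq J.toFinite hJ
  refine ⟨F₁, hF₁, F₂, hF₂, hdisj, fun e => ?_, fun e => ?_⟩
  · exact span_image_smul_le _ _ _
      (hspan₁.ge (Submodule.subset_span (Set.mem_image_of_mem _ (Set.mem_univ e))))
  · exact span_image_smul_le _ _ _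
      (hspan₂.ge (Submodule.subset_span (Set.mem_image_of_mem _ (Set.mem_univ e))))

end Connectivity

end SpanningTreeRemoval

/-- Every `(d²+3d+5)`-connected finite simple graph `G` contains a spanning tree `T`
such that `G - E(T)` is `d`-connected. -/
theorem removable_spanning_tree {V : Type*} [Fintype V] (d : ℕ) (hd : 0 < d)
    (G : SimpleGraph V) (hG : KConnected G (d ^ 2 + 3 * d + 5)) :
    ∃ T : SimpleGraph V, T ≤ G ∧ T.IsTree ∧ KConnected (G \ T) d := by
  classical
  have hcard : d < Nat.card V := by nlinarith [hG.1]
  have : Nonempty V := (Nat.card_pos_iff.mp (by omega)).1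
  obtain ⟨θ, hθ⟩ := SpanningTreeRemoval.Framework.exists_isGeneric V d
  obtain ⟨F₁, hF₁, F₂, hF₂, hdisj, hrigid, hgraphic⟩ :=
    SpanningTreeRemoval.Framework.exists_disjoint_of_rowSpan_eq (hθ.rowSpan_edgeSet hd hG)
  have hedges : (SimpleGraph.fromEdgeSet F₂).edgeSet = F₂ := by
    rw [SimpleGraph.edgeSet_fromEdgeSet, sdiff_eq_left]
    exact Set.disjoint_left.mpr fun e he => G.not_isDiag_of_mem_edgeSet (hF₂ he)
  have hconn : (SimpleGraph.fromEdgeSet F₂).Connected :=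
    SpanningTreeRemoval.connected_of_forall_graphicRow_mem (by rwa [hedges])
  obtain ⟨T, hTF₂, hT⟩ := hconn.exists_isTree_le
  rw [← SimpleGraph.edgeSet_subset_edgeSet, hedges] at hTF₂
  have hF₁T : F₁ ⊆ (G \ T).edgeSet := by
    rw [SimpleGraph.edgeSet_sdiff]
    exact Set.subset_sdiff.mpr ⟨hF₁, hdisj.mono_right hTF₂⟩
  exact ⟨T, SimpleGraph.edgeSet_subset_edgeSet.mp (hTF₂.trans hF₂), hT,
    hθ.generalPosition.kConnected_of_forall_rigidityRow_mem hcard fun e =>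
      Submodule.span_mono (Set.image_mono hF₁T) (hrigid e)⟩
end

section
/- For every positive integer d, every (20·d(d+1))-connected finite simple graph G contains a spanning tree T such that the graph obtained from G by deleting the edges of T is d-connected. -/
/-!
Place the vertices at generic points of `E = ℝ^d` and give every edge `xy` a generic weight `t`. The
vectors in `(E × ℝ)^V` with entries `±(p x - p y, t)` at `x` and `y` represent the union of the
`d`-dimensional rigidity matroid and the graphic matroid, so if the rows of `G` span the rows of all
pairs, then each row of `G` can be replaced by its rigidity part or by its graphic part without
losing rank. The rigidity edges then form an infinitesimally rigid graph, which is `d`-connected,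
since otherwise one side of a separation could rotate about the separator; the graphic edges form a
connected graph, which contains the spanning tree.

To show that the rows of `G` span everything, close `G` under linked pairs, that is, under pairs
for which both parts of the row are spanned, and suppose that some pair is not linked. Every vertex
with two neighbours that are not linked is then joined to many vertices of this kind. Adding these
vertices one by one in a random order, a vertex preceded by many neighbours raises the rank by at
least `d + 1`, and by `d + 2` if an unlinked pair of its neighbours precedes it. On average this
bonus outweighs the loss at the early vertices, and every remaining vertex adds `d + 1` to the
rank. The total is at least `(d + 1) |V|`, but the last coordinates of every row sum to zero.
-/

open Finset Module Submodule

section LinearAlgebra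

variable {K ι W : Type*} [Field K] [AddCommGroup W] [Module K W]

theorem exists_linearMap_apply_eq_of_linearIndepOn {W' : Type*} [AddCommGroup W'] [Module K W']
    {f : ι → W} {s : Set ι} (hf : LinearIndepOn K f s) (g : ι → W') :
    ∃ L : W →ₗ[K] W', ∀ i ∈ s, L (f i) = g i := by
  obtain ⟨φ, hφ⟩ := (Finsupp.linearCombination K fun i : s => f i).exists_leftInverse_of_injective
    (LinearMap.ker_eq_bot.2 hf.linearIndependent)
  refine ⟨Finsupp.linearCombination K (fun i : s => g i) ∘ₗ φ, fun i hi => ?_⟩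
  have hφi : φ (f i) = Finsupp.single ⟨i, hi⟩ 1 := by
    simpa using LinearMap.congr_fun hφ (Finsupp.single ⟨i, hi⟩ 1)
  simp [hφi]

theorem span_image_eq_top_of_linearIndepOn [FiniteDimensional K W] {f : ι → W} {C : Finset ι}
    (hf : LinearIndepOn K f C) (hC : #C = finrank K W) : span K (f '' C) = ⊤ := by
  rw [← Set.range_domRestrict]
  exact hf.linearIndependent.span_eq_top_of_card_eq_finrank' (by simpa using hC)

theorem exists_linearIndepOn_of_card_le_finrank {N : Finset ι} (hN : #N ≤ finrank K W) :
    ∃ f : ι → W, LinearIndepOn K f N := by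
  classical
  obtain ⟨v, hv⟩ := exists_linearIndependent_of_le_finrank hN
  refine ⟨fun i => if hi : i ∈ N then v (N.equivFin ⟨i, hi⟩) else 0, ?_⟩
  have hcomp : LinearIndependent K fun i : N => v (N.equivFin i) :=
    hv.comp N.equivFin N.equivFin.injective
  simpa [LinearIndepOn] using hcomp

theorem exists_linearIndepOn_prodMk_one {N : Finset ι} (hN : #N ≤ finrank K W + 1) :
    ∃ f : ι → W, LinearIndepOn K (fun i => (f i, (1 : K))) N := by
  classical
  rcases N.eq_empty_or_nonempty with rfl | ⟨i₀, hi₀⟩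
  · exact ⟨0, by simp⟩
  obtain ⟨f, hf⟩ := exists_linearIndepOn_of_card_le_finrank (K := K) (W := W) (N := N.erase i₀)
    (by have := card_erase_add_one hi₀; omega)
  have hf' : LinearIndepOn K (Function.update f i₀ 0) (N.erase i₀) :=
    hf.congr fun i hi => (Function.update_of_ne (ne_of_mem_erase hi) _ _).symm
  refine ⟨Function.update f i₀ 0, ?_⟩
  rw [← insert_erase hi₀, coe_insert,
    linearIndepOn_insert (by simp), mem_span_image_finset_iff_exists_fun]
  refine ⟨LinearIndepOn.of_comp (LinearMap.fst K W K) hf', ?_⟩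
  rintro ⟨c, hc⟩
  simp only [Prod.ext_iff, Prod.fst_sum, Prod.snd_sum, Prod.smul_mk, Function.update_self] at hc
  have hc0 : ∀ i, c i = 0 := Fintype.linearIndependent_iff.1 hf'.linearIndependent c hc.1
  simp [hc0] at hc

theorem finrank_span_image_eq_card {f : ι → W} {N : Finset ι} (hf : LinearIndepOn K f N) :
    finrank K (span K (f '' N)) = #N := by
  rw [Set.image_eq_range, finrank_span_eq_card hf.linearIndependent]
  simp

theorem finrank_span_image_le_of_forall_linearIndepOn [Finite ι] {f g : ι → W}
    (hfg : ∀ s : Finset ι, LinearIndepOn K f s → LinearIndepOn K g s) (F : Set ι) :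
    finrank K (span K (f '' F)) ≤ finrank K (span K (g '' F)) := by
  obtain ⟨s, hsF, -, hspan, hs⟩ :=
    exists_linearIndepOn_extension (linearIndepOn_empty K f) (Set.empty_subset F)
  lift s to Finset ι using s.toFinite
  have hfin (h : ι → W) (t : Set ι) : FiniteDimensional K (span K (h '' t)) :=
    FiniteDimensional.span_of_finite K (t.toFinite.image h)
  calc finrank K (span K (f '' F)) ≤ finrank K (span K (f '' s)) :=
        finrank_mono (span_le.2 hspan)
    _ = finrank K (span K (g '' s)) := by
        rw [finrank_span_image_eq_card hs, finrank_span_image_eq_card (hfg s hs)]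
    _ ≤ finrank K (span K (g '' F)) := finrank_mono (span_mono (Set.image_mono hsF))

theorem finrank_add_finrank_le_of_le_ker {U : Type*} [AddCommGroup U] [Module K U]
    [FiniteDimensional K W] {π : W →ₗ[K] U} {A T : Submodule K W} {M : Submodule K U}
    (hAT : A ≤ T) (hA : A ≤ LinearMap.ker π) (hM : M ≤ T.map π) :
    finrank K A + finrank K M ≤ finrank K T := by
  have hker : finrank K A ≤ finrank K (LinearMap.ker (π.domRestrict T)) := by
    rw [← (comapSubtypeEquivOfLe hAT).finrank_eq]
    exact finrank_mono fun a ha => hA ha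
  have hrange : finrank K M ≤ finrank K (LinearMap.range (π.domRestrict T)) := by
    rw [LinearMap.range_domRestrict]
    exact finrank_mono hM
  have := LinearMap.finrank_range_add_finrank_ker (π.domRestrict T)
  omega

theorem finrank_sup_span_add_le [FiniteDimensional K W] (X : Submodule K W) (a b : W) :
    finrank K ↥(X ⊔ span K {a + b}) ≤ finrank K ↥(X ⊔ span K {a}) ∨
      finrank K ↥(X ⊔ span K {a + b}) ≤ finrank K ↥(X ⊔ span K {b}) := by
  by_cases ha : a ∈ X
  · refine Or.inr (finrank_mono (sup_le le_sup_left ?_))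
    rw [span_singleton_le_iff_mem]
    exact add_mem (mem_sup_left ha) (mem_sup_right (mem_span_singleton_self b))
  · left
    rw [finrank_sup_span_singleton ha]
    by_cases hab : a + b ∈ X
    · rw [sup_eq_left.2 ((span_singleton_le_iff_mem _ _).2 hab)]
      omega
    · rw [finrank_sup_span_singleton hab]

theorem exists_subset_finrank_sup_span_add_le [DecidableEq ι] [FiniteDimensional K W]
    (a b : ι → W) (F : Finset ι) (X : Submodule K W) :
    ∃ T ⊆ F, finrank K ↥(X ⊔ span K ((fun i => a i + b i) '' F)) ≤
      finrank K ↥(X ⊔ span K (a '' T ∪ b '' ↑(F \ T))) := by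
  induction F using Finset.induction_on generalizing X with
  | empty => exact ⟨∅, subset_rfl, finrank_mono (by simp)⟩
  | insert e F he ih =>
    set Y := span K ((fun i => a i + b i) '' (F : Set ι))
    have hsplit : X ⊔ span K ((fun i => a i + b i) '' ↑(insert e F)) =
        X ⊔ Y ⊔ span K {a e + b e} := by
      rw [coe_insert, Set.image_insert_eq, span_insert, sup_comm (span K _), sup_assoc]
    rw [hsplit]
    rcases finrank_sup_span_add_le (X ⊔ Y) (a e) (b e) with h | h
    · obtain ⟨T, hTF, hT⟩ := ih (X ⊔ span K {a e})
      refine ⟨insert e T, insert_subset_insert e hTF, ?_⟩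
      rw [insert_sdiff_insert, sdiff_insert_of_notMem he, coe_insert, Set.image_insert_eq,
        Set.insert_union, span_insert, ← sup_assoc]
      rw [sup_right_comm X Y (span K {a e})] at h
      exact h.trans hT
    · obtain ⟨T, hTF, hT⟩ := ih (X ⊔ span K {b e})
      refine ⟨T, hTF.trans (subset_insert e F), ?_⟩
      rw [insert_sdiff_of_notMem _ (fun heT => he (hTF heT)), coe_insert, Set.image_insert_eq,
        Set.union_insert, span_insert, ← sup_assoc]
      rw [sup_right_comm X Y (span K {b e})] at h
      exact h.trans hT

end LinearAlgebra

section GenericPoints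

open AffineMap

variable {K Q : Type*} [Field K] [AddCommGroup Q] [Module K Q]

theorem finite_setOf_not_linearIndependent_lineMap {ι W : Type*} [Finite ι] [AddCommGroup W]
    [Module K W] {a : ι → W} (ha : LinearIndependent K a) (b : ι → W) :
    {s : K | ¬ LinearIndependent K fun i => lineMap (a i) (b i) s}.Finite := by
  classical
  have := Fintype.ofFinite ι
  obtain ⟨φ, hφ⟩ := exists_linearMap_apply_eq_of_linearIndepOn (linearIndepOn_univ_iff.2 ha)
    fun i => (Pi.single i 1 : ι → K)
  let M : Matrix ι ι (Polynomial K) := Matrix.of fun i j =>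
    lineMap (k := Polynomial K) (Polynomial.C (φ (a i) j)) (Polynomial.C (φ (b i) j)) Polynomial.X
  have hdet_eval (s : K) :
      M.det.eval s = Matrix.det fun i j => φ (lineMap (a i) (b i) s) j := by
    rw [← Polynomial.coe_evalRingHom, RingHom.map_det]
    congr 1
    ext i j
    simp [M, lineMap_apply]
  have hdet : M.det ≠ 0 := by
    intro hzero
    have hone : (fun i j => φ (lineMap (a i) (b i) (0 : K)) j) = (1 : Matrix ι ι K) := by
      ext i j
      simp [hφ i, Matrix.one_apply, Pi.single_apply, eq_comm]
    have hdet_zero := hdet_eval 0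
    rw [hzero, hone, Matrix.det_one, Polynomial.eval_zero] at hdet_zero
    exact zero_ne_one hdet_zero
  refine (Polynomial.finite_setOfPred_isRoot hdet).subset fun s hs => ?_
  by_contra hroot
  rw [Set.mem_ofPred_eq, Polynomial.IsRoot.def, hdet_eval] at hroot
  exact hs (LinearIndependent.of_comp φ (Matrix.linearIndependent_rows_of_det_ne_zero hroot))

variable (K) in
/-- A set that contains all but finitely many points of every line through one of its points.
It abstracts the Zariski-open sets, whose finite intersections are nonempty if their members
are. -/
def IsCofiniteOnLines (U : Set Q) : Prop :=
  ∀ q ∈ U, ∀ q', {s : K | lineMap q q' s ∉ U}.Finite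

theorem isCofiniteOnLines_setOf_linearIndepOn {ι W : Type*} [AddCommGroup W] [Module K W]
    {f : Q → ι → W} (hf : ∀ q q' s i, f (lineMap q q' s) i = lineMap (f q i) (f q' i) (s : K))
    (N : Finset ι) : IsCofiniteOnLines K {q | LinearIndepOn K (f q) N} := fun q hq q' => by
  simpa only [Set.mem_ofPred_eq, LinearIndepOn, hf] using
    finite_setOf_not_linearIndependent_lineMap hq.linearIndependent fun i : N => f q' i

theorem IsCofiniteOnLines.inter {U U' : Set Q} (hU : IsCofiniteOnLines K U)
    (hU' : IsCofiniteOnLines K U') : IsCofiniteOnLines K (U ∩ U') := fun q hq q' =>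
  ((hU q hq.1 q').union (hU' q hq.2 q')).subset fun _ hs => not_and_or.1 hs

theorem IsCofiniteOnLines.nonempty_inter [Infinite K] {U U' : Set Q}
    (hU : IsCofiniteOnLines K U) (hU' : IsCofiniteOnLines K U') (hne : U.Nonempty)
    (hne' : U'.Nonempty) : (U ∩ U').Nonempty := by
  obtain ⟨q, hq⟩ := hne
  obtain ⟨q', hq'⟩ := hne'
  have hfin' : {s : K | lineMap q q' s ∉ U'}.Finite := by
    refine ((hU' q' hq' q).preimage (sub_right_injective (b := 1)).injOn).subset fun s hs => ?_
    rwa [Set.mem_preimage, Set.mem_ofPred_eq, lineMap_apply_one_sub]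
  obtain ⟨s, hs⟩ := ((hU q hq q').union hfin').infinite_compl.nonempty
  exact ⟨lineMap q q' s, not_not.1 fun h => hs (Or.inl h), not_not.1 fun h => hs (Or.inr h)⟩

theorem exists_forall_mem_of_isCofiniteOnLines [Infinite K] {κ : Type*} [Finite κ]
    {U : κ → Set Q} (hU : ∀ k, IsCofiniteOnLines K (U k)) :
    ∃ q, ∀ k, (U k).Nonempty → q ∈ U k := by
  classical
  have := Fintype.ofFinite κ
  suffices h : ∀ A : Finset κ, IsCofiniteOnLines K {q | ∀ k ∈ A, (U k).Nonempty → q ∈ U k} ∧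
      {q | ∀ k ∈ A, (U k).Nonempty → q ∈ U k}.Nonempty by
    obtain ⟨q, hq⟩ := (h univ).2
    exact ⟨q, fun k => hq k (mem_univ k)⟩
  intro A
  induction A using Finset.induction_on with
  | empty => exact ⟨fun _ _ _ => by simp, 0, by simp⟩
  | insert k A _ ih =>
    by_cases hk : (U k).Nonempty
    · have hinter : {q | ∀ j ∈ insert k A, (U j).Nonempty → q ∈ U j} =
          U k ∩ {q | ∀ j ∈ A, (U j).Nonempty → q ∈ U j} := by
        ext q
        simp [hk]
      rw [hinter]
      exact ⟨(hU k).inter ih.1, (hU k).nonempty_inter ih.1 hk ih.2⟩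
    · simpa [hk] using ih

end GenericPoints

section Frameworks

variable {V E M : Type*}

section DiffSingle

variable [DecidableEq V] [AddCommGroup M] [Module ℝ M]

/-- The vector `u` at the vertex `x`, its negative at the vertex `y`, and zero elsewhere. Rows of
rigidity matrices and of incidence matrices have this shape. -/
def diffSingle (x y : V) : M →ₗ[ℝ] V → M :=
  LinearMap.single ℝ (fun _ => M) x - LinearMap.single ℝ (fun _ => M) y

theorem diffSingle_apply (x y : V) (u : M) :
    diffSingle x y u = Pi.single x u - Pi.single y u := rfl

theorem diffSingle_swap (x y : V) (u : M) : diffSingle y x u = diffSingle x y (-u) := by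
  rw [map_neg]
  exact (neg_sub _ _).symm

theorem diffSingle_self (x : V) (u : M) : diffSingle x x u = 0 := sub_self _

theorem diffSingle_add_diffSingle (x y z : V) (u : M) :
    diffSingle x y u + diffSingle y z u = diffSingle x z u := sub_add_sub_cancel _ _ _

end DiffSingle

/-- Positions `q.1 : V → E` of the vertices, together with a weight `q.2 x y - q.2 y x` for every
oriented edge. The weights are given as antisymmetrised arbitrary functions so that the
frameworks form a vector space. -/
abbrev Framework (V E : Type*) := (V → E) × (V → V → ℝ)

namespace Framework

variable [AddCommGroup E] [Module ℝ E]

/-- The direction of the edge from `y` to `x` in `E`, together with its weight. -/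
def edgeDir (q : Framework V E) (x y : V) : E × ℝ := (q.1 x - q.1 y, q.2 x y - q.2 y x)

open AffineMap in
theorem edgeDir_lineMap (q q' : Framework V E) (s : ℝ) (x y : V) :
    (lineMap q q' s : Framework V E).edgeDir x y = lineMap (q.edgeDir x y) (q'.edgeDir x y) s := by
  simp only [lineMap_apply_module, edgeDir, Prod.smul_mk, Prod.mk_add_mk, Prod.mk.injEq,
    Prod.fst_add, Prod.snd_add, Prod.smul_fst, Prod.smul_snd, Pi.add_apply, Pi.smul_apply]
  constructor <;> module

theorem exists_linearIndepOn_edgeDir [FiniteDimensional ℝ E] {v : V} {N : Finset V} (hv : v ∉ N)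
    (hN : #N ≤ finrank ℝ E + 1) : ∃ q : Framework V E, LinearIndepOn ℝ (q.edgeDir v) N := by
  classical
  obtain ⟨f, hf⟩ := exists_linearIndepOn_of_card_le_finrank (K := ℝ) (W := E × ℝ) (N := N)
    (by simpa using hN)
  refine ⟨(fun z => if z = v then 0 else -(f z).1, fun x y => if x = v then (f y).2 else 0),
    hf.congr fun z hz => ?_⟩
  have hzv : z ≠ v := fun h => hv (h ▸ hz)
  simp [edgeDir, hzv]

variable [DecidableEq V]

/-- The row of an edge in the rigidity matrix, extended by zeros in the last coordinates. -/
def barRow (q : Framework V E) : Sym2 V → V → E × ℝ :=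
  Sym2.lift ⟨fun x y => diffSingle x y (q.1 x - q.1 y, 0), fun x y => by
    beta_reduce
    rw [diffSingle_swap x y, Prod.neg_mk, neg_sub, neg_zero]⟩

/-- The row of an edge in the weighted incidence matrix, extended by zeros in `E`. -/
def treeRow (q : Framework V E) : Sym2 V → V → E × ℝ :=
  Sym2.lift ⟨fun x y => diffSingle x y (0, q.2 x y - q.2 y x), fun x y => by
    beta_reduce
    rw [diffSingle_swap x y, Prod.neg_mk, neg_sub, neg_zero]⟩

/-- The rows `row e` represent, for generic frameworks, the union of the rigidity matroid in `E`
and the graphic matroid. -/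
def row (q : Framework V E) (e : Sym2 V) : V → E × ℝ := q.barRow e + q.treeRow e

theorem row_mk (q : Framework V E) (x y : V) : q.row s(x, y) = diffSingle x y (q.edgeDir x y) := by
  simp [row, barRow, treeRow, edgeDir, ← map_add]

open AffineMap in
theorem row_lineMap (q q' : Framework V E) (s : ℝ) (e : Sym2 V) :
    (lineMap q q' s : Framework V E).row e = lineMap (q.row e) (q'.row e) s := by
  induction e with | _ x y
  rw [row_mk, row_mk, row_mk, edgeDir_lineMap]
  simp only [lineMap_apply_module, map_add, map_smul]

/-- The span of the rows of the edges in `F`. -/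
def rowSpace (q : Framework V E) (F : Set (Sym2 V)) : Submodule ℝ (V → E × ℝ) :=
  span ℝ (q.row '' F)

theorem row_mem_rowSpace {q : Framework V E} {F : Set (Sym2 V)} {e : Sym2 V} (he : e ∈ F) :
    q.row e ∈ q.rowSpace F := subset_span (Set.mem_image_of_mem _ he)

theorem rowSpace_mono (q : Framework V E) {F F' : Set (Sym2 V)} (h : F ⊆ F') :
    q.rowSpace F ≤ q.rowSpace F' := span_mono (Set.image_mono h)

/-- The rank of the edge set `F` in the matroid represented by the rows. -/
noncomputable def rank (q : Framework V E) (F : Set (Sym2 V)) : ℕ := finrank ℝ (q.rowSpace F)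

end Framework

/-- Every set of at most `dim E + 1` points is affinely independent. -/
def InGeneralPosition [AddCommGroup E] [Module ℝ E] (p : V → E) : Prop :=
  ∀ N : Finset V, #N ≤ finrank ℝ E + 1 → LinearIndepOn ℝ (fun z => (p z, (1 : ℝ))) N

namespace Framework

variable [AddCommGroup E] [Module ℝ E] [DecidableEq V]

/-- The consequences of algebraic independence of the positions and weights that the argument
needs: every edge set has the largest possible rank, the positions are in general position, and
up to `dim E + 1` edges at a common vertex have independent directions. -/
structure Generic (q : Framework V E) : Prop where
  rank_le (F : Set (Sym2 V)) (q' : Framework V E) : q'.rank F ≤ q.rank F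
  inGeneralPosition : InGeneralPosition q.1
  linearIndepOn_edgeDir (v : V) (N : Finset V) : v ∉ N → #N ≤ finrank ℝ E + 1 →
    LinearIndepOn ℝ (q.edgeDir v) N

open AffineMap in
variable (V E) in
theorem exists_generic [Finite V] [FiniteDimensional ℝ E] : ∃ q : Framework V E, q.Generic := by
  let U : Finset (Sym2 V) ⊕ Finset V ⊕ V × Finset V → Set (Framework V E) :=
    Sum.elim (fun F => {q | LinearIndepOn ℝ q.row F})
      (Sum.elim (fun N => {q | LinearIndepOn ℝ (fun z => (q.1 z, (1 : ℝ))) N})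
        fun vN => {q | LinearIndepOn ℝ (q.edgeDir vN.1) vN.2})
  have hU : ∀ k, IsCofiniteOnLines ℝ (U k) := by
    rintro (F | N | ⟨v, N⟩)
    · exact isCofiniteOnLines_setOf_linearIndepOn row_lineMap F
    · refine isCofiniteOnLines_setOf_linearIndepOn (Q := Framework V E)
        (f := fun q z => (q.1 z, (1 : ℝ))) (fun q q' s z => ?_) N
      simp [lineMap_apply_module]
    · exact isCofiniteOnLines_setOf_linearIndepOn (fun q q' s => edgeDir_lineMap q q' s v) N
  obtain ⟨q, hq⟩ := exists_forall_mem_of_isCofiniteOnLines hU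
  refine ⟨q, fun F q' => ?_, fun N hN => ?_, fun v N hv hN => ?_⟩
  · exact finrank_span_image_le_of_forall_linearIndepOn (fun F hF => hq (.inl F) ⟨q', hF⟩) F
  · obtain ⟨p, hp⟩ := exists_linearIndepOn_prodMk_one hN
    exact hq (.inr (.inl N)) ⟨(p, 0), hp⟩
  · exact hq (.inr (.inr (v, N))) (exists_linearIndepOn_edgeDir hv hN)

end Framework

end Frameworks

section SimplexRigidity

variable {V E : Type*} [AddCommGroup E] [Module ℝ E] {p : V → E} {m : V → Dual ℝ E} {C : Finset V}

theorem sum_smul_apply_sum_smul_eq_zero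
    (hm : ∀ x ∈ C, ∀ y ∈ C, (m x - m y) (p x - p y) = 0) {γ : V → ℝ} (hγ : ∑ c ∈ C, γ c = 0) :
    (∑ c ∈ C, γ c • m c) (∑ c ∈ C, γ c • p c) = 0 := by
  have hexpand : ∑ x ∈ C, ∑ y ∈ C, γ x * γ y * (m x - m y) (p x - p y) =
      ∑ x ∈ C, ∑ y ∈ C, γ y * (γ x * m x (p x)) + ∑ x ∈ C, ∑ y ∈ C, γ x * (γ y * m y (p y)) -
        ∑ x ∈ C, ∑ y ∈ C, γ x * (γ y * m y (p x)) -
        ∑ x ∈ C, ∑ y ∈ C, γ y * (γ x * m x (p y)) := by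
    simp only [← sum_add_distrib, ← sum_sub_distrib]
    refine sum_congr rfl fun x _ => sum_congr rfl fun y _ => ?_
    simp only [LinearMap.sub_apply, map_sub]
    ring
  have hzero : ∑ x ∈ C, ∑ y ∈ C, γ x * γ y * (m x - m y) (p x - p y) = 0 :=
    sum_eq_zero fun x hx => sum_eq_zero fun y hy => by rw [hm x hx y hy, mul_zero]
  have hdiag : ∑ x ∈ C, ∑ y ∈ C, γ y * (γ x * m x (p x)) = 0 :=
    sum_eq_zero fun x _ => by rw [← sum_mul, hγ, zero_mul]
  have hdiag' : ∑ x ∈ C, ∑ y ∈ C, γ x * (γ y * m y (p y)) = 0 := by rwa [sum_comm]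
  have hcross : ∑ x ∈ C, ∑ y ∈ C, γ y * (γ x * m x (p y)) =
      ∑ x ∈ C, ∑ y ∈ C, γ x * (γ y * m y (p x)) := sum_comm
  have hpair : (∑ c ∈ C, γ c • m c) (∑ c ∈ C, γ c • p c) =
      ∑ x ∈ C, ∑ y ∈ C, γ x * (γ y * m y (p x)) := by
    simp only [LinearMap.sum_apply, LinearMap.smul_apply, map_sum, map_smul, smul_eq_mul, mul_sum]
  linarith

theorem apply_sub_apply_sub_of_isAlt {A : E →ₗ[ℝ] Dual ℝ E} (hA : A.IsAlt) (b : Dual ℝ E)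
    (u w : E) : (A u + b - (A w + b)) (u - w) = 0 := by
  rw [add_sub_add_right_eq_sub, ← map_sub]
  exact hA _

namespace InGeneralPosition

variable [FiniteDimensional ℝ E]

theorem span_image_eq_top (hp : InGeneralPosition p) (hC : #C = finrank ℝ E + 1) :
    span ℝ ((fun z => (p z, (1 : ℝ))) '' C) = ⊤ :=
  span_image_eq_top_of_linearIndepOn (hp C hC.le) (by simpa using hC)

theorem eq_zero_of_forall_apply_sub_eq_zero (hp : InGeneralPosition p)
    (hC : #C = finrank ℝ E + 1) {δ : Dual ℝ E} {a : E} (h : ∀ c ∈ C, δ (a - p c) = 0) :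
    δ = 0 := by
  have hcoprod : δ.coprod (-LinearMap.toSpanSingleton ℝ ℝ (δ a)) = 0 := by
    refine LinearMap.ext_on (hp.span_image_eq_top hC) ?_
    rintro _ ⟨c, hc, rfl⟩
    have := h c hc
    rw [map_sub, sub_eq_zero] at this
    simp [this]
  simpa using congrArg (· ∘ₗ LinearMap.inl ℝ E ℝ) hcoprod

theorem exists_isAlt (hp : InGeneralPosition p) (hC : #C = finrank ℝ E + 1)
    (hm : ∀ x ∈ C, ∀ y ∈ C, (m x - m y) (p x - p y) = 0) :
    ∃ (A : E →ₗ[ℝ] Dual ℝ E) (b : Dual ℝ E), A.IsAlt ∧ ∀ c ∈ C, m c = A (p c) + b := by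
  obtain ⟨L, hL⟩ := exists_linearMap_apply_eq_of_linearIndepOn (hp C hC.le) m
  refine ⟨L ∘ₗ LinearMap.inl ℝ E ℝ, L (0, 1), fun e => ?_, fun c hc => ?_⟩
  · obtain ⟨γ, hγ⟩ : ∃ γ : V → ℝ, ∑ c ∈ C, γ c • (p c, (1 : ℝ)) = (e, 0) := by
      rw [← mem_span_image_finset_iff_exists_fun', hp.span_image_eq_top hC]
      trivial
    have hLe : L (e, 0) = ∑ c ∈ C, γ c • m c := by
      rw [← hγ, map_sum]
      exact sum_congr rfl fun c hc => by rw [map_smul, hL c hc]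
    simp only [Prod.ext_iff, Prod.fst_sum, Prod.snd_sum, Prod.smul_mk, smul_eq_mul,
      mul_one] at hγ
    rw [LinearMap.comp_apply, LinearMap.inl_apply, hLe]
    nth_rw 1 [← hγ.1]
    exact sum_smul_apply_sum_smul_eq_zero hm hγ.2
  · rw [← hL c hc, LinearMap.comp_apply, LinearMap.inl_apply, ← map_add, Prod.mk_add_mk, add_zero,
      zero_add]

end InGeneralPosition

end SimplexRigidity

namespace Framework

variable {V E : Type*} [AddCommGroup E] [Module ℝ E] [DecidableEq V]
  {q : Framework V E} {S S' : Submodule ℝ (V → E × ℝ)} {x y : V}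

/-- The `E`-part at `x` of a functional on the row vectors; a functional that vanishes on the rows
of some edges is an infinitesimal motion of positions and heights. -/
def velocity (φ : Dual ℝ (V → E × ℝ)) (x : V) : Dual ℝ E :=
  φ ∘ₗ LinearMap.single ℝ (fun _ => E × ℝ) x ∘ₗ LinearMap.inl ℝ E ℝ

/-- The scalar part at `x` of a functional on the row vectors. -/
def height (φ : Dual ℝ (V → E × ℝ)) (x : V) : ℝ := φ (Pi.single x (0, 1))

theorem apply_single (φ : Dual ℝ (V → E × ℝ)) (x : V) (u : E × ℝ) :
    φ (Pi.single x u) = velocity φ x u.1 + u.2 * height φ x := by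
  have hu : u = (u.1, 0) + u.2 • (0, 1) := by ext <;> simp
  conv_lhs => rw [hu, Pi.single_add, Pi.single_smul, map_add, map_smul]
  rfl

theorem apply_diffSingle (φ : Dual ℝ (V → E × ℝ)) (x y : V) (u : E × ℝ) :
    φ (diffSingle x y u) =
      (velocity φ x - velocity φ y) u.1 + u.2 * (height φ x - height φ y) := by
  rw [diffSingle_apply, map_sub, apply_single, apply_single, LinearMap.sub_apply]
  ring

/-- Both the row of a bar and the row of a tree edge between `x` and `y` lie in `S`. -/
def Linked (q : Framework V E) (S : Submodule ℝ (V → E × ℝ)) (x y : V) : Prop :=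
  diffSingle x y (q.1 x - q.1 y, (0 : ℝ)) ∈ S ∧ diffSingle x y ((0 : E), (1 : ℝ)) ∈ S

theorem Linked.refl (q : Framework V E) (S : Submodule ℝ (V → E × ℝ)) (x : V) :
    q.Linked S x x := by
  simp [Linked, diffSingle_self]

theorem Linked.symm (h : q.Linked S x y) : q.Linked S y x := by
  rw [Linked, diffSingle_swap x y, diffSingle_swap x y, map_neg _ (0, 1)]
  simpa [Linked] using h

theorem Linked.mono (hS : S ≤ S') (h : q.Linked S x y) : q.Linked S' x y := ⟨hS h.1, hS h.2⟩

theorem Linked.row_mem (h : q.Linked S x y) : q.row s(x, y) ∈ S := by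
  have := S.add_mem h.1 (S.smul_mem (q.2 x y - q.2 y x) h.2)
  rw [← map_smul, ← map_add] at this
  simpa [row_mk, edgeDir] using this

theorem linked_iff : q.Linked S x y ↔ ∀ φ ∈ S.dualAnnihilator,
    (velocity φ x - velocity φ y) (q.1 x - q.1 y) = 0 ∧ height φ x = height φ y := by
  rw [Linked, ← Subspace.forall_mem_dualAnnihilator_apply_eq_zero_iff S,
    ← Subspace.forall_mem_dualAnnihilator_apply_eq_zero_iff S, ← forall₂_and]
  simp [apply_diffSingle, sub_eq_zero]

variable [FiniteDimensional ℝ E] {C : Finset V}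

theorem linked_of_forall_linked (hq : InGeneralPosition q.1) (hC : #C = finrank ℝ E + 1)
    (hCC : ∀ x ∈ C, ∀ y ∈ C, q.Linked S x y) (hx : ∀ c ∈ C, q.Linked S x c)
    (hy : ∀ c ∈ C, q.Linked S y c) : q.Linked S x y := by
  rw [linked_iff]
  intro φ hφ
  obtain ⟨A, b, hA, hAC⟩ :=
    hq.exists_isAlt hC fun x hx y hy => (linked_iff.1 (hCC x hx y hy) φ hφ).1
  have velocity_eq {z : V} (hz : ∀ c ∈ C, q.Linked S z c) : velocity φ z = A (q.1 z) + b := by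
    rw [← sub_eq_zero]
    refine hq.eq_zero_of_forall_apply_sub_eq_zero hC (a := q.1 z) fun c hc => ?_
    have hlink := (linked_iff.1 (hz c hc) φ hφ).1
    have halt := apply_sub_apply_sub_of_isAlt hA b (q.1 z) (q.1 c)
    rw [hAC c hc, LinearMap.sub_apply] at hlink
    rw [LinearMap.sub_apply] at halt ⊢
    linarith
  constructor
  · rw [velocity_eq hx, velocity_eq hy]
    exact apply_sub_apply_sub_of_isAlt hA b _ _
  · obtain ⟨c, hc⟩ : C.Nonempty := by rw [← card_pos]; omega
    exact (linked_iff.1 (hx c hc) φ hφ).2.trans (linked_iff.1 (hy c hc) φ hφ).2.symm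

theorem Generic.linked_of_forall_row_mem (hq : q.Generic) (hC : #C = finrank ℝ E + 1)
    (hCC : ∀ x ∈ C, ∀ y ∈ C, q.Linked S x y) (hx : x ∉ C) (hrow : ∀ c ∈ C, q.row s(x, c) ∈ S)
    (hy : y ∈ C) : q.Linked S x y := by
  rw [linked_iff]
  intro φ hφ
  obtain ⟨A, b, hA, hAC⟩ := hq.inGeneralPosition.exists_isAlt hC
    fun x hx y hy => (linked_iff.1 (hCC x hx y hy) φ hφ).1
  have hcoprod : (velocity φ x - (A (q.1 x) + b)).coprod
      (LinearMap.toSpanSingleton ℝ ℝ (height φ x - height φ y)) = 0 := by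
    refine LinearMap.ext_on (span_image_eq_top_of_linearIndepOn
      (hq.linearIndepOn_edgeDir x C hx hC.le) (by simpa using hC)) ?_
    rintro _ ⟨c, hc, rfl⟩
    have hrowc := (mem_dualAnnihilator φ).1 hφ _ (hrow c hc)
    have halt := apply_sub_apply_sub_of_isAlt hA b (q.1 x) (q.1 c)
    rw [row_mk, apply_diffSingle, (linked_iff.1 (hCC c hc y hy) φ hφ).2, hAC c hc,
      LinearMap.sub_apply] at hrowc
    rw [LinearMap.sub_apply] at halt
    simp only [edgeDir, LinearMap.coprod_apply, LinearMap.sub_apply,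
      LinearMap.toSpanSingleton_apply, smul_eq_mul, LinearMap.zero_apply] at hrowc ⊢
    linarith
  have hvel : velocity φ x = A (q.1 x) + b := by
    simpa [sub_eq_zero] using congrArg (· ∘ₗ LinearMap.inl ℝ E ℝ) hcoprod
  constructor
  · rw [hvel, hAC y hy]
    exact apply_sub_apply_sub_of_isAlt hA b _ _
  · simpa [sub_eq_zero] using LinearMap.congr_fun hcoprod (0, 1)

end Framework

section VertexAddition

namespace Framework

variable {V E : Type*} [AddCommGroup E] [DecidableEq V]

/-- The framework `q` with the vertex `v` moved to the point `a` and the weights at `v` replaced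
by `τ`. -/
def moveTo (q : Framework V E) (v : V) (a : E) (τ : V → ℝ) : Framework V E :=
  (Function.update q.1 v a, fun x y => if x = v then τ y else if y = v then 0 else q.2 x y)

theorem edgeDir_moveTo (q : Framework V E) (a : E) (τ : V → ℝ) {v z : V} (hz : z ≠ v) :
    (q.moveTo v a τ).edgeDir v z = (a - q.1 z, τ z) := by
  simp [edgeDir, moveTo, hz]

end Framework

variable {V E M : Type*} [AddCommGroup E] [Module ℝ E] [AddCommGroup M] [Module ℝ M]

theorem InGeneralPosition.injective {p : V → E} (hp : InGeneralPosition p)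
    (hE : 0 < finrank ℝ E) : Function.Injective p := by
  classical
  intro x y hxy
  have hcard : #{x, y} ≤ finrank ℝ E + 1 := card_le_two.trans (by omega)
  exact (hp {x, y} hcard).injOn (by simp) (by simp) (by rw [hxy])

theorem InGeneralPosition.span_image_prodMk_eq_top [FiniteDimensional ℝ E] [DecidableEq V]
    {p : V → E} (hp : InGeneralPosition p) {N : Finset V} (hN : finrank ℝ E + 2 ≤ #N) {w : V}
    (hw : w ∈ N) (f : Dual ℝ E) (a : E) :
    span ℝ ((fun z => (a - p z, f (a - p z) + if z = w then 1 else 0)) '' N) = ⊤ := by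
  obtain ⟨C, hCN, hC⟩ : ∃ C ⊆ N.erase w, #C = finrank ℝ E + 1 :=
    exists_subset_card_eq (by rw [card_erase_of_mem hw]; omega)
  rw [← dualAnnihilator_eq_bot_iff, eq_bot_iff]
  intro ψ hψ
  have hψ_apply (u : E × ℝ) : ψ u = ψ (u.1, 0) + u.2 * ψ (0, 1) := by
    rw [← smul_eq_mul, ← map_smul, ← map_add]
    simp
  have hψN (z : V) (hz : z ∈ N) :
      (ψ ∘ₗ LinearMap.inl ℝ E ℝ + ψ (0, 1) • f) (a - p z) +
        (if z = w then ψ (0, 1) else 0) = 0 := by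
    have := (mem_dualAnnihilator ψ).1 hψ _ (subset_span ⟨z, hz, rfl⟩)
    rw [hψ_apply] at this
    beta_reduce at this
    simp only [LinearMap.add_apply, LinearMap.comp_apply, LinearMap.inl_apply,
      LinearMap.smul_apply, smul_eq_mul]
    split_ifs at this ⊢ <;> linarith
  have hzero : ψ ∘ₗ LinearMap.inl ℝ E ℝ + ψ (0, 1) • f = 0 :=
    hp.eq_zero_of_forall_apply_sub_eq_zero hC fun c hc => by
      simpa [ne_of_mem_erase (hCN hc)] using hψN c (mem_of_mem_erase (hCN hc))
  have hone : ψ (0, 1) = 0 := by simpa [hzero] using hψN w hw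
  rw [hone, zero_smul, add_zero] at hzero
  rw [mem_bot]
  ext u
  · exact LinearMap.congr_fun hzero u
  · exact hone

variable [DecidableEq V] {v x y z : V}

theorem diffSingle_apply_of_ne (hx : x ≠ v) (hy : y ≠ v) (u : M) : diffSingle x y u v = 0 := by
  simp [diffSingle_apply, hx.symm, hy.symm]

theorem diffSingle_apply_left (hz : z ≠ v) (u : M) : diffSingle v z u v = u := by
  simp [diffSingle_apply, hz.symm]

/-- The edges from `v` to the vertices in `N`. -/
def starEdges (v : V) (N : Finset V) : Set (Sym2 V) := (fun z => s(v, z)) '' N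

namespace Framework

variable {q : Framework V E} {F : Set (Sym2 V)} {N : Finset V}

theorem exists_diffSingle_notMem {S : Submodule ℝ (V → E × ℝ)} (hne : q.1 x ≠ q.1 y)
    (hxy : ¬ q.Linked S x y) :
    ∃ f : Dual ℝ E, diffSingle x y (q.1 x - q.1 y, f (q.1 x - q.1 y)) ∉ S := by
  by_cases hbar : diffSingle x y (q.1 x - q.1 y, (0 : ℝ)) ∈ S
  · obtain ⟨f, hf⟩ := Projective.exists_dual_eq_one ℝ (sub_ne_zero.2 hne)
    refine ⟨f, fun hmem => hxy ⟨hbar, ?_⟩⟩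
    rw [hf] at hmem
    simpa [← map_sub] using S.sub_mem hmem hbar
  · exact ⟨0, hbar⟩

theorem rowSpace_le_ker_proj (q : Framework V E) (hF : ∀ e ∈ F, v ∉ e) :
    q.rowSpace F ≤ LinearMap.ker (LinearMap.proj v : (V → E × ℝ) →ₗ[ℝ] E × ℝ) := by
  rw [rowSpace, span_le]
  rintro _ ⟨e, he, rfl⟩
  induction e with | _ x y
  have hv := hF _ he
  rw [Sym2.mem_iff, not_or] at hv
  rw [SetLike.mem_coe, LinearMap.mem_ker, LinearMap.proj_apply, row_mk]
  exact diffSingle_apply_of_ne (Ne.symm hv.1) (Ne.symm hv.2) _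

theorem span_edgeDir_le_map_proj (q : Framework V E) (F : Set (Sym2 V)) (hv : v ∉ N) :
    span ℝ (q.edgeDir v '' N) ≤ (q.rowSpace (F ∪ starEdges v N)).map
      (LinearMap.proj v : (V → E × ℝ) →ₗ[ℝ] E × ℝ) := by
  rw [span_le]
  rintro _ ⟨z, hz, rfl⟩
  refine ⟨q.row s(v, z), row_mem_rowSpace (Or.inr ⟨z, hz, rfl⟩), ?_⟩
  have hzv : z ≠ v := fun h => hv (h ▸ hz)
  rw [row_mk]
  exact diffSingle_apply_left hzv _

theorem rowSpace_moveTo (q : Framework V E) (a : E) (τ : V → ℝ) (hF : ∀ e ∈ F, v ∉ e) :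
    (q.moveTo v a τ).rowSpace F = q.rowSpace F := by
  refine congrArg (span ℝ) (Set.image_congr fun e he => ?_)
  induction e with | _ x y
  have hv := hF _ he
  rw [Sym2.mem_iff, not_or] at hv
  simp [row_mk, edgeDir, moveTo, Ne.symm hv.1, Ne.symm hv.2]

theorem row_moveTo_add_row_moveTo (q : Framework V E) (f : Dual ℝ E) {τ : V → ℝ}
    (hx : x ≠ v) (hy : y ≠ v) (hτx : τ x = f ((2⁻¹ : ℝ) • (q.1 x + q.1 y) - q.1 x))
    (hτy : τ y = f ((2⁻¹ : ℝ) • (q.1 x + q.1 y) - q.1 y)) :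
    (q.moveTo v ((2⁻¹ : ℝ) • (q.1 x + q.1 y)) τ).row s(v, x) +
        (q.moveTo v ((2⁻¹ : ℝ) • (q.1 x + q.1 y)) τ).row s(v, y) =
      (2⁻¹ : ℝ) • diffSingle x y (q.1 x - q.1 y, f (q.1 x - q.1 y)) := by
  have hmx : (2⁻¹ : ℝ) • (q.1 x + q.1 y) - q.1 x = -((2⁻¹ : ℝ) • (q.1 x - q.1 y)) := by module
  have hmy : (2⁻¹ : ℝ) • (q.1 x + q.1 y) - q.1 y = (2⁻¹ : ℝ) • (q.1 x - q.1 y) := by module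
  rw [row_mk, row_mk, edgeDir_moveTo _ _ _ hx, edgeDir_moveTo _ _ _ hy, hτx, hτy, hmx, hmy,
    map_neg, ← Prod.neg_mk, ← diffSingle_swap, diffSingle_add_diffSingle, map_smul,
    ← Prod.smul_mk, map_smul]

variable [Finite V] [FiniteDimensional ℝ E]

theorem Generic.rank_add_card_le (hq : q.Generic) (hF : ∀ e ∈ F, v ∉ e) (hv : v ∉ N)
    (hN : #N ≤ finrank ℝ E + 1) : q.rank F + #N ≤ q.rank (F ∪ starEdges v N) := by
  rw [← finrank_span_image_eq_card (hq.linearIndepOn_edgeDir v N hv hN)]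
  exact finrank_add_finrank_le_of_le_ker (q.rowSpace_mono Set.subset_union_left)
    (q.rowSpace_le_ker_proj hF) (q.span_edgeDir_le_map_proj F hv)

/-- Moving `v` to the midpoint of `x` and `y` makes a combination of the two edges `vx`, `vy` act
as an edge `xy` whose weight we are free to choose. -/
theorem Generic.rank_add_le_of_not_linked (hq : q.Generic) (hE : 0 < finrank ℝ E)
    (hF : ∀ e ∈ F, v ∉ e) (hv : v ∉ N) (hN : finrank ℝ E + 2 ≤ #N) (hx : x ∈ N) (hy : y ∈ N)
    (hxy : ¬ q.Linked (q.rowSpace F) x y) :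
    q.rank F + (finrank ℝ E + 2) ≤ q.rank (F ∪ starEdges v N) := by
  have ne_v {z : V} (hz : z ∈ N) : z ≠ v := fun h => hv (h ▸ hz)
  have hne : x ≠ y := fun h => hxy (h ▸ Linked.refl q _ x)
  obtain ⟨f, hf⟩ := exists_diffSingle_notMem ((hq.inGeneralPosition.injective hE).ne hne) hxy
  obtain ⟨w, hw, hwxy⟩ : ∃ w ∈ N, w ∉ ({x, y} : Finset V) :=
    exists_mem_notMem_of_card_lt_card (card_le_two.trans_lt (by omega))
  simp only [mem_insert, mem_singleton, not_or] at hwxy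
  let a := (2⁻¹ : ℝ) • (q.1 x + q.1 y)
  let τ : V → ℝ := fun z => f (a - q.1 z) + if z = w then 1 else 0
  let q' := q.moveTo v a τ
  set ξ := diffSingle x y (q.1 x - q.1 y, f (q.1 x - q.1 y))
  have hξ : ξ ∈ q'.rowSpace (F ∪ starEdges v N) := by
    have hsum := q.row_moveTo_add_row_moveTo f (τ := τ) (ne_v hx) (ne_v hy)
      (by simp [τ, a, Ne.symm hwxy.1]) (by simp [τ, a, Ne.symm hwxy.2])
    rw [← smul_mem_iff _ (by norm_num : (2⁻¹ : ℝ) ≠ 0), ← hsum]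
    exact add_mem (row_mem_rowSpace (Or.inr ⟨x, hx, rfl⟩)) (row_mem_rowSpace (Or.inr ⟨y, hy, rfl⟩))
  have hdir : span ℝ (q'.edgeDir v '' N) = ⊤ := by
    rw [← hq.inGeneralPosition.span_image_prodMk_eq_top hN hw f a]
    exact congrArg (span ℝ) (Set.image_congr fun z hz => q.edgeDir_moveTo a τ (ne_v hz))
  calc q.rank F + (finrank ℝ E + 2)
      = finrank ℝ ↥(q.rowSpace F ⊔ span ℝ {ξ}) + finrank ℝ (span ℝ (q'.edgeDir v '' N)) := by
        rw [finrank_sup_span_singleton hf, hdir, finrank_top, finrank_prod, finrank_self, rank]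
        omega
    _ ≤ q'.rank (F ∪ starEdges v N) := by
        refine finrank_add_finrank_le_of_le_ker (sup_le ?_ ?_) (sup_le ?_ ?_)
          (q'.span_edgeDir_le_map_proj F hv)
        · rw [← q.rowSpace_moveTo a τ hF]
          exact q'.rowSpace_mono Set.subset_union_left
        · exact (span_singleton_le_iff_mem _ _).2 hξ
        · exact q.rowSpace_le_ker_proj hF
        · exact (span_singleton_le_iff_mem _ _).2 (diffSingle_apply_of_ne (ne_v hx) (ne_v hy) _)
    _ ≤ q.rank (F ∪ starEdges v N) := hq.rank_le _ q'

end Framework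

end VertexAddition

section VertexOrder

variable {V : Type*}

/-- The number of elements of `K` that precede `v` in the vertex order `o`. -/
def position (o : V → ℕ) (K : Finset V) (v : V) : ℕ := #{w ∈ K | o w < o v}

theorem position_lt_position {o : V → ℕ} {K : Finset V} {u v : V} (hu : u ∈ K) (huv : o u < o v) :
    position o K u < position o K v :=
  card_lt_card <| (ssubset_iff_of_subset <|
    monotone_filter_right K fun _ _ hw => hw.trans huv).2 ⟨u, by simp [hu, huv], by simp⟩

theorem position_injOn {o : V → ℕ} (ho : Function.Injective o) (K : Finset V) :
    Set.InjOn (position o K) K := by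
  intro u hu v hv huv
  by_contra hne
  rcases lt_or_gt_of_ne (ho.ne hne) with h | h
  · exact (position_lt_position hu h).ne huv
  · exact (position_lt_position hv h).ne huv.symm

theorem position_lt_card (o : V → ℕ) {K : Finset V} {v : V} (hv : v ∈ K) :
    position o K v < #K :=
  card_lt_card <| filter_ssubset.2 ⟨v, hv, lt_irrefl _⟩

theorem image_position {o : V → ℕ} (ho : Function.Injective o) (K : Finset V) :
    K.image (position o K) = range #K := by
  refine eq_of_subset_of_card_le (fun j hj => ?_) ?_
  · obtain ⟨v, hv, rfl⟩ := mem_image.1 hj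
    exact mem_range.2 (position_lt_card o hv)
  · rw [card_range, card_image_of_injOn (position_injOn ho K)]

theorem sum_position {o : V → ℕ} (ho : Function.Injective o) (K : Finset V) (f : ℕ → ℕ) :
    ∑ v ∈ K, f (position o K v) = ∑ j ∈ range #K, f j := by
  rw [← image_position ho, sum_image (position_injOn ho K)]

theorem position_comp_perm (o : V → ℕ) {K : Finset V} {σ : Equiv.Perm V}
    (hσ : ∀ w, σ w ∈ K ↔ w ∈ K) (v : V) :
    position (o ∘ σ) K v = position o K (σ v) := by
  refine card_equiv σ fun w => ?_
  simp [hσ]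

section Perm

variable [DecidableEq V]

theorem swap_mem_iff {K : Finset V} {u v : V} (hu : u ∈ K) (hv : v ∈ K) (w : V) :
    Equiv.swap u v w ∈ K ↔ w ∈ K := by
  rw [Equiv.swap_apply_def]
  split_ifs with h₁ h₂ <;> simp_all

theorem position_insert (o : V → ℕ) (K : Finset V) (v : V) :
    position o (insert v K) v = position o K v := by
  simp [position, filter_insert]

variable [Fintype V]

theorem card_mul_sum_perm_position {o : V → ℕ} (ho : Function.Injective o) {K : Finset V} {v : V}
    (hv : v ∈ K) (f : ℕ → ℕ) :
    #K * ∑ π : Equiv.Perm V, f (position (o ∘ π) K v) =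
      Fintype.card (Equiv.Perm V) * ∑ j ∈ range #K, f j := by
  have hswap (u : V) (hu : u ∈ K) : ∑ π : Equiv.Perm V, f (position (o ∘ π) K u) =
      ∑ π : Equiv.Perm V, f (position (o ∘ π) K v) := by
    rw [← Equiv.sum_comp (Equiv.mulRight (Equiv.swap u v))]
    refine sum_congr rfl fun π _ => congrArg f ?_
    exact (position_comp_perm (o ∘ π) (swap_mem_iff hu hv) u).trans (by simp)
  calc #K * ∑ π : Equiv.Perm V, f (position (o ∘ π) K v)
      = ∑ u ∈ K, ∑ π : Equiv.Perm V, f (position (o ∘ π) K u) := by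
        rw [sum_congr rfl hswap, sum_const, smul_eq_mul]
    _ = ∑ π : Equiv.Perm V, ∑ u ∈ K, f (position (o ∘ π) K u) := sum_comm
    _ = Fintype.card (Equiv.Perm V) * ∑ j ∈ range #K, f j := by
        simp only [sum_position (ho.comp (Equiv.injective _)), sum_const, card_univ, smul_eq_mul]

theorem three_mul_card_perm_lt_and_lt {o : V → ℕ} (ho : Function.Injective o) {v x y : V}
    (hx : x ≠ v) (hy : y ≠ v) (hxy : x ≠ y) :
    3 * #{π : Equiv.Perm V | o (π x) < o (π v) ∧ o (π y) < o (π v)} =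
      Fintype.card (Equiv.Perm V) := by
  have hcard : #{v, x, y} = 3 := card_eq_three.2 ⟨v, x, y, hx.symm, hy.symm, hxy, rfl⟩
  have hpos (π : Equiv.Perm V) : (o (π x) < o (π v) ∧ o (π y) < o (π v)) ↔
      position (o ∘ π) {v, x, y} v = 2 := by
    by_cases h₁ : o (π x) < o (π v) <;> by_cases h₂ : o (π y) < o (π v) <;>
      simp [position, filter_insert, filter_singleton, h₁, h₂, hxy]
  have hmean := card_mul_sum_perm_position ho (mem_insert_self v {x, y}) (if · = 2 then 1 else 0)
  simp only [hpos, card_filter]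
  rw [← hcard, hmean, hcard]
  simp

theorem sum_range_tsub_mul_two_le (D m : ℕ) : (∑ j ∈ range m, (D - j)) * 2 ≤ D * (D + 1) := by
  induction m generalizing D with
  | zero => simp
  | succ m ih =>
    rw [sum_range_succ']
    cases D with
    | zero => simp
    | succ D =>
      have := ih D
      simp only [Nat.add_sub_add_right, tsub_zero]
      nlinarith

theorem sum_perm_tsub_position_le {o : V → ℕ} (ho : Function.Injective o) {D : ℕ} {N : Finset V}
    {v x y : V} (hv : v ∉ N) (hx : x ∈ N) (hy : y ∈ N) (hxy : x ≠ y)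
    (hN : 3 * (D * (D + 1)) ≤ 2 * (#N + 1)) :
    ∑ π : Equiv.Perm V, (D - position (o ∘ π) N v) ≤
      #{π : Equiv.Perm V | o (π x) < o (π v) ∧ o (π y) < o (π v)} := by
  have ne_v {z : V} (hz : z ∈ N) : z ≠ v := fun h => hv (h ▸ hz)
  have hlast := three_mul_card_perm_lt_and_lt ho (ne_v hx) (ne_v hy) hxy
  have hmean := card_mul_sum_perm_position ho (mem_insert_self v N) (D - ·)
  simp only [position_insert, card_insert_of_notMem hv] at hmean
  have hgauss := sum_range_tsub_mul_two_le D (#N + 1)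
  refine Nat.le_of_mul_le_mul_left ?_ (Nat.succ_pos #N)
  rw [Nat.succ_eq_add_one, hmean, ← hlast]
  nlinarith

end Perm

theorem exists_injective_sum_tsub_position_le [Finite V] {D : ℕ} {R : Finset V} {N : V → Finset V}
    {x y : V → V} (hv : ∀ v ∈ R, v ∉ N v) (hx : ∀ v ∈ R, x v ∈ N v) (hy : ∀ v ∈ R, y v ∈ N v)
    (hxy : ∀ v ∈ R, x v ≠ y v) (hN : ∀ v ∈ R, 3 * (D * (D + 1)) ≤ 2 * (#(N v) + 1)) :
    ∃ o : V → ℕ, Function.Injective o ∧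
      ∑ v ∈ R, (D - position o (N v) v) ≤ #{v ∈ R | o (x v) < o v ∧ o (y v) < o v} := by
  classical
  have := Fintype.ofFinite V
  let o : V → ℕ := fun v => Fintype.equivFin V v
  have ho : Function.Injective o := Fin.val_injective.comp (Fintype.equivFin V).injective
  obtain ⟨π, -, hπ⟩ : ∃ π ∈ (univ : Finset (Equiv.Perm V)),
      ∑ v ∈ R, (D - position (o ∘ π) (N v) v) ≤
        #{v ∈ R | o (π (x v)) < o (π v) ∧ o (π (y v)) < o (π v)} := by
    refine exists_le_of_sum_le univ_nonempty ?_
    simp only [card_filter]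
    rw [sum_comm, sum_comm (s := univ) (t := R)]
    refine sum_le_sum fun v hvR => ?_
    rw [← card_filter]
    exact sum_perm_tsub_position_le ho (hv v hvR) (hx v hvR) (hy v hvR) (hxy v hvR) (hN v hvR)
  exact ⟨o ∘ π, ho.comp π.injective, hπ⟩

end VertexOrder

section RankLowerBound

/-- The edges of `H` with both ends in `B`. -/
def edgesWithin {V : Type*} (H : SimpleGraph V) (B : Finset V) : Set (Sym2 V) :=
  {e ∈ H.edgeSet | ∀ v ∈ e, v ∈ B}

variable {V E : Type*} [AddCommGroup E] [Module ℝ E] [DecidableEq V]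
  {H : SimpleGraph V} {B N : Finset V} {v x y : V}

theorem edgesWithin_union_starEdges_subset (hNB : N ⊆ B) (hadj : ∀ z ∈ N, H.Adj v z) :
    edgesWithin H B ∪ starEdges v N ⊆ edgesWithin H (insert v B) := by
  rintro _ (⟨he, heB⟩ | ⟨z, hz, rfl⟩)
  · exact ⟨he, fun w hw => mem_insert_of_mem (heB w hw)⟩
  · exact ⟨hadj z hz, by simp [hNB hz]⟩

namespace Framework

variable [Finite V] [FiniteDimensional ℝ E] {q : Framework V E}

theorem rank_mono (q : Framework V E) {F F' : Set (Sym2 V)} (h : F ⊆ F') : q.rank F ≤ q.rank F' :=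
  finrank_mono (q.rowSpace_mono h)

theorem Generic.rank_edgesWithin_add_card_le (hq : q.Generic) (hv : v ∉ B) (hNB : N ⊆ B)
    (hadj : ∀ z ∈ N, H.Adj v z) (hN : #N ≤ finrank ℝ E + 1) :
    q.rank (edgesWithin H B) + #N ≤ q.rank (edgesWithin H (insert v B)) :=
  (hq.rank_add_card_le (fun _ he hve => hv (he.2 v hve)) (fun h => hv (hNB h)) hN).trans
    (q.rank_mono (edgesWithin_union_starEdges_subset hNB hadj))

theorem Generic.rank_edgesWithin_add_le_of_not_linked (hq : q.Generic) (hE : 0 < finrank ℝ E)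
    (hv : v ∉ B) (hNB : N ⊆ B) (hadj : ∀ z ∈ N, H.Adj v z) (hN : finrank ℝ E + 2 ≤ #N)
    (hx : x ∈ N) (hy : y ∈ N) (hxy : ¬ q.Linked (q.rowSpace H.edgeSet) x y) :
    q.rank (edgesWithin H B) + (finrank ℝ E + 2) ≤ q.rank (edgesWithin H (insert v B)) :=
  (hq.rank_add_le_of_not_linked hE (fun _ he hve => hv (he.2 v hve)) (fun h => hv (hNB h)) hN hx hy
    fun h => hxy (h.mono (q.rowSpace_mono fun _ he => he.1))).trans
    (q.rank_mono (edgesWithin_union_starEdges_subset hNB hadj))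

theorem Generic.rank_edgesWithin_add_le (hq : q.Generic) (hE : 0 < finrank ℝ E)
    (hv : v ∉ B) (hNB : N ⊆ B) (hadj : ∀ z ∈ N, H.Adj v z)
    (hxy : ¬ q.Linked (q.rowSpace H.edgeSet) x y) :
    q.rank (edgesWithin H B) + ((finrank ℝ E + 1) + if x ∈ N ∧ y ∈ N then 1 else 0) ≤
      q.rank (edgesWithin H (insert v B)) + (finrank ℝ E + 2 - #N) := by
  rcases Nat.lt_or_ge #N (finrank ℝ E + 2) with hsmall | hlarge
  · have := hq.rank_edgesWithin_add_card_le hv hNB hadj (by omega)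
    split_ifs <;> omega
  · split_ifs with hmem
    · have := hq.rank_edgesWithin_add_le_of_not_linked hE hv hNB hadj hlarge hmem.1 hmem.2 hxy
      omega
    · obtain ⟨C, hCN, hC⟩ : ∃ C ⊆ N, #C = finrank ℝ E + 1 := exists_subset_card_eq (by omega)
      have := hq.rank_edgesWithin_add_card_le hv (hCN.trans hNB) (fun z hz => hadj z (hCN hz)) hC.le
      omega

theorem Generic.card_mul_add_card_le (hq : q.Generic) (hE : 0 < finrank ℝ E) {o : V → ℕ}
    (ho : Function.Injective o) {R : Finset V} {N : V → Finset V} {x y : V → V}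
    (hadj : ∀ v ∈ R, ∀ z ∈ N v, H.Adj v z) (hNR : ∀ v ∈ R, ∀ z ∈ N v, o z < o v → z ∈ R)
    (hx : ∀ v ∈ R, x v ∈ N v) (hy : ∀ v ∈ R, y v ∈ N v)
    (hxy : ∀ v ∈ R, ¬ q.Linked (q.rowSpace H.edgeSet) (x v) (y v)) :
    #R * (finrank ℝ E + 1) + #{v ∈ R | o (x v) < o v ∧ o (y v) < o v} ≤
      q.rank (edgesWithin H R) + ∑ v ∈ R, (finrank ℝ E + 2 - position o (N v) v) := by
  induction R using Finset.induction_on_max_value o with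
  | empty => simp
  | insert a R haR hmax ih =>
    simp only [forall_mem_insert] at hadj hNR hx hy hxy
    have hlt (z : V) (hz : z ∈ R) : o z < o a :=
      lt_of_le_of_ne (hmax z hz) (ho.ne fun h => haR (h ▸ hz))
    have ih := ih hadj.2 (fun v hv z hz hzv => mem_of_mem_insert_of_ne (hNR.2 v hv z hz hzv)
      fun h => (hlt v hv).not_gt (h ▸ hzv)) hx.2 hy.2 hxy.2
    have hstep := hq.rank_edgesWithin_add_le hE haR (N := {z ∈ N a | o z < o a})
      (fun z hz => mem_of_mem_insert_of_ne (hNR.1 z (mem_filter.1 hz).1 (mem_filter.1 hz).2)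
        fun h => (h ▸ (mem_filter.1 hz).2).false)
      (fun z hz => hadj.1 z (mem_filter.1 hz).1) hxy.1
    simp only [mem_filter, hx.1, hy.1, true_and] at hstep
    change _ ≤ _ + (finrank ℝ E + 2 - position o (N a) a) at hstep
    rw [card_filter] at ih ⊢
    rw [sum_insert haR, sum_insert haR, card_insert_of_notMem haR]
    linarith

theorem Generic.card_mul_le_rank_edgesWithin (hq : q.Generic) (hE : 0 < finrank ℝ E) {R : Finset V}
    {N : V → Finset V} (hadj : ∀ v ∈ R, ∀ z ∈ N v, H.Adj v z) (hNR : ∀ v ∈ R, N v ⊆ R)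
    (hN : ∀ v ∈ R, 3 * ((finrank ℝ E + 2) * (finrank ℝ E + 3)) ≤ 2 * (#(N v) + 1))
    (hlinked : ∀ v ∈ R, ∃ x ∈ N v, ∃ y ∈ N v, ¬ q.Linked (q.rowSpace H.edgeSet) x y) :
    #R * (finrank ℝ E + 1) ≤ q.rank (edgesWithin H R) := by
  choose! x hx y hy hxy using hlinked
  obtain ⟨o, ho, hsum⟩ := exists_injective_sum_tsub_position_le
    (fun v hv hvN => (hadj v hv v hvN).ne rfl) hx hy
    (fun v hv h => hxy v hv (h ▸ Linked.refl q _ (x v))) hN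
  have := hq.card_mul_add_card_le hE ho hadj (fun v hv z hz _ => hNR v hv hz) hx hy hxy
  omega

end Framework

end RankLowerBound

section Connectivity

variable {V : Type*} {G H : SimpleGraph V} {k : ℕ}

theorem KConnected.mono (hGH : G ≤ H) (hG : KConnected G k) : KConnected H k :=
  ⟨hG.1, fun X hX hXk => (hG.2 X hX hXk).mono (SimpleGraph.comap_monotone _ hGH)⟩

theorem KConnected.le_card_of_separates (hG : KConnected G k) {P : Set V} {X : Finset V}
    (hP : ∀ a ∈ P, ∀ b, G.Adj a b → b ∈ P ∨ b ∈ X) {p w : V} (hpP : p ∈ P) (hpX : p ∉ X)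
    (hwP : w ∉ P) (hwX : w ∉ X) : k ≤ #X := by
  by_contra! hlt
  have hconn := hG.2 X X.finite_toSet (by rwa [Set.ncard_coe_finset])
  obtain ⟨W⟩ := hconn.preconnected ⟨p, hpX⟩ ⟨w, hwX⟩
  obtain ⟨e, -, hfst, hsnd⟩ := W.exists_boundary_dart (Subtype.val ⁻¹' P) hpP hwP
  exact (hP _ hfst _ e.adj).elim hsnd e.snd.2

theorem KConnected.le_degree [Fintype V] [DecidableRel G.Adj] (hG : KConnected G k) (v : V) :
    k ≤ G.degree v := by
  classical
  by_contra! hlt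
  obtain ⟨w, -, hw⟩ : ∃ w ∈ univ, w ∉ insert v (G.neighborFinset v) := by
    refine exists_mem_notMem_of_card_lt_card ((card_insert_le _ _).trans_lt ?_)
    have := hG.1
    rw [G.card_neighborFinset_eq_degree, card_univ, ← Nat.card_eq_fintype_card]
    omega
  rw [mem_insert, not_or] at hw
  refine hlt.not_ge (hG.le_card_of_separates (P := {v}) ?_ rfl (by simp) hw.1 hw.2)
  rintro _ rfl b hb
  exact Or.inr ((G.mem_neighborFinset _ b).2 hb)

end Connectivity

namespace Framework

variable {V E : Type*} [AddCommGroup E] [Module ℝ E] [DecidableEq V]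
  {q : Framework V E} {H : SimpleGraph V} {k : ℕ} {a b s v x y : V}

/-- Any two distinct vertices that are linked by the rows of `H` are adjacent in `H`. -/
def LinkClosed (q : Framework V E) (H : SimpleGraph V) : Prop :=
  ∀ x y, x ≠ y → q.Linked (q.rowSpace H.edgeSet) x y → H.Adj x y

/-- The neighbours of `v` are pairwise linked by the rows of `H`. For link-closed `H` this makes
the neighbourhood of `v` a clique. -/
def Simplicial (q : Framework V E) (H : SimpleGraph V) (v : V) : Prop :=
  ∀ a b, H.Adj v a → H.Adj v b → q.Linked (q.rowSpace H.edgeSet) a b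

variable [Fintype V]

open Classical in
/-- The neighbours of `v` in `H` that are not simplicial. -/
noncomputable def nonsimplicialNeighbors (q : Framework V E) (H : SimpleGraph V) (v : V) :
    Finset V := {z | H.Adj v z ∧ ¬ q.Simplicial H z}

theorem mem_nonsimplicialNeighbors :
    a ∈ q.nonsimplicialNeighbors H v ↔ H.Adj v a ∧ ¬ q.Simplicial H a := by
  simp [nonsimplicialNeighbors]

theorem erase_nonsimplicialNeighbors_subset (hH : q.LinkClosed H) (hs : q.Simplicial H s)
    (hvs : H.Adj v s) :
    (q.nonsimplicialNeighbors H s).erase v ⊆ q.nonsimplicialNeighbors H v := by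
  intro r hr
  rw [mem_erase, mem_nonsimplicialNeighbors] at hr
  exact mem_nonsimplicialNeighbors.2 ⟨hH v r hr.1.symm (hs v r hvs.symm hr.2.1), hr.2.2⟩

variable [FiniteDimensional ℝ E]

theorem Generic.linked_of_simplicial [DecidableRel H.Adj] (hq : q.Generic)
    (hdeg : finrank ℝ E + 1 ≤ H.degree s) (hs : q.Simplicial H s) (ha : H.Adj s a) :
    q.Linked (q.rowSpace H.edgeSet) s a := by
  obtain ⟨C, hCs, hC⟩ := exists_subset_card_eq hdeg
  have hadj (c : V) (hc : c ∈ C) : H.Adj s c := (H.mem_neighborFinset s c).1 (hCs hc)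
  have hCC (x : V) (hx : x ∈ C) (y : V) (hy : y ∈ C) := hs x y (hadj x hx) (hadj y hy)
  refine linked_of_forall_linked hq.inGeneralPosition hC hCC (fun c hc => ?_)
    fun c hc => hs a c ha (hadj c hc)
  exact hq.linked_of_forall_row_mem hC hCC (fun hsC => (hadj s hsC).ne rfl)
    (fun c hc => row_mem_rowSpace (hadj c hc)) hc

theorem Generic.linked_of_simplicial_of_closedNeighbor [DecidableRel H.Adj] (hq : q.Generic)
    (hdeg : finrank ℝ E + 1 ≤ H.degree s) (hs : q.Simplicial H s) (ha : a = s ∨ H.Adj s a)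
    (hb : b = s ∨ H.Adj s b) : q.Linked (q.rowSpace H.edgeSet) a b := by
  rcases ha with rfl | ha <;> rcases hb with rfl | hb
  · exact Linked.refl q _ _
  · exact hq.linked_of_simplicial hdeg hs hb
  · exact (hq.linked_of_simplicial hdeg hs ha).symm
  · exact hs a b ha hb

theorem Generic.le_card_nonsimplicialNeighbors (hq : q.Generic) (hcl : q.LinkClosed H)
    (hH : KConnected H k) (hk : finrank ℝ E + 1 ≤ k)
    (hxy : ¬ q.Linked (q.rowSpace H.edgeSet) x y) (hs : q.Simplicial H s) :
    k ≤ #(q.nonsimplicialNeighbors H s) := by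
  classical
  obtain ⟨w, hw⟩ : ∃ w, ¬ (w = s ∨ H.Adj s w) := by
    by_contra! hall
    exact hxy (hq.linked_of_simplicial_of_closedNeighbor (hk.trans (hH.le_degree s)) hs
      (hall x) (hall y))
  refine hH.le_card_of_separates (P := {b | (b = s ∨ H.Adj s b) ∧ q.Simplicial H b}) ?_
    ⟨Or.inl rfl, hs⟩ (fun h => (mem_nonsimplicialNeighbors.1 h).2 hs) (fun h => hw h.1)
    (fun h => hw (Or.inr (mem_nonsimplicialNeighbors.1 h).1))
  rintro a ⟨has, ha⟩ b hab
  have hbs : b = s ∨ H.Adj s b := by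
    rcases has with rfl | has
    · exact Or.inr hab
    · exact or_iff_not_imp_left.2 fun hne => hcl s b (Ne.symm hne) (ha s b has.symm hab)
  by_cases hb : q.Simplicial H b
  · exact Or.inl ⟨hbs, hb⟩
  · exact Or.inr (mem_nonsimplicialNeighbors.2
      ⟨hbs.resolve_left fun h => hb (h ▸ hs), hb⟩)

theorem Generic.le_card_nonsimplicialNeighbors_add_one (hq : q.Generic) (hcl : q.LinkClosed H)
    (hH : KConnected H k) (hk : finrank ℝ E + 1 ≤ k)
    (hxy : ¬ q.Linked (q.rowSpace H.edgeSet) x y) (v : V) :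
    k ≤ #(q.nonsimplicialNeighbors H v) + 1 := by
  classical
  by_cases hsimp : ∃ s, q.Simplicial H s ∧ H.Adj v s
  · obtain ⟨s, hs, hvs⟩ := hsimp
    have hk_le := hq.le_card_nonsimplicialNeighbors hcl hH hk hxy hs
    have herase := card_le_card (erase_nonsimplicialNeighbors_subset hcl hs hvs)
    have := pred_card_le_card_erase (s := q.nonsimplicialNeighbors H s) (a := v)
    omega
  · have hsub : H.neighborFinset v ⊆ q.nonsimplicialNeighbors H v := fun z hz =>
      have hvz := (H.mem_neighborFinset v z).1 hz
      mem_nonsimplicialNeighbors.2 ⟨hvz, fun hz => hsimp ⟨z, hz, hvz⟩⟩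
    exact (hH.le_degree v).trans ((card_le_card hsub).trans (Nat.le_succ _))

theorem Generic.linked_of_simplicial_of_forall_linked (hq : q.Generic) (hcl : q.LinkClosed H)
    (hH : KConnected H k) (hk : finrank ℝ E + 2 ≤ k)
    (hxy : ¬ q.Linked (q.rowSpace H.edgeSet) x y)
    (hv : ∀ x ∈ q.nonsimplicialNeighbors H v, ∀ y ∈ q.nonsimplicialNeighbors H v,
      q.Linked (q.rowSpace H.edgeSet) x y)
    (ha : q.Simplicial H a) (hva : H.Adj v a) (hb : b ∈ q.nonsimplicialNeighbors H v) :
    q.Linked (q.rowSpace H.edgeSet) a b := by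
  classical
  have hk_le := hq.le_card_nonsimplicialNeighbors hcl hH (by omega) hxy ha
  obtain ⟨C, hCa, hC⟩ : ∃ C ⊆ (q.nonsimplicialNeighbors H a).erase v, #C = finrank ℝ E + 1 :=
    exists_subset_card_eq ((Nat.le_sub_one_of_lt (by omega)).trans pred_card_le_card_erase)
  have hCv := hCa.trans (erase_nonsimplicialNeighbors_subset hcl ha hva)
  refine linked_of_forall_linked hq.inGeneralPosition hC
    (fun x hx y hy => hv x (hCv hx) y (hCv hy)) (fun c hc => ?_) fun c hc => hv b hb c (hCv hc)
  exact hq.linked_of_simplicial (le_trans (by omega) (hH.le_degree a)) ha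
    (mem_nonsimplicialNeighbors.1 (mem_of_mem_erase (hCa hc))).1

theorem Generic.exists_not_linked_of_not_simplicial (hq : q.Generic) (hcl : q.LinkClosed H)
    (hH : KConnected H k) (hk : finrank ℝ E + 2 ≤ k) (hv : ¬ q.Simplicial H v) :
    ∃ x ∈ q.nonsimplicialNeighbors H v, ∃ y ∈ q.nonsimplicialNeighbors H v,
      ¬ q.Linked (q.rowSpace H.edgeSet) x y := by
  by_contra! hall
  obtain ⟨x, y, -, -, hxy⟩ : ∃ x y, H.Adj v x ∧ H.Adj v y ∧
      ¬ q.Linked (q.rowSpace H.edgeSet) x y := by simpa [Simplicial] using hv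
  have hcard := hq.le_card_nonsimplicialNeighbors_add_one hcl hH (by omega) hxy v
  obtain ⟨C, hCv, hC⟩ : ∃ C ⊆ q.nonsimplicialNeighbors H v, #C = finrank ℝ E + 1 :=
    exists_subset_card_eq (by omega)
  have hlinked (a : V) (ha : H.Adj v a) (c : V) (hc : c ∈ C) :
      q.Linked (q.rowSpace H.edgeSet) a c := by
    by_cases has : q.Simplicial H a
    · exact hq.linked_of_simplicial_of_forall_linked hcl hH hk hxy hall has ha (hCv hc)
    · exact hall a (mem_nonsimplicialNeighbors.2 ⟨ha, has⟩) c (hCv hc)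
  exact hv fun a b ha hb => linked_of_forall_linked hq.inGeneralPosition hC
    (fun x hx y hy => hall x (hCv hx) y (hCv hy)) (hlinked a ha) (hlinked b hb)

end Framework

namespace Framework

variable {V E : Type*} [AddCommGroup E] [Module ℝ E] [DecidableEq V]
  {q : Framework V E} {H : SimpleGraph V} {k : ℕ} {x y : V}

theorem rank_lt [Finite V] [Nonempty V] [FiniteDimensional ℝ E] (q : Framework V E)
    (F : Set (Sym2 V)) : q.rank F < Nat.card V * (finrank ℝ E + 1) := by
  have := Fintype.ofFinite V
  have hdim : Nat.card V * (finrank ℝ E + 1) = finrank ℝ (V → E × ℝ) := by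
    simp [finrank_pi_fintype]
  let heightSum : Dual ℝ (V → E × ℝ) := ∑ v, LinearMap.snd ℝ E ℝ ∘ₗ LinearMap.proj v
  have hsingle (v : V) (u : E × ℝ) : heightSum (Pi.single v u) = u.2 := by
    simp [heightSum, Pi.single_apply, apply_ite Prod.snd]
  have hrow : q.rowSpace F ≤ LinearMap.ker heightSum := by
    rw [rowSpace, span_le]
    rintro _ ⟨e, -, rfl⟩
    induction e with | _ x y
    rw [SetLike.mem_coe, LinearMap.mem_ker, row_mk, diffSingle_apply, map_sub, hsingle, hsingle,
      sub_self]
  rw [hdim]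
  refine finrank_lt fun htop => ?_
  obtain ⟨v⟩ := ‹Nonempty V›
  have hker : Pi.single v ((0 : E), (1 : ℝ)) ∈ LinearMap.ker heightSum :=
    hrow (htop ▸ mem_top)
  rw [LinearMap.mem_ker, hsingle] at hker
  exact one_ne_zero hker

theorem Generic.card_mul_le_rank_edgesWithin_union [Finite V] [FiniteDimensional ℝ E]
    (hq : q.Generic) {R T : Finset V} {N : V → Finset V} (hRT : Disjoint R T)
    (hadj : ∀ v ∈ T, ∀ z ∈ N v, H.Adj v z) (hNR : ∀ v ∈ T, N v ⊆ R)
    (hN : ∀ v ∈ T, finrank ℝ E + 1 ≤ #(N v))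
    (hR : #R * (finrank ℝ E + 1) ≤ q.rank (edgesWithin H R)) :
    #(T ∪ R) * (finrank ℝ E + 1) ≤ q.rank (edgesWithin H (T ∪ R)) := by
  induction T using Finset.induction_on with
  | empty => simpa using hR
  | insert s T hsT ih =>
    rw [disjoint_insert_right] at hRT
    simp only [forall_mem_insert] at hadj hNR hN
    have hs : s ∉ T ∪ R := by simp [hsT, hRT.1]
    obtain ⟨C, hCs, hC⟩ := exists_subset_card_eq hN.1
    have hstep := hq.rank_edgesWithin_add_card_le hs
      (hCs.trans (hNR.1.trans subset_union_right)) (fun z hz => hadj.1 z (hCs hz)) hC.le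
    have := ih hRT.2 hadj.2 hNR.2 hN.2
    rw [insert_union, card_insert_of_notMem hs]
    linarith

theorem Generic.linked_of_linkClosed [Finite V] [FiniteDimensional ℝ E] (hq : q.Generic)
    (hE : 0 < finrank ℝ E) (hcl : q.LinkClosed H) (hH : KConnected H k)
    (hk : 3 * ((finrank ℝ E + 2) * (finrank ℝ E + 3)) ≤ 2 * k) (x y : V) :
    q.Linked (q.rowSpace H.edgeSet) x y := by
  classical
  have := Fintype.ofFinite V
  by_contra hxy
  have hkE : finrank ℝ E + 2 ≤ k := by nlinarith
  let R : Finset V := {v | ¬ q.Simplicial H v}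
  have hadj (v z : V) (hz : z ∈ q.nonsimplicialNeighbors H v) : H.Adj v z :=
    (mem_nonsimplicialNeighbors.1 hz).1
  have hNR (v : V) : q.nonsimplicialNeighbors H v ⊆ R := fun z hz =>
    mem_filter.2 ⟨mem_univ z, (mem_nonsimplicialNeighbors.1 hz).2⟩
  have hrankR : #R * (finrank ℝ E + 1) ≤ q.rank (edgesWithin H R) := by
    refine hq.card_mul_le_rank_edgesWithin hE (fun v _ => hadj v) (fun v _ => hNR v)
      (fun v _ => ?_) fun v hv => ?_
    · have := hq.le_card_nonsimplicialNeighbors_add_one hcl hH (by omega) hxy v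
      omega
    · exact hq.exists_not_linked_of_not_simplicial hcl hH hkE (mem_filter.1 hv).2
  have hrank := hq.card_mul_le_rank_edgesWithin_union (T := Rᶜ) disjoint_compl_right
    (fun v _ => hadj v) (fun v _ => hNR v) (fun s hs => ?_) hrankR
  · rw [union_comm, union_compl, card_univ, ← Nat.card_eq_fintype_card] at hrank
    have : Nonempty V := ⟨x⟩
    exact (q.rank_lt _).not_ge hrank
  · have hs : q.Simplicial H s := by simpa [R] using hs
    have := hq.le_card_nonsimplicialNeighbors hcl hH (by omega) hxy hs
    omega

/-- The graph on `V` of all edges whose row is spanned by the rows of `G`. -/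
def closureGraph (q : Framework V E) (G : SimpleGraph V) : SimpleGraph V :=
  .fromEdgeSet {e | q.row e ∈ q.rowSpace G.edgeSet}

variable {G : SimpleGraph V}

theorem le_closureGraph (q : Framework V E) (G : SimpleGraph V) : G ≤ q.closureGraph G :=
  fun _ _ h => (SimpleGraph.fromEdgeSet_adj _).2 ⟨row_mem_rowSpace h, h.ne⟩

theorem rowSpace_closureGraph (q : Framework V E) (G : SimpleGraph V) :
    q.rowSpace (q.closureGraph G).edgeSet = q.rowSpace G.edgeSet := by
  refine le_antisymm (span_le.2 ?_)
    (q.rowSpace_mono (SimpleGraph.edgeSet_mono (q.le_closureGraph G)))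
  rintro _ ⟨e, he, rfl⟩
  rw [closureGraph, SimpleGraph.edgeSet_fromEdgeSet] at he
  exact he.1

theorem linkClosed_closureGraph (q : Framework V E) (G : SimpleGraph V) :
    q.LinkClosed (q.closureGraph G) := by
  intro x y hne hxy
  rw [rowSpace_closureGraph] at hxy
  exact (SimpleGraph.fromEdgeSet_adj _).2 ⟨hxy.row_mem, hne⟩

theorem Generic.linked_of_kConnected [Finite V] [FiniteDimensional ℝ E] (hq : q.Generic)
    (hE : 0 < finrank ℝ E) (hG : KConnected G k)
    (hk : 3 * ((finrank ℝ E + 2) * (finrank ℝ E + 3)) ≤ 2 * k) (x y : V) :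
    q.Linked (q.rowSpace G.edgeSet) x y := by
  rw [← rowSpace_closureGraph]
  exact hq.linked_of_linkClosed hE (q.linkClosed_closureGraph G) (hG.mono (q.le_closureGraph G))
    hk x y

end Framework

section Rigidity

variable {V E : Type*} [AddCommGroup E] [Module ℝ E] {p : V → E} {H : SimpleGraph V} {x y : V}

/-- Every infinitesimal motion of the bar framework `(H, p)` preserves all distances between
vertices to first order. Velocities are taken in the dual of `E`. -/
def InfinitesimallyRigid (p : V → E) (H : SimpleGraph V) : Prop :=
  ∀ m : V → Dual ℝ E, (∀ x y, H.Adj x y → (m x - m y) (p x - p y) = 0) →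
    ∀ x y, (m x - m y) (p x - p y) = 0

/-- The velocity field of an infinitesimal rotation which fixes the common zeros of the affine
functions `α (·, 1)` and `β (·, 1)`. -/
def infinitesimalRotation (α β : Dual ℝ (E × ℝ)) (u : E) : Dual ℝ E :=
  β (u, 1) • α ∘ₗ LinearMap.inl ℝ E ℝ - α (u, 1) • β ∘ₗ LinearMap.inl ℝ E ℝ

theorem infinitesimalRotation_left_apply_sub (α β : Dual ℝ (E × ℝ)) (u v : E) :
    infinitesimalRotation α β u (u - v) = α (u, 1) * β (v, 1) - β (u, 1) * α (v, 1) := by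
  have apply_inl_sub (γ : Dual ℝ (E × ℝ)) : γ (u - v, 0) = γ (u, 1) - γ (v, 1) := by
    rw [← map_sub, Prod.mk_sub_mk, sub_self]
  simp only [infinitesimalRotation, LinearMap.sub_apply, LinearMap.smul_apply, LinearMap.comp_apply,
    LinearMap.inl_apply, apply_inl_sub, smul_eq_mul]
  ring

theorem infinitesimalRotation_right_apply_sub (α β : Dual ℝ (E × ℝ)) (u v : E) :
    infinitesimalRotation α β v (u - v) = α (u, 1) * β (v, 1) - β (u, 1) * α (v, 1) := by
  rw [← neg_sub v u, map_neg, infinitesimalRotation_left_apply_sub]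
  ring

theorem InfinitesimallyRigid.mul_eq_mul_of_separates (hH : InfinitesimallyRigid p H) {P : Set V}
    {α β : Dual ℝ (E × ℝ)}
    (hP : ∀ a ∈ P, ∀ b ∉ P, H.Adj a b → α (p b, 1) = 0 ∧ β (p b, 1) = 0)
    (hx : x ∈ P) (hy : y ∉ P) : α (p x, 1) * β (p y, 1) = β (p x, 1) * α (p y, 1) := by
  classical
  let m : V → Dual ℝ E := fun z => if z ∈ P then infinitesimalRotation α β (p z) else 0
  have hmotion := hH m (fun a b hab => ?_) x y
  · simpa [m, hx, hy, infinitesimalRotation_left_apply_sub, sub_eq_zero] using hmotion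
  · by_cases ha : a ∈ P <;> by_cases hb : b ∈ P
    · simp [m, ha, hb, infinitesimalRotation_left_apply_sub, infinitesimalRotation_right_apply_sub]
    · simp [m, ha, hb, infinitesimalRotation_left_apply_sub, hP a ha b hb hab]
    · simp [m, ha, hb, infinitesimalRotation_right_apply_sub, hP b hb a ha hab.symm]
    · simp [m, ha, hb]

theorem InfinitesimallyRigid.kConnected (hH : InfinitesimallyRigid p H) (hp : InGeneralPosition p)
    (hcard : finrank ℝ E + 1 ≤ Nat.card V) : KConnected H (finrank ℝ E) := by
  classical
  refine ⟨hcard, fun X hXfin hX => ?_⟩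
  have : Nonempty (Xᶜ : Set V) := by
    rw [Set.nonempty_coe_sort, Set.nonempty_compl]
    rintro rfl
    rw [Set.ncard_univ] at hX
    omega
  refine ⟨fun x y => ?_⟩
  by_contra hxy
  have hne : x.1 ≠ y.1 := fun h => hxy (Subtype.ext h ▸ .rfl)
  let N : Finset V := insert x.1 (insert y.1 hXfin.toFinset)
  have hN : #N ≤ finrank ℝ E + 1 := by
    rw [Set.ncard_eq_toFinset_card X hXfin] at hX
    exact (card_insert_le _ _).trans (Nat.succ_le_succ ((card_insert_le _ _).trans hX))
  obtain ⟨α, hα⟩ := exists_linearMap_apply_eq_of_linearIndepOn (hp N hN)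
    fun z => if z = x.1 then (1 : ℝ) else 0
  obtain ⟨β, hβ⟩ := exists_linearMap_apply_eq_of_linearIndepOn (hp N hN)
    fun z => if z = y.1 then (1 : ℝ) else 0
  have hxN : x.1 ∈ N := by simp [N]
  have hyN : y.1 ∈ N := by simp [N]
  have hmul := hH.mul_eq_mul_of_separates (α := α) (β := β) (x := x.1) (y := y.1)
    (P := Subtype.val '' {z | (H.induce Xᶜ).Reachable x z}) ?_ ⟨x, .rfl, rfl⟩
    (fun ⟨z, hz, hzy⟩ => hxy (Subtype.ext hzy ▸ hz))
  · simp [hα x hxN, hα y hyN, hβ x hxN, hβ y hyN, hne, hne.symm] at hmul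
  · rintro _ ⟨a, ha, rfl⟩ b hb hab
    have hbX : b ∈ X := by
      by_contra hbX
      have hadj : (H.induce Xᶜ).Adj a ⟨b, hbX⟩ := hab
      exact hb ⟨⟨b, hbX⟩, ha.trans hadj.reachable, rfl⟩
    have hbN : b ∈ N := by simp [N, hbX]
    have hbx : b ≠ x := fun h => x.2 (h ▸ hbX)
    have hby : b ≠ y := fun h => y.2 (h ▸ hbX)
    simp [hα b hbN, hβ b hbN, hbx, hby]

end Rigidity

theorem preconnected_of_forall_eq {V : Type*} {H : SimpleGraph V}
    (hH : ∀ h : V → ℝ, (∀ x y, H.Adj x y → h x = h y) → ∀ x y, h x = h y) : H.Preconnected := by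
  classical
  intro x y
  by_contra hxy
  have := hH (fun z => if H.Reachable x z then 1 else 0) (fun u v huv => ?_) x y
  · simp [hxy] at this
  · have : H.Reachable x u ↔ H.Reachable x v :=
      ⟨fun h => h.trans huv.reachable, fun h => h.trans huv.symm.reachable⟩
    simp only [this]

namespace Framework

variable {V E : Type*} [AddCommGroup E] [Module ℝ E] [DecidableEq V] {q : Framework V E}

theorem Linked.barRow_mem {S : Submodule ℝ (V → E × ℝ)} {x y : V} (h : q.Linked S x y) :
    q.barRow s(x, y) ∈ S := h.1

theorem Linked.treeRow_mem {S : Submodule ℝ (V → E × ℝ)} {x y : V} (h : q.Linked S x y) :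
    q.treeRow s(x, y) ∈ S := by
  have := S.smul_mem (q.2 x y - q.2 y x) h.2
  rw [← map_smul] at this
  simpa [treeRow] using this

variable [Finite V]

theorem exists_velocity_eq_and_height_eq (m : V → Dual ℝ E) (h : V → ℝ) :
    ∃ φ : Dual ℝ (V → E × ℝ), velocity φ = m ∧ height φ = h := by
  have := Fintype.ofFinite V
  refine ⟨LinearMap.lsum ℝ (fun _ => E × ℝ) ℝ fun v =>
    (m v).coprod (LinearMap.toSpanSingleton ℝ ℝ (h v)), ?_, ?_⟩
  · ext x e
    simp [velocity, -LinearMap.lsum_apply, LinearMap.lsum_piSingle]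
  · ext x
    simp [height, -LinearMap.lsum_apply, LinearMap.lsum_piSingle]

variable [FiniteDimensional ℝ E]

theorem exists_subset_span_barRow_treeRow_eq {F : Finset (Sym2 V)}
    (hF : ∀ x y, q.Linked (q.rowSpace F) x y) :
    ∃ T ⊆ F, span ℝ (q.barRow '' T ∪ q.treeRow '' ↑(F \ T)) = q.rowSpace F := by
  obtain ⟨T, hTF, hrank⟩ := exists_subset_finrank_sup_span_add_le (K := ℝ) q.barRow q.treeRow F ⊥
  rw [bot_sup_eq, bot_sup_eq] at hrank
  refine ⟨T, hTF, eq_of_le_of_finrank_le (span_le.2 ?_) hrank⟩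
  rintro _ (⟨e, -, rfl⟩ | ⟨e, -, rfl⟩) <;> induction e with | _ x y
  · exact (hF x y).barRow_mem
  · exact (hF x y).treeRow_mem

theorem exists_subset_forall_motion_trivial {F : Finset (Sym2 V)}
    (hF : ∀ x y, q.Linked (q.rowSpace F) x y) :
    ∃ T ⊆ F, ∀ (m : V → Dual ℝ E) (h : V → ℝ),
      (∀ x y, s(x, y) ∈ T → (m x - m y) (q.1 x - q.1 y) = 0) →
      (∀ x y, s(x, y) ∈ F \ T → h x = h y) →
      ∀ x y, (m x - m y) (q.1 x - q.1 y) = 0 ∧ h x = h y := by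
  obtain ⟨T, hTF, hspan⟩ := exists_subset_span_barRow_treeRow_eq hF
  refine ⟨T, hTF, fun m h hm hh x y => ?_⟩
  obtain ⟨φ, rfl, rfl⟩ := exists_velocity_eq_and_height_eq m h
  refine linked_iff.1 (hF x y) φ ?_
  rw [← hspan, mem_dualAnnihilator]
  suffices span ℝ (q.barRow '' T ∪ q.treeRow '' ↑(F \ T)) ≤ LinearMap.ker φ from
    fun w hw => LinearMap.mem_ker.1 (this hw)
  rw [span_le]
  rintro _ (⟨e, he, rfl⟩ | ⟨e, he, rfl⟩) <;> induction e with | _ x y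
  · simp [barRow, apply_diffSingle, hm x y he]
  · simp [treeRow, apply_diffSingle, hh x y he]

theorem exists_le_infinitesimallyRigid_preconnected_sdiff {G : SimpleGraph V}
    (hG : ∀ x y, q.Linked (q.rowSpace G.edgeSet) x y) :
    ∃ H ≤ G, InfinitesimallyRigid q.1 H ∧ (G \ H).Preconnected := by
  obtain ⟨F, hF⟩ := G.edgeSet.toFinite.exists_finset_coe
  rw [← hF] at hG
  obtain ⟨T, hTF, hT⟩ := exists_subset_forall_motion_trivial hG
  have hTG : (T : Set (Sym2 V)) ⊆ G.edgeSet := hF ▸ coe_subset.2 hTF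
  have hadj (x y : V) : (SimpleGraph.fromEdgeSet (T : Set (Sym2 V))).Adj x y ↔ s(x, y) ∈ T :=
    (SimpleGraph.fromEdgeSet_adj _).trans (and_iff_left_of_imp fun h => (hTG h : G.Adj x y).ne)
  refine ⟨.fromEdgeSet T, fun x y h => hTG ((hadj x y).1 h), fun m hm x y => ?_,
    preconnected_of_forall_eq fun h hh x y => ?_⟩
  · exact (hT m 0 (fun x y h => hm x y ((hadj x y).2 h)) (fun _ _ _ => rfl) x y).1
  · refine (hT 0 h (by simp) (fun x y hxy => hh x y ?_) x y).2
    rw [mem_sdiff, ← mem_coe, hF, ← hadj] at hxy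
    exact hxy

end Framework

theorem removable_spanning_tree_weaker_bound_general {V : Type*} [Finite V] {d k : ℕ} (hd : 0 < d)
    (hk : 3 * ((d + 2) * (d + 3)) ≤ 2 * k) (G : SimpleGraph V) (hG : KConnected G k) :
    ∃ T : SimpleGraph V, T ≤ G ∧ T.IsTree ∧ KConnected (G \ T) d := by
  classical
  have hdim : finrank ℝ (Fin d → ℝ) = d := finrank_fin_fun ℝ
  have hcard : d + 1 ≤ Nat.card V := le_trans (by nlinarith) hG.1
  have : Nonempty V := (Nat.card_pos_iff.1 (by omega)).1
  obtain ⟨q, hq⟩ := Framework.exists_generic V (Fin d → ℝ)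
  have hlinked := hq.linked_of_kConnected (by rwa [hdim]) hG (by rwa [hdim])
  obtain ⟨H, hHG, hrigid, hconn⟩ :=
    Framework.exists_le_infinitesimallyRigid_preconnected_sdiff hlinked
  have hH := hrigid.kConnected hq.inGeneralPosition (by rwa [hdim])
  rw [hdim] at hH
  obtain ⟨T, hT, htree⟩ := (SimpleGraph.Connected.mk hconn).exists_isTree_le
  have hHT : H ≤ G \ T := le_sdiff.2 ⟨hHG, disjoint_sdiff_self_right.mono_right hT⟩
  exact ⟨T, hT.trans sdiff_le, htree, hH.mono hHT⟩

/-- Every `(20·d(d+1))`-connected finite simple graph `G` contains a spanning tree `T`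
such that `G - E(T)` is `d`-connected. -/
theorem removable_spanning_tree_weaker_bound {V : Type*} [Fintype V] (d : ℕ) (hd : 0 < d)
    (G : SimpleGraph V) (hG : KConnected G (20 * (d * (d + 1)))) :
    ∃ T : SimpleGraph V, T ≤ G ∧ T.IsTree ∧ KConnected (G \ T) d :=
  removable_spanning_tree_weaker_bound_general hd (by nlinarith) G hG
end

section
/- For all positive integers d and t, if n ≥ 2td, then the complete graph K_n on n vertices contains t pairwise edge-disjoint spanning subgraphs, each of which is d-connected. -/
/-!
Split the vertices into `2t` blocks of size at least `d`, indexed by pairs `(i, s)` with `i < t`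
and `s` one of two sides. Give an edge between blocks `(i, s)` and `(j, r)` the label `min i j` if
`s = r` and `max i j` otherwise. In the graph of edges labelled `i`, the two blocks of index `i`
together form a clique with more than `d` vertices. A vertex of index `j > i` is joined to the whole
block of index `i` on its own side, and a vertex of index `j < i` to the one on the opposite side;
so every vertex outside the clique has at least `d` neighbours in it. Deleting fewer than `d`
vertices then leaves part of the clique, and every other surviving vertex still has a neighbour
there.
-/

variable {V ι : Type*}

theorem connected_of_isClique {G : SimpleGraph V} {K : Set V} (hK : G.IsClique K)
    (hne : K.Nonempty) (hadj : ∀ v ∉ K, ∃ u ∈ K, G.Adj v u) : G.Connected := by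
  obtain ⟨w, hw⟩ := hne
  have reachable_of_mem : ∀ u ∈ K, G.Reachable u w := fun u hu ↦ by
    obtain rfl | huw := eq_or_ne u w
    · rfl
    · exact (hK hu hw huw).reachable
  have reachable : ∀ v, G.Reachable v w := fun v ↦ by
    by_cases hv : v ∈ K
    · exact reachable_of_mem v hv
    · obtain ⟨u, hu, hvu⟩ := hadj v hv
      exact hvu.reachable.trans (reachable_of_mem u hu)
  have : Nonempty V := ⟨w⟩
  exact ⟨fun a b ↦ (reachable a).trans (reachable b).symm⟩

theorem kConnected_of_isClique [Finite V] {G : SimpleGraph V} {K : Set V} {k : ℕ}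
    (hK : G.IsClique K) (hcard : k < K.ncard)
    (hdeg : ∀ v ∉ K, k ≤ (G.neighborSet v ∩ K).ncard) : KConnected G k := by
  refine ⟨hcard.trans_le K.ncard_le_card, fun S _ hS ↦ ?_⟩
  have clique : (G.induce Sᶜ).IsClique (Subtype.val ⁻¹' K) :=
    fun u hu v hv huv ↦ hK hu hv (Subtype.coe_ne_coe.mpr huv)
  refine connected_of_isClique clique ?_ fun v hv ↦ ?_
  · obtain ⟨w, hwK, hwS⟩ := Set.exists_mem_notMem_of_ncard_lt_ncard (hS.trans hcard)
    exact ⟨⟨w, hwS⟩, hwK⟩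
  · obtain ⟨u, ⟨hvu, huK⟩, huS⟩ :=
      Set.exists_mem_notMem_of_ncard_lt_ncard (hS.trans_le (hdeg v hv))
    exact ⟨⟨u, huS⟩, huK, hvu⟩

theorem exists_forall_le_ncard_fiber {α : Type*} [Finite V] [Finite α] [Nonempty α] {d : ℕ}
    (h : Nat.card α * d ≤ Nat.card V) : ∃ f : V → α, ∀ a, d ≤ (f ⁻¹' {a}).ncard := by
  have := Fintype.ofFinite V
  have := Fintype.ofFinite α
  obtain ⟨e⟩ : Nonempty (α × Fin d ↪ V) :=
    Function.Embedding.nonempty_of_card_le (by simpa using h)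
  refine ⟨Function.extend e Prod.fst fun _ ↦ Classical.arbitrary α, fun a ↦ ?_⟩
  have injective : Function.Injective fun k ↦ e (a, k) :=
    e.injective.comp (Prod.mk_right_injective a)
  calc
    d = (Set.range fun k ↦ e (a, k)).ncard := by simp [Set.ncard_range_of_injective injective]
    _ ≤ _ := Set.ncard_le_ncard <| Set.range_subset_iff.mpr fun k ↦
      e.injective.extend_apply Prod.fst _ (a, k)

theorem two_mul_le_ncard_setOf_fst_eq [Finite V] {f : V → ι × Bool} {d : ℕ}
    (hf : ∀ b, d ≤ (f ⁻¹' {b}).ncard) (i : ι) : 2 * d ≤ {v | (f v).1 = i}.ncard := by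
  have disjoint : Disjoint (f ⁻¹' {(i, false)}) (f ⁻¹' {(i, true)}) :=
    Disjoint.preimage f (by simp)
  calc
    2 * d = d + d := two_mul d
    _ ≤ (f ⁻¹' {(i, false)}).ncard + (f ⁻¹' {(i, true)}).ncard := Nat.add_le_add (hf _) (hf _)
    _ = (f ⁻¹' {(i, false)} ∪ f ⁻¹' {(i, true)}).ncard := (Set.ncard_union_eq disjoint).symm
    _ ≤ _ := Set.ncard_le_ncard <| by rintro v (hv | hv) <;> exact congrArg Prod.fst hv

section BlockLabeling

variable [LinearOrder ι] {block : V → ι × Bool} {u v : V} {i : ι} {d : ℕ}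

/-- The labelling of the edges of the complete graph on `V` that defines the packing, for a division
of `V` into the blocks `block ⁻¹' {(i, s)}`: the label of an edge is the smaller of the two indices
at its ends if these lie on the same side, and the larger one otherwise. -/
def blockLabeling (block : V → ι × Bool) : SimpleGraph.TopEdgeLabeling V ι :=
  .mk (fun u v _ ↦
      if (block u).2 = (block v).2 then min (block u).1 (block v).1
      else max (block u).1 (block v).1)
    fun u v _ ↦ by simp only [eq_comm, min_comm, max_comm]

theorem blockLabeling_labelGraph_adj :
    ((blockLabeling block).labelGraph i).Adj u v ↔
      u ≠ v ∧ (if (block u).2 = (block v).2 then min (block u).1 (block v).1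
        else max (block u).1 (block v).1) = i := by
  simp only [SimpleGraph.TopEdgeLabeling.labelGraph_adj, blockLabeling,
    SimpleGraph.EdgeLabeling.get_mk, exists_prop]

theorem isClique_labelGraph_blockLabeling (block : V → ι × Bool) (i : ι) :
    ((blockLabeling block).labelGraph i).IsClique {v | (block v).1 = i} :=
  fun u (hu : (block u).1 = i) v (hv : (block v).1 = i) huv ↦
    blockLabeling_labelGraph_adj.mpr ⟨huv, by simp [hu, hv]⟩

theorem exists_preimage_block_subset_neighborSet (hv : (block v).1 ≠ i) :
    ∃ s, block ⁻¹' {(i, s)} ⊆ ((blockLabeling block).labelGraph i).neighborSet v := by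
  have adj_of_label {s : Bool} {u : V} (hu : block u = (i, s))
      (hlabel : (if (block v).2 = s then min (block v).1 i else max (block v).1 i) = i) :
      ((blockLabeling block).labelGraph i).Adj v u :=
    blockLabeling_labelGraph_adj.mpr
      ⟨fun hvu ↦ hv (hvu ▸ congrArg Prod.fst hu), by simpa only [hu] using hlabel⟩
  rcases hv.lt_or_gt with hlt | hgt
  · exact ⟨!(block v).2, fun u hu ↦ adj_of_label hu (by simp [hlt.le])⟩
  · exact ⟨(block v).2, fun u hu ↦ adj_of_label hu (by simp [hgt.le])⟩

theorem kConnected_labelGraph_blockLabeling [Finite V] (hd : 0 < d)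
    (hblock : ∀ b, d ≤ (block ⁻¹' {b}).ncard) (i : ι) :
    KConnected ((blockLabeling block).labelGraph i) d := by
  have hcard : d < {v | (block v).1 = i}.ncard :=
    (lt_two_mul_self hd).trans_le (two_mul_le_ncard_setOf_fst_eq hblock i)
  refine kConnected_of_isClique (isClique_labelGraph_blockLabeling block i) hcard fun v hv ↦ ?_
  obtain ⟨s, hs⟩ := exists_preimage_block_subset_neighborSet hv
  exact (hblock (i, s)).trans <| Set.ncard_le_ncard <|
    Set.subset_inter hs fun u hu ↦ congrArg Prod.fst hu

end BlockLabeling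

/-- For positive integers `d` and `t`, if `n ≥ 2td` then the complete graph `K_n` contains
`t` pairwise edge-disjoint spanning subgraphs, each of which is `d`-connected. -/
theorem complete_graph_packing (d t n : ℕ) (hd : 0 < d) (ht : 0 < t)
    (hn : 2 * t * d ≤ n) :
    ∃ H : Fin t → SimpleGraph (Fin n),
      (∀ i, H i ≤ (⊤ : SimpleGraph (Fin n))) ∧
      (∀ i j, i ≠ j → Disjoint (H i).edgeSet (H j).edgeSet) ∧
      (∀ i, KConnected (H i) d) := by
  have : NeZero t := ⟨ht.ne'⟩
  obtain ⟨block, hblock⟩ : ∃ block : Fin n → Fin t × Bool, ∀ b, d ≤ (block ⁻¹' {b}).ncard :=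
    exists_forall_le_ncard_fiber (by simpa [mul_comm t 2] using hn)
  exact ⟨(blockLabeling block).labelGraph, fun _ ↦ le_top,
    fun _ _ hij ↦ SimpleGraph.disjoint_edgeSet.mpr
      (SimpleGraph.EdgeLabeling.pairwise_disjoint_labelGraph hij),
    kConnected_labelGraph_blockLabeling hd hblock⟩
end
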